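/- arXiv:2507.05821 — 8 statements merged into one kernel-verified Lean document; each statement's English description precedes it below -/
import Mathlib

section
/- Let X be a connected 5-regular simple graph and let G be a group of automorphisms of X acting transitively on the arcs of X such that the stabilizer in G of each vertex is a solvable group. Then for every edge uv of X, the only element of G that fixes u, fixes v, and fixes every neighbor of u and every neighbor of v is the identity. -/
open SimpleGraph

set_option linter.style.haveILetI false

theorem aux_normal_trans {Γ α : Type*} [Group Γ] [MulAction Γ α] [MulAction.IsPretransitive Γ α]
    (hc : Nat.card α = 5) (N : Subgroup Γ) [N.Normal] {c : Γ} (hcN : c ∈ N) {t : α}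
    (ht : c • t ≠ t) (x y : α) : ∃ n ∈ N, n • x = y := by
  have h1 : MulAction.IsPreprimitive Γ α :=
    MulAction.IsPreprimitive.of_prime_card (by rw [hc]; norm_num)
  have h2 : MulAction.IsPretransitive N α := by
    apply MulAction.IsQuasiPreprimitive.isPretransitive_of_normal (G := Γ)
    intro h
    have : t ∈ MulAction.fixedPoints N α := by rw [h]; trivial
    exact ht (this ⟨c, hcN⟩)
  obtain ⟨n, hn⟩ := MulAction.exists_smul_eq N x y
  exact ⟨n, n.2, hn⟩

theorem aux_local {Γ α : Type*} [Group Γ] [MulAction Γ α] [MulAction.IsPretransitive Γ α]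
    (hc : Nat.card α = 5) [Group.IsSolvable Γ] :
    ∃ e : α ≃ ZMod 5, ∀ g : Γ, ∃ k b : ZMod 5, k ≠ 0 ∧ ∀ x, e (g • x) = k * e x + b := by
  classical
  have hfin : Finite α := Nat.finite_of_card_ne_zero (by omega)
  have hnt : Nontrivial α := by
    rw [← Finite.one_lt_card_iff_nontrivial]; omega
  obtain ⟨p, q, hpq⟩ := exists_pair_ne α
  have hex : ∃ k, ∀ n ∈ derivedSeries Γ k, ∀ x : α, n • x = x := by
    obtain ⟨k, hk⟩ := Group.IsSolvable.solvable (G := Γ)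
    refine ⟨k, fun n hn x => ?_⟩
    rw [hk, Subgroup.mem_bot] at hn
    simp [hn]
  obtain ⟨k, hk, hmin⟩ : ∃ k, (∀ n ∈ derivedSeries Γ (k+1), ∀ x : α, n • x = x) ∧
      ¬ (∀ n ∈ derivedSeries Γ k, ∀ x : α, n • x = x) := by
    have h1 := Nat.find_spec hex
    have h2 := fun m => Nat.find_min hex (m := m)
    rcases h : Nat.find hex with _ | k
    · rw [h] at h1
      obtain ⟨g, hg⟩ := MulAction.exists_smul_eq Γ p q
      exact absurd ((h1 g (by simp) p).symm.trans hg) hpq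
    · exact ⟨k, h ▸ h1, h2 k (by omega)⟩
  push Not at hmin
  obtain ⟨c, hcN, t, ht⟩ := hmin
  set N := derivedSeries Γ k with hN
  have hNn : N.Normal := derivedSeries_normal Γ k
  have htr : ∀ x y : α, ∃ n ∈ N, n • x = y := aux_normal_trans hc N hcN ht
  let M : Subgroup (Equiv.Perm α) := N.map (MulAction.toPermHom Γ α)
  have hcomm : ∀ a ∈ M, ∀ b ∈ M, a * b = b * a := by
    rintro _ ⟨a, ha, rfl⟩ _ ⟨b, hb, rfl⟩
    ext x
    have := hk (a * b * a⁻¹ * b⁻¹) (by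
      rw [derivedSeries_succ]; exact Subgroup.commutator_mem_commutator ha hb) (b • a • x)
    simp only [mul_smul, inv_smul_smul] at this
    simpa using this
  have htrM : ∀ x y : α, ∃ n ∈ M, n x = y := by
    intro x y
    obtain ⟨n, hn, h⟩ := htr x y
    exact ⟨_, ⟨n, hn, rfl⟩, h⟩
  have hbij : Function.Bijective (fun m : M => (m : Equiv.Perm α) p) := by
    constructor
    · rintro ⟨a, ha⟩ ⟨b, hb⟩ hab
      simp only at hab
      apply Subtype.ext
      ext x
      obtain ⟨n, hn, rfl⟩ := htrM p x
      have h1 := DFunLike.congr_fun (hcomm a ha n hn) p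
      have h2 := DFunLike.congr_fun (hcomm b hb n hn) p
      simp only [Equiv.Perm.mul_apply] at h1 h2
      simp only
      rw [h1, h2, hab]
    · intro y
      obtain ⟨n, hn, h⟩ := htrM p y
      exact ⟨⟨n, hn⟩, h⟩
  have hcM : Nat.card M = 5 := by rw [Nat.card_eq_of_bijective _ hbij, hc]
  haveI : Fact (Nat.Prime 5) := ⟨by norm_num⟩
  let E : Multiplicative (ZMod 5) ≃* M := mulEquivOfPrimeCardEq (p := 5) (by simp) hcM
  let τ : ZMod 5 → M := fun i => E (Multiplicative.ofAdd i)
  have hτadd : ∀ i j, τ (i + j) = τ i * τ j := fun i j => by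
    simp only [τ, ofAdd_add, map_mul]
  have hτbij : Function.Bijective τ := E.bijective.comp Multiplicative.ofAdd.bijective
  let e' : ZMod 5 ≃ α := Equiv.ofBijective _ (hbij.comp hτbij)
  have he' : ∀ i, e' i = (τ i : Equiv.Perm α) p := fun i => rfl
  refine ⟨e'.symm, fun g => ?_⟩
  let γ : Equiv.Perm α := MulAction.toPermHom Γ α g
  have hγ : ∀ x, g • x = γ x := fun x => rfl
  have hconj : ∀ i, ∃ j, γ * τ i * γ⁻¹ = τ j := by
    intro i
    obtain ⟨n, hn, hni⟩ := (τ i).2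
    have : γ * τ i * γ⁻¹ ∈ M := by
      rw [← hni]
      exact ⟨g * n * g⁻¹, hNn.conj_mem n hn g, by simp only [γ, map_mul, map_inv]⟩
    obtain ⟨j, hj⟩ := hτbij.2 ⟨_, this⟩
    exact ⟨j, by rw [hj]⟩
  choose κ hκ using hconj
  have hκadd : ∀ i j, κ (i + j) = κ i + κ j := by
    intro i j
    apply hτbij.1
    apply Subtype.ext
    rw [hτadd, Subgroup.coe_mul, ← hκ, ← hκ, ← hκ, hτadd, Subgroup.coe_mul]
    group
  let κ' : ZMod 5 →+ ZMod 5 := AddMonoidHom.mk' κ hκadd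
  have hκmul : ∀ i, κ i = κ 1 * i := by
    intro i
    have h := map_nsmul κ' i.val 1
    simp only [nsmul_eq_mul, ZMod.natCast_val, ZMod.cast_id', id, mul_one] at h
    rw [mul_comm]; exact h
  obtain ⟨b, hb⟩ := e'.surjective (γ p)
  have key : ∀ x, e'.symm (g • x) = κ 1 * e'.symm x + b := by
    intro x
    obtain ⟨i, rfl⟩ := e'.surjective x
    rw [Equiv.symm_apply_eq, Equiv.symm_apply_apply, hγ, he', he', hτadd, ← hκmul,
      Subgroup.coe_mul, ← hκ]
    rw [he'] at hb
    simp [hb]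
  refine ⟨κ 1, b, ?_, key⟩
  intro h0
  have h1 := key p
  have h2 := key q
  rw [h0, zero_mul] at h1 h2
  exact hpq (MulAction.injective g (e'.symm.injective (h1.trans h2.symm)))

/-- iterated derived subgroup inside the ambient group -/
def auxD {Γ : Type*} [Group Γ] (H : Subgroup Γ) : ℕ → Subgroup Γ
  | 0 => H
  | k + 1 => ⁅auxD H k, auxD H k⁆

theorem auxD_mono {Γ : Type*} [Group Γ] {H K : Subgroup Γ} (h : H ≤ K) (k : ℕ) :
    auxD H k ≤ auxD K k := by
  induction k with
  | zero => exact h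
  | succ k ih => exact Subgroup.commutator_mono ih ih

theorem auxD_le {Γ : Type*} [Group Γ] (H : Subgroup Γ) (k : ℕ) : auxD H k ≤ H := by
  induction k with
  | zero => exact le_rfl
  | succ k ih =>
    exact (Subgroup.commutator_mono ih ih).trans (Subgroup.commutator_le_self H)

theorem auxD_map {Γ Γ' : Type*} [Group Γ] [Group Γ'] (f : Γ →* Γ') (H : Subgroup Γ) (k : ℕ) :
    (auxD H k).map f = auxD (H.map f) k := by
  induction k with
  | zero => rfl
  | succ k ih => simp only [auxD, Subgroup.map_commutator, ih]

theorem auxD_derived {Γ : Type*} [Group Γ] (k : ℕ) : auxD (⊤ : Subgroup Γ) k = derivedSeries Γ k := by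
  induction k with
  | zero => rfl
  | succ k ih => simp only [auxD, ih, derivedSeries_succ]

/-- product of two transvections of an elementary abelian 2-group -/
theorem aux_transv {Γ : Type*} [Group Γ] (W : Subgroup Γ)
    (hcomm : ∀ x ∈ W, ∀ y ∈ W, x * y = y * x) (hsq : ∀ x ∈ W, x * x = 1)
    (a b r s : Γ) (hr : r ∈ W) (hs : s ∈ W)
    (ha : ∀ w ∈ W, a * w * a⁻¹ = w ∨ a * w * a⁻¹ = r * w)
    (hb : ∀ w ∈ W, b * w * b⁻¹ = w ∨ b * w * b⁻¹ = s * w) :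
    ∀ w ∈ W, (a * b) ^ 12 * w = w * (a * b) ^ 12 := by
  classical
  intro w hw
  set f := a * b with hf
  let R : Finset Γ := {1, r, s, r * s}
  have hRW : ∀ x ∈ R, x ∈ W := by
    intro x hx
    simp only [R, Finset.mem_insert, Finset.mem_singleton] at hx
    rcases hx with rfl | rfl | rfl | rfl
    exacts [W.one_mem, hr, hs, W.mul_mem hr hs]
  have hrs := hcomm r hr s hs
  have hrr := hsq r hr
  have hss := hsq s hs
  have hrr' : ∀ x, r * (r * x) = x := fun x => by rw [← mul_assoc, hrr, one_mul]
  have hss' : ∀ x, s * (s * x) = x := fun x => by rw [← mul_assoc, hss, one_mul]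
  have hsr' : ∀ x, s * (r * x) = r * (s * x) := fun x => by
    rw [← mul_assoc, ← hrs, mul_assoc]
  have hRr : ∀ x ∈ R, r * x ∈ R := by
    intro x hx
    simp only [R, Finset.mem_insert, Finset.mem_singleton] at hx ⊢
    rcases hx with rfl | rfl | rfl | rfl <;> simp [hrr, hrr']
  have hRs : ∀ x ∈ R, s * x ∈ R := by
    intro x hx
    simp only [R, Finset.mem_insert, Finset.mem_singleton] at hx ⊢
    rcases hx with rfl | rfl | rfl | rfl <;> simp [hss, ← hrs, hsr']
  have step : ∀ x ∈ R, ∃ y ∈ R, f * (x * w) * f⁻¹ = y * w := by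
    intro x hx
    have hxw := W.mul_mem (hRW x hx) hw
    have e : f * (x * w) * f⁻¹ = a * (b * (x * w) * b⁻¹) * a⁻¹ := by rw [hf]; group
    rw [e]
    rcases hb _ hxw with h | h <;> rw [h]
    · rcases ha _ hxw with h | h <;> rw [h]
      · exact ⟨x, hx, rfl⟩
      · exact ⟨r * x, hRr x hx, by group⟩
    · rcases ha _ (W.mul_mem hs hxw) with h | h <;> rw [h]
      · exact ⟨s * x, hRs x hx, by group⟩
      · exact ⟨r * (s * x), hRr _ (hRs x hx), by group⟩
  have hall : ∀ i : ℕ, f ^ i * w * (f ^ i)⁻¹ * w⁻¹ ∈ R := by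
    intro i
    induction i with
    | zero => simp [R]
    | succ i ih =>
      obtain ⟨y, hy, h⟩ := step _ ih
      have : f ^ (i+1) * w * (f ^ (i+1))⁻¹ * w⁻¹ = y := by
        rw [← mul_inv_eq_iff_eq_mul] at h
        rw [← h, pow_succ']; group
      rw [this]; exact hy
  have hcard : R.card < (Finset.range 5).card := by
    have : R.card ≤ 4 := Finset.card_le_four
    simp; omega
  obtain ⟨i, hi, j, hj, hij, heq⟩ := Finset.exists_ne_map_eq_of_card_lt_of_maps_to hcard
    (f := fun i => f ^ i * w * (f ^ i)⁻¹ * w⁻¹) (fun i _ => hall i)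
  have main : ∀ i j : ℕ, i < j → j < 5 →
      f ^ i * w * (f ^ i)⁻¹ * w⁻¹ = f ^ j * w * (f ^ j)⁻¹ * w⁻¹ → Commute (f ^ 12) w := by
    intro i j hij hj h
    obtain ⟨d, rfl⟩ : ∃ d, j = i + d := ⟨j - i, by omega⟩
    have h1 : f ^ d * w * (f ^ d)⁻¹ = w := by
      have h2 := mul_right_cancel h
      rw [pow_add] at h2
      have h3 : f ^ i * w * (f ^ i)⁻¹ = f ^ i * (f ^ d * w * (f ^ d)⁻¹) * (f ^ i)⁻¹ := by
        rw [h2]; group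
      exact (mul_left_cancel (mul_right_cancel h3)).symm
    have h4 : Commute (f ^ d) w := mul_inv_eq_iff_eq_mul.mp h1
    obtain ⟨q, hq⟩ : ∃ q, 12 = d * q := by
      have : d = 1 ∨ d = 2 ∨ d = 3 ∨ d = 4 := by omega
      rcases this with rfl | rfl | rfl | rfl
      exacts [⟨12, rfl⟩, ⟨6, rfl⟩, ⟨4, rfl⟩, ⟨3, rfl⟩]
    rw [hq, pow_mul]
    exact h4.pow_left q
  simp only [Finset.mem_range] at hi hj
  rcases lt_or_gt_of_ne hij with h | h
  · exact main i j h hj heq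
  · exact main j i h hi heq.symm

theorem aux_z1 : ∀ k c p q : ZMod 5, k * p + c = p → k * (k * q + c) + c = q → k * q + c ≠ q →
    k = -1 ∧ c = 2 * p := by decide

theorem aux_z2 : ∀ k c p z : ZMod 5, k ≠ 0 → k * p + c = p →
    k * (k * (k * (k * z + c) + c) + c) + c = z := by decide

/-- the standing hypotheses -/
structure AuxCtx {V : Type*} (X : SimpleGraph V) (G : Subgroup (Equiv.Perm V)) : Prop where
  conn : X.Connected
  reg : ∀ v : V, (X.neighborSet v).ncard = 5
  aut : ∀ g ∈ G, ∀ u v : V, X.Adj (g u) (g v) ↔ X.Adj u v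
  arc : ∀ u v u' v' : V, X.Adj u v → X.Adj u' v' → ∃ g ∈ G, g u = u' ∧ g v = v'
  solv : ∀ v : V, Group.IsSolvable (MulAction.stabilizer G v)

/-- action of a vertex stabilizer on the neighbours -/
@[reducible] def auxAct {V : Type*} {X : SimpleGraph V} {G : Subgroup (Equiv.Perm V)} (h : AuxCtx X G) (y : V) :
    MulAction (MulAction.stabilizer G y) (X.neighborSet y) where
  smul g w := ⟨(g : G).1 w.1, by
    have h1 : (g : G).1 y = y := g.2
    have h2 := (h.aut (g : G).1 (g : G).2 y w.1).2 w.2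
    rw [h1] at h2
    exact h2⟩
  one_smul w := rfl
  mul_smul g g' w := rfl

section
variable {V : Type*} {X : SimpleGraph V} {G : Subgroup (Equiv.Perm V)}

theorem AuxCtx.exists_adj (h : AuxCtx X G) (y : V) : ∃ w, X.Adj y w := by
  have : (X.neighborSet y).Nonempty := by
    apply Set.nonempty_of_ncard_ne_zero; rw [h.reg]; norm_num
  exact this

theorem AuxCtx.nbrTrans (h : AuxCtx X G) (y : V) :
    letI := auxAct h y
    MulAction.IsPretransitive (MulAction.stabilizer G y) (X.neighborSet y) := by
  letI := auxAct h y
  refine ⟨fun a b => ?_⟩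
  obtain ⟨g, hg, h1, h2⟩ := h.arc y a.1 y b.1 a.2 b.2
  exact ⟨⟨⟨g, hg⟩, h1⟩, Subtype.ext h2⟩

theorem AuxCtx.locAffine (h : AuxCtx X G) (y : V) : ∃ φ : V → ZMod 5,
    (∀ w w', X.Adj y w → X.Adj y w' → φ w = φ w' → w = w') ∧
    ∀ g ∈ G, g y = y → ∃ k b : ZMod 5, k ≠ 0 ∧ ∀ w, X.Adj y w → φ (g w) = k * φ w + b := by
  classical
  letI := auxAct h y
  haveI := h.nbrTrans y
  haveI := h.solv y
  obtain ⟨e, he⟩ := aux_local (Γ := MulAction.stabilizer G y) (α := X.neighborSet y) (h.reg y)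
  have hval : ∀ w (hw : X.Adj y w), (if hw : X.Adj y w then e ⟨w, hw⟩ else 0) = e ⟨w, hw⟩ :=
    fun w hw => dif_pos hw
  refine ⟨fun w => if hw : X.Adj y w then e ⟨w, hw⟩ else 0, ?_, ?_⟩
  · intro w w' hw hw' hh
    simp only at hh
    rw [hval w hw, hval w' hw'] at hh
    exact congrArg Subtype.val (e.injective hh)
  · intro g hg hgy
    obtain ⟨k, b, hk, hkb⟩ := he ⟨⟨g, hg⟩, hgy⟩
    refine ⟨k, b, hk, fun w hw => ?_⟩
    have hw' : X.Adj y (g w) := by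
      have := (h.aut g hg y w).2 hw
      rwa [hgy] at this
    simp only
    rw [hval w hw, hval _ hw', ← hkb]
    rfl

theorem AuxCtx.adj_fix (h : AuxCtx X G) {y w : V} {g : Equiv.Perm V} (hg : g ∈ G) (hgy : g y = y)
    (hw : X.Adj y w) : X.Adj y (g w) := by
  have := (h.aut g hg y w).2 hw
  rwa [hgy] at this

/-- elements fixing a neighbour have local order dividing 4 -/
theorem AuxCtx.pow_four (h : AuxCtx X G) {y w : V} {g : Equiv.Perm V} (hg : g ∈ G) (hgy : g y = y)
    (hw : X.Adj y w) (hgw : g w = w) {z : V} (hz : X.Adj y z) : (g ^ 4) z = z := by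
  obtain ⟨φ, hφ, hloc⟩ := h.locAffine y
  obtain ⟨k, b, hk, hkb⟩ := hloc g hg hgy
  have e : (g ^ 4) z = g (g (g (g z))) := rfl
  rw [e]
  have z1 := h.adj_fix hg hgy hz
  have z2 := h.adj_fix hg hgy z1
  have z3 := h.adj_fix hg hgy z2
  have z4 := h.adj_fix hg hgy z3
  apply hφ _ _ z4 hz
  rw [hkb _ z3, hkb _ z2, hkb _ z1, hkb _ hz]
  apply aux_z2 k b (φ w) _ hk
  rw [← hkb w hw, hgw]

/-- shape of a local involution -/
theorem aux_inv_shape {y x t : V} {φ : V → ZMod 5}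
    (hφ : ∀ w w', X.Adj y w → X.Adj y w' → φ w = φ w' → w = w')
    {a : Equiv.Perm V} (haX : ∀ w, X.Adj y w → X.Adj y (a w))
    (ha : ∃ k b : ZMod 5, k ≠ 0 ∧ ∀ w, X.Adj y w → φ (a w) = k * φ w + b)
    (hx : X.Adj y x) (hax : a x = x) (ht : X.Adj y t) (hat : a t ≠ t) (haa : a * a = 1) :
    ∀ w, X.Adj y w → φ (a w) = - φ w + 2 * φ x := by
  obtain ⟨k, b, hk, hkb⟩ := ha
  have h1 : k * φ x + b = φ x := by rw [← hkb x hx, hax]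
  have h2 : k * (k * φ t + b) + b = φ t := by
    rw [← hkb t ht, ← hkb _ (haX t ht)]
    have : a (a t) = t := DFunLike.congr_fun haa t
    rw [this]
  have h3 : k * φ t + b ≠ φ t := by
    rw [← hkb t ht]
    intro h
    exact hat (hφ _ _ (haX t ht) ht h)
  obtain ⟨rfl, rfl⟩ := aux_z1 _ _ _ _ h1 h2 h3
  intro w hw
  rw [hkb w hw]; ring

/-- two local involutions fixing the same point agree -/
theorem AuxCtx.inv_mul (h : AuxCtx X G) {y x t s : V} {a b : Equiv.Perm V} (ha : a ∈ G) (hb : b ∈ G)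
    (hay : a y = y) (hby : b y = y) (hx : X.Adj y x) (hax : a x = x) (hbx : b x = x)
    (ht : X.Adj y t) (hat : a t ≠ t) (hs : X.Adj y s) (hbs : b s ≠ s)
    (haa : a * a = 1) (hbb : b * b = 1) {z : V} (hz : X.Adj y z) : (a * b) z = z := by
  obtain ⟨φ, hφ, hloc⟩ := h.locAffine y
  have h1 := aux_inv_shape hφ (fun w hw => h.adj_fix ha hay hw) (hloc a ha hay) hx hax ht hat haa
  have h2 := aux_inv_shape hφ (fun w hw => h.adj_fix hb hby hw) (hloc b hb hby) hx hbx hs hbs hbb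
  have z1 := h.adj_fix hb hby hz
  have z2 := h.adj_fix ha hay z1
  apply hφ _ _ z2 hz
  rw [h1 _ z1, h2 _ hz]; ring

/-- product of two local involutions fixing different points -/
theorem AuxCtx.inv_mul_pow (h : AuxCtx X G) {y x t x' t' : V} {a b : Equiv.Perm V} (ha : a ∈ G)
    (hb : b ∈ G) (hay : a y = y) (hby : b y = y) (hx : X.Adj y x) (hax : a x = x)
    (ht : X.Adj y t) (hat : a t ≠ t) (hx' : X.Adj y x') (hbx : b x' = x')
    (ht' : X.Adj y t') (hbt : b t' ≠ t') (hne : x ≠ x')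
    (haa : a * a = 1) (hbb : b * b = 1) : ((a * b) ^ 12) x ≠ x := by
  obtain ⟨φ, hφ, hloc⟩ := h.locAffine y
  have h1 := aux_inv_shape hφ (fun w hw => h.adj_fix ha hay hw) (hloc a ha hay) hx hax ht hat haa
  have h2 := aux_inv_shape hφ (fun w hw => h.adj_fix hb hby hw) (hloc b hb hby) hx' hbx ht' hbt hbb
  have key : ∀ i : ℕ, X.Adj y (((a * b) ^ i) x) ∧
      φ (((a * b) ^ i) x) = φ x + i * (2 * φ x - 2 * φ x') := by
    intro i
    induction i with
    | zero => simp [hx]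
    | succ i ih =>
      obtain ⟨i1, i2⟩ := ih
      have e : ((a * b) ^ (i+1)) x = a (b (((a * b) ^ i) x)) := by
        rw [pow_succ']; rfl
      have z1 := h.adj_fix hb hby i1
      have z2 := h.adj_fix ha hay z1
      rw [e]
      refine ⟨z2, ?_⟩
      rw [h1 _ z1, h2 _ i1, i2]
      push_cast; ring
  intro hc
  have := (key 12).2
  rw [hc] at this
  apply hne
  apply hφ _ _ hx hx'
  generalize φ x = p at this
  generalize φ x' = q at this
  revert p q
  decide

/-- the main propagation lemma -/
theorem AuxCtx.propagate (h : AuxCtx X G) (S : V → V → Subgroup (Equiv.Perm V))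
    (hsymm : ∀ u v, S u v ≤ S v u) (hfix : ∀ u v, X.Adj u v → ∀ s ∈ S u v, s u = u)
    (heq : ∀ g ∈ G, ∀ u v, ∀ s ∈ S u v, g * s * g⁻¹ ∈ S (g u) (g v))
    {y t : V} {c : Equiv.Perm V} (hc : c ∈ G) (hcy : c y = y) (ht : X.Adj y t) (hct : c t ≠ t)
    (hcS : ∀ w, X.Adj y w → ∀ s ∈ S y w, c * s = s * c) {u v : V} (huv : X.Adj u v) :
    ∀ s ∈ S u v, s = 1 := by
  letI := auxAct h y
  haveI := h.nbrTrans y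
  let N : Subgroup (MulAction.stabilizer G y) :=
    { carrier := {c | ∀ w, X.Adj y w → ∀ s ∈ S y w, (c : G).1 * s = s * (c : G).1}
      one_mem' := by intro w _ s _; simp
      mul_mem' := by
        intro a b ha hb w hw s hs
        have h1 := ha w hw s hs
        have h2 := hb w hw s hs
        exact Commute.mul_left (a := (a : G).1) (b := (b : G).1) h1 h2
      inv_mem' := by
        intro a ha w hw s hs
        exact Commute.inv_left (a := (a : G).1) (ha w hw s hs) }
  haveI : N.Normal := by
    refine ⟨fun n hn g w hw s hs => ?_⟩
    have hg : (g : G).1 ∈ G := (g : G).2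
    have hgy : (g : G).1 y = y := g.2
    set γ := (g : G).1 with hγ
    set ν := (n : G).1 with hν
    have hgi : γ⁻¹ y = y := by rw [Equiv.Perm.inv_eq_iff_eq]; exact hgy.symm
    have h1 := heq γ⁻¹ (G.inv_mem hg) y w s hs
    rw [hgi] at h1
    have h2 := hn _ (h.adj_fix (G.inv_mem hg) hgi hw) _ h1
    rw [← hν] at h2
    show γ * ν * γ⁻¹ * s = s * (γ * ν * γ⁻¹)
    calc γ * ν * γ⁻¹ * s = γ * (ν * (γ⁻¹ * s * γ⁻¹⁻¹)) * γ⁻¹ := by group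
      _ = _ := by rw [h2]; group
  have hmem : (⟨⟨c, hc⟩, hcy⟩ : MulAction.stabilizer G y) ∈ N := hcS
  have hS1 : ∀ w w', X.Adj y w → X.Adj y w' → S y w ≤ S y w' := by
    intro w w' hw hw' s hs
    obtain ⟨n, hn, hnw⟩ := aux_normal_trans (Γ := MulAction.stabilizer G y)
      (α := X.neighborSet y) (h.reg y) N hmem (t := ⟨t, ht⟩)
      (fun e => hct (congrArg Subtype.val e)) ⟨w, hw⟩ ⟨w', hw'⟩
    have h1 := heq (n : G).1 (n : G).2 y w s hs
    have h2 : (n : G).1 y = y := n.2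
    have h3 : (n : G).1 w = w' := congrArg Subtype.val hnw
    rw [hn w hw s hs, h2, h3, mul_inv_cancel_right] at h1
    exact h1
  have hS2 : ∀ x w w', X.Adj x w → X.Adj x w' → S x w ≤ S x w' := by
    intro x w w' hw hw' s hs
    obtain ⟨g, hg, h1, h2⟩ := h.arc x w y t hw ht
    have e1 := heq g hg x w s hs
    have a1 := (h.aut g hg x w).2 hw
    have a2 := (h.aut g hg x w').2 hw'
    rw [h1] at e1 a1 a2
    have e2 := hS1 _ _ a1 a2 e1
    have e3 := heq g⁻¹ (G.inv_mem hg) _ _ _ e2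
    have e4 : g⁻¹ y = x := by rw [Equiv.Perm.inv_eq_iff_eq]; exact h1.symm
    have e5 : g⁻¹ (g w') = w' := by rw [Equiv.Perm.inv_eq_iff_eq]
    rw [e4, e5] at e3
    have : g⁻¹ * (g * s * g⁻¹) * g⁻¹⁻¹ = s := by group
    rwa [this] at e3
  intro s hs
  have hall : ∀ a b : V, X.Walk a b → (∀ w, X.Adj a w → s ∈ S a w) → ∀ w, X.Adj b w → s ∈ S b w := by
    intro a b p
    induction p with
    | nil => exact id
    | cons hab p ih =>
      intro hh
      apply ih
      intro w hw
      exact hS2 _ _ _ hab.symm hw (hsymm _ _ (hh _ hab))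
  ext z
  obtain ⟨p⟩ := h.conn.preconnected u z
  obtain ⟨w, hw⟩ := h.exists_adj z
  exact hfix z w hw s (hall u z p (fun w hw => hS2 _ _ _ huv hw hs) w hw)

theorem AuxCtx.dist_eq (h : AuxCtx X G) {g : Equiv.Perm V} (hg : g ∈ G) (x z : V) :
    X.dist (g x) (g z) = X.dist x z := by
  have key : ∀ g ∈ G, ∀ x z, X.dist (g x) (g z) ≤ X.dist x z := by
    intro g hg x z
    obtain ⟨p, hp⟩ := h.conn.exists_walk_length_eq_dist x z
    let f : X →g X := ⟨g, fun {a b} hab => (h.aut g hg a b).2 hab⟩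
    have := SimpleGraph.dist_le (p.map f)
    rw [SimpleGraph.Walk.length_map, hp] at this
    exact this
  apply le_antisymm (key g hg x z)
  have := key g⁻¹ (G.inv_mem hg) (g x) (g z)
  simpa using this

theorem AuxCtx.exists_pred (h : AuxCtx X G) {u t : V} {n : ℕ} (ht : X.dist u t = n + 1) :
    ∃ y, X.Adj y t ∧ X.dist u y = n := by
  obtain ⟨p, hp⟩ := h.conn.exists_walk_length_eq_dist t u
  rw [SimpleGraph.dist_comm, ht] at hp
  cases p with
  | nil => simp at hp
  | cons hab p =>
    rename_i y
    simp only [SimpleGraph.Walk.length_cons, Nat.add_right_cancel_iff] at hp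
    refine ⟨y, hab.symm, ?_⟩
    have h1 := SimpleGraph.dist_le p
    have h2 := h.conn.dist_triangle (u := u) (v := y) (w := t)
    rw [(SimpleGraph.dist_eq_one_iff_adj).2 hab.symm, ht] at h2
    rw [SimpleGraph.dist_comm] at h1
    omega

/-- pointwise stabilizer of a ball -/
def auxFix (X : SimpleGraph V) (G : Subgroup (Equiv.Perm V)) (x : V) (m : ℕ) :
    Subgroup (Equiv.Perm V) where
  carrier := {g | g ∈ G ∧ ∀ z, X.dist x z ≤ m → g z = z}
  one_mem' := ⟨G.one_mem, fun _ _ => rfl⟩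
  mul_mem' := by
    rintro a b ⟨ha, ha'⟩ ⟨hb, hb'⟩
    refine ⟨G.mul_mem ha hb, fun z hz => ?_⟩
    rw [Equiv.Perm.mul_apply, hb' z hz, ha' z hz]
  inv_mem' := by
    rintro a ⟨ha, ha'⟩
    refine ⟨G.inv_mem ha, fun z hz => ?_⟩
    rw [Equiv.Perm.inv_eq_iff_eq, ha' z hz]

theorem mem_auxFix {x : V} {m : ℕ} {g : Equiv.Perm V} :
    g ∈ auxFix X G x m ↔ g ∈ G ∧ ∀ z, X.dist x z ≤ m → g z = z := Iff.rfl

theorem AuxCtx.conj_fix (h : AuxCtx X G) {g : Equiv.Perm V} (hg : g ∈ G) (x : V) (m : ℕ) :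
    (auxFix X G x m).map (MulAut.conj g).toMonoidHom ≤ auxFix X G (g x) m := by
  rintro _ ⟨s, ⟨hs, hs'⟩, rfl⟩
  refine ⟨G.mul_mem (G.mul_mem hg hs) (G.inv_mem hg), fun z hz => ?_⟩
  obtain ⟨z, rfl⟩ := g.surjective z
  rw [h.dist_eq hg] at hz
  have := hs' z hz
  simp [this]

theorem AuxCtx.conj_D (h : AuxCtx X G) {g : Equiv.Perm V} (hg : g ∈ G) (x : V) (m k : ℕ)
    {s : Equiv.Perm V} (hs : s ∈ auxD (auxFix X G x m) k) :
    g * s * g⁻¹ ∈ auxD (auxFix X G (g x) m) k := by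
  apply auxD_mono (h.conj_fix hg x m) k
  rw [← auxD_map]
  exact ⟨s, hs, rfl⟩

/-- a nontrivial permutation fixing a vertex moves a neighbour of a fixed vertex -/
theorem AuxCtx.exists_moved (h : AuxCtx X G) {b : Equiv.Perm V} (hb : b ≠ 1) {u : V}
    (hu : b u = u) : ∃ y t, X.Adj y t ∧ b y = y ∧ b t ≠ t := by
  by_contra hcon
  push Not at hcon
  apply hb
  have hall : ∀ a z : V, X.Walk a z → b a = a → b z = z := by
    intro a z p
    induction p with
    | nil => exact id
    | cons hab p ih => exact fun hh => ih (hcon _ _ hab hh)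
  ext z
  obtain ⟨p⟩ := h.conn.preconnected u z
  exact hall u z p hu

/-- the vertex stabilizers are finite (non-discrete case is impossible) -/
theorem AuxCtx.discrete (h : AuxCtx X G) (u : V) : ∃ m, auxFix X G u m = ⊥ := by
  classical
  by_contra hcon
  push Not at hcon
  have hex : ∃ k m, auxD (auxFix X G u m) k = ⊥ := by
    haveI := h.solv u
    obtain ⟨k, hk⟩ := Group.IsSolvable.solvable (G := MulAction.stabilizer G u)
    refine ⟨k, 0, ?_⟩
    have h1 : auxFix X G u 0 ≤ (⊤ : Subgroup (MulAction.stabilizer G u)).map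
        (G.subtype.comp (MulAction.stabilizer G u).subtype) := by
      rintro s ⟨hs, hs'⟩
      exact ⟨⟨⟨s, hs⟩, hs' u (by simp)⟩, trivial, rfl⟩
    have h2 := auxD_mono h1 k
    rw [← auxD_map, auxD_derived, hk, Subgroup.map_bot] at h2
    exact le_bot_iff.1 h2
  obtain ⟨k, ⟨m, hm⟩, hmin⟩ : ∃ k, (∃ m, auxD (auxFix X G u m) (k+1) = ⊥) ∧
      ∀ m, auxD (auxFix X G u m) k ≠ ⊥ := by
    have h1 := Nat.find_spec hex
    have h2 := fun m => Nat.find_min hex (m := m)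
    rcases hf : Nat.find hex with _ | k
    · rw [hf] at h1
      obtain ⟨m, hm⟩ := h1
      exact absurd hm (hcon m)
    · exact ⟨k, hf ▸ h1, fun m hm => h2 k (by omega) ⟨m, hm⟩⟩
  obtain ⟨⟨b, hb⟩, hb1'⟩ := Subgroup.ne_bot_iff_exists_ne_one.1 (hmin m)
  have hb1 : b ≠ 1 := fun e => hb1' (Subtype.ext e)
  have hbF := auxD_le _ _ hb
  obtain ⟨y, t, hyt, hby, hbt⟩ := h.exists_moved hb1 (hbF.2 u (by simp))
  have hcomm : ∀ s ∈ auxD (auxFix X G u m) k, b * s = s * b := by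
    intro s hs
    have := Subgroup.commutator_mem_commutator hb hs
    rw [show ⁅auxD (auxFix X G u m) k, auxD (auxFix X G u m) k⁆ = ⊥ from hm,
      Subgroup.mem_bot] at this
    exact commutatorElement_eq_one_iff_mul_comm.1 this
  set M := m + X.dist u y + 1 with hM
  let S : V → V → Subgroup (Equiv.Perm V) := fun z w =>
    auxD (auxFix X G z M) k ⊔ auxD (auxFix X G w M) k
  obtain ⟨v, huv⟩ := h.exists_adj u
  have hfixle : ∀ w, X.dist w u ≤ X.dist u y + 1 → auxFix X G w M ≤ auxFix X G u m := by
    rintro w hw s ⟨hs, hs'⟩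
    refine ⟨hs, fun z hz => hs' z ?_⟩
    have := h.conn.dist_triangle (u := w) (v := u) (w := z)
    omega
  have := h.propagate S (fun u v => by simp only [S]; rw [sup_comm]) ?_ ?_ hbF.1 hby hyt hbt ?_ huv
  · apply hmin M
    rw [eq_bot_iff]
    intro s hs
    exact this s (Subgroup.mem_sup_left hs)
  · intro z w hzw s hs
    have : S z w ≤ auxFix X G z 0 := by
      apply sup_le
      · refine (auxD_le _ _).trans ?_
        rintro s ⟨hs, hs'⟩
        exact ⟨hs, fun x hx => hs' x (by omega)⟩
      · refine (auxD_le _ _).trans ?_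
        rintro s ⟨hs, hs'⟩
        refine ⟨hs, fun x hx => hs' x ?_⟩
        have := h.conn.dist_triangle (u := w) (v := z) (w := x)
        rw [(SimpleGraph.dist_eq_one_iff_adj).2 hzw.symm] at this
        omega
    exact (this hs).2 z (by simp)
  · intro g hg u v s hs
    have : S u v ≤ (S (g u) (g v)).comap (MulAut.conj g).toMonoidHom := by
      apply sup_le
      · intro s hs
        exact Subgroup.mem_sup_left (h.conj_D hg _ _ _ hs)
      · intro s hs
        exact Subgroup.mem_sup_right (h.conj_D hg _ _ _ hs)
    exact this hs
  · intro w hw s hs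
    apply hcomm
    have : S y w ≤ auxD (auxFix X G u m) k := by
      apply sup_le
      · apply auxD_mono (hfixle y _)
        rw [SimpleGraph.dist_comm]; omega
      · apply auxD_mono (hfixle w _)
        have := h.conn.dist_triangle (u := w) (v := y) (w := u)
        rw [(SimpleGraph.dist_eq_one_iff_adj).2 hw.symm, SimpleGraph.dist_comm (u := y)] at this
        omega
    exact this hs

/-- arc stabilizer -/
def auxP (G : Subgroup (Equiv.Perm V)) (u v : V) : Subgroup (Equiv.Perm V) where
  carrier := {g | g ∈ G ∧ g u = u ∧ g v = v}
  one_mem' := ⟨G.one_mem, rfl, rfl⟩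
  mul_mem' := by
    rintro a b ⟨ha, ha1, ha2⟩ ⟨hb, hb1, hb2⟩
    refine ⟨G.mul_mem ha hb, ?_, ?_⟩
    · rw [Equiv.Perm.mul_apply, hb1, ha1]
    · rw [Equiv.Perm.mul_apply, hb2, ha2]
  inv_mem' := by
    rintro a ⟨ha, ha1, ha2⟩
    refine ⟨G.inv_mem ha, ?_, ?_⟩
    · rw [Equiv.Perm.inv_eq_iff_eq, ha1]
    · rw [Equiv.Perm.inv_eq_iff_eq, ha2]

/-- kernel of the action of an edge stabilizer on both neighbourhoods -/
def auxE (X : SimpleGraph V) (G : Subgroup (Equiv.Perm V)) (u v : V) :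
    Subgroup (Equiv.Perm V) := auxFix X G u 1 ⊓ auxFix X G v 1

/-- central elements of order at most two of the arc stabilizer -/
def auxZ (G : Subgroup (Equiv.Perm V)) (u v : V) : Subgroup (Equiv.Perm V) where
  carrier := {g | g ∈ auxP G u v ∧ g * g = 1 ∧ ∀ k ∈ auxP G u v, g * k = k * g}
  one_mem' := ⟨Subgroup.one_mem _, by simp, by simp⟩
  mul_mem' := by
    rintro a b ⟨ha, ha1, ha2⟩ ⟨hb, hb1, hb2⟩
    refine ⟨Subgroup.mul_mem _ ha hb, ?_, fun k hk => ?_⟩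
    · have := ha2 b hb
      calc a * b * (a * b) = a * (b * a) * b := by group
        _ = (a * a) * (b * b) := by rw [← this]; group
        _ = 1 := by rw [ha1, hb1, one_mul]
    · exact Commute.mul_left (ha2 k hk) (hb2 k hk)
  inv_mem' := by
    rintro a ⟨ha, ha1, ha2⟩
    refine ⟨Subgroup.inv_mem _ ha, ?_, fun k hk => ?_⟩
    · rw [← mul_inv_rev, ha1, inv_one]
    · exact Commute.inv_left (ha2 k hk)

theorem conj_auxP {g : Equiv.Perm V} (hg : g ∈ G) {u v : V} {s : Equiv.Perm V}
    (hs : s ∈ auxP G u v) : g * s * g⁻¹ ∈ auxP G (g u) (g v) := by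
  obtain ⟨h1, h2, h3⟩ := hs
  refine ⟨G.mul_mem (G.mul_mem hg h1) (G.inv_mem hg), ?_, ?_⟩
  · simp [h2]
  · simp [h3]

theorem conj_auxP' {g : Equiv.Perm V} (hg : g ∈ G) {u v : V} {s : Equiv.Perm V}
    (hs : s ∈ auxP G (g u) (g v)) : g⁻¹ * s * g ∈ auxP G u v := by
  have := conj_auxP (G.inv_mem hg) hs
  simpa using this

theorem conj_auxZ {g : Equiv.Perm V} (hg : g ∈ G) {u v : V} {s : Equiv.Perm V}
    (hs : s ∈ auxZ G u v) : g * s * g⁻¹ ∈ auxZ G (g u) (g v) := by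
  obtain ⟨h1, h2, h3⟩ := hs
  refine ⟨conj_auxP hg h1, ?_, fun k hk => ?_⟩
  · calc g * s * g⁻¹ * (g * s * g⁻¹) = g * (s * s) * g⁻¹ := by group
      _ = 1 := by rw [h2]; group
  · have := h3 _ (conj_auxP' hg hk)
    calc g * s * g⁻¹ * k = g * (s * (g⁻¹ * k * g)) * g⁻¹ := by group
      _ = _ := by rw [this]; group

theorem auxP_symm (u v : V) : auxP G u v = auxP G v u := by
  ext g; exact ⟨fun ⟨a, b, c⟩ => ⟨a, c, b⟩, fun ⟨a, b, c⟩ => ⟨a, c, b⟩⟩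

theorem auxZ_symm (u v : V) : auxZ G u v ≤ auxZ G v u := by
  rintro g ⟨a, b, c⟩
  rw [auxP_symm] at a
  exact ⟨a, b, fun k hk => c k (by rwa [auxP_symm])⟩

theorem AuxCtx.dist_adj (_h : AuxCtx X G) {y w : V} (hw : X.Adj y w) : X.dist y w = 1 :=
  (SimpleGraph.dist_eq_one_iff_adj).2 hw

theorem AuxCtx.fix_one_le (h : AuxCtx X G) {y w : V} (hw : X.Adj y w) :
    auxFix X G y 1 ≤ auxP G y w := by
  rintro s ⟨hs, hs'⟩
  exact ⟨hs, hs' y (by simp), hs' w (h.dist_adj hw).le⟩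

theorem AuxCtx.mem_fix_one (h : AuxCtx X G) {y : V} {s : Equiv.Perm V} (hs : s ∈ G) (hy : s y = y)
    (hw : ∀ w, X.Adj y w → s w = w) : s ∈ auxFix X G y 1 := by
  refine ⟨hs, fun z hz => ?_⟩
  have : X.dist y z = 0 ∨ X.dist y z = 1 := by omega
  rcases this with h0 | h1
  · rw [h.conn.dist_eq_zero_iff] at h0
    rw [← h0, hy]
  · exact hw z ((SimpleGraph.dist_eq_one_iff_adj).1 h1)

theorem AuxCtx.ball_finite (h : AuxCtx X G) (u : V) (m : ℕ) : {z | X.dist u z ≤ m}.Finite := by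
  induction m with
  | zero =>
    apply (Set.finite_singleton u).subset
    intro z hz
    have : X.dist u z = 0 := Nat.le_zero.1 hz
    rw [h.conn.dist_eq_zero_iff] at this
    exact this.symm
  | succ m ih =>
    have h1 : (⋃ y ∈ {z | X.dist u z ≤ m}, X.neighborSet y).Finite := by
      apply ih.biUnion
      intro y _
      apply Set.finite_of_ncard_ne_zero
      rw [h.reg]; norm_num
    apply (ih.union h1).subset
    intro z hz
    rcases Nat.lt_or_ge m (X.dist u z) with hlt | hge
    · right
      have : X.dist u z = m + 1 := le_antisymm hz hlt
      obtain ⟨y, hy, hd⟩ := h.exists_pred this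
      simp only [Set.mem_iUnion]
      exact ⟨y, hd.le, hy⟩
    · exact Or.inl hge

theorem AuxCtx.finite_P (h : AuxCtx X G) (u v : V) : Finite (auxP G u v) := by
  obtain ⟨m, hm⟩ := h.discrete u
  haveI : Finite {z | X.dist u z ≤ m} := h.ball_finite u m
  let F : auxP G u v → ({z | X.dist u z ≤ m} → {z | X.dist u z ≤ m}) := fun g z =>
    ⟨g.1 z.1, by
      have h1 := h.dist_eq g.2.1 u z.1
      rw [g.2.2.1] at h1
      show X.dist u _ ≤ m
      rw [h1]; exact z.2⟩
  apply Finite.of_injective F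
  rintro ⟨a, ha⟩ ⟨b, hb⟩ hab
  apply Subtype.ext
  have : a⁻¹ * b ∈ auxFix X G u m := by
    refine ⟨G.mul_mem (G.inv_mem ha.1) hb.1, fun z hz => ?_⟩
    have h1 : a z = b z := congrArg Subtype.val (congrFun hab ⟨z, hz⟩)
    rw [Equiv.Perm.mul_apply, Equiv.Perm.inv_eq_iff_eq, h1]
  rw [hm, Subgroup.mem_bot, inv_mul_eq_one] at this
  exact this

theorem AuxCtx.pgroup_P (h : AuxCtx X G) {u v : V} (huv : X.Adj u v) : IsPGroup 2 (auxP G u v) := by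
  obtain ⟨m, hm⟩ := h.discrete u
  have key : ∀ g ∈ auxP G u v, ∀ k : ℕ, g ^ (4 ^ (k+1)) ∈ auxFix X G u (k+1) := by
    rintro g ⟨hg, hgu, hgv⟩ k
    induction k with
    | zero =>
      simp only [zero_add, pow_one]
      apply h.mem_fix_one (G.pow_mem hg 4)
      · have e : (g ^ 4) u = g (g (g (g u))) := rfl
        rw [e, hgu, hgu, hgu, hgu]
      · intro w hw
        exact h.pow_four hg hgu huv hgv hw
    | succ k ih =>
      rw [pow_succ, pow_mul]
      set f := g ^ (4 ^ (k+1)) with hf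
      refine ⟨G.pow_mem ih.1 4, fun z hz => ?_⟩
      rcases Nat.lt_or_ge (k+1) (X.dist u z) with hlt | hge
      · have hz' : X.dist u z = k + 1 + 1 := le_antisymm hz hlt
        obtain ⟨y, hy, hd⟩ := h.exists_pred hz'
        obtain ⟨w, hw, hd'⟩ := h.exists_pred hd
        exact h.pow_four ih.1 (ih.2 y hd.le) hw.symm (ih.2 w (by omega)) hy
      · have e := ih.2 z hge
        have e' : (f ^ 4) z = f (f (f (f z))) := rfl
        rw [e', e, e, e, e]
  intro g
  refine ⟨2 * (m + 1), ?_⟩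
  apply Subtype.ext
  have h1 := key g.1 g.2 m
  have h2 : g.1 ^ (4 ^ (m+1)) ∈ auxFix X G u m := ⟨h1.1, fun z hz => h1.2 z (by omega)⟩
  rw [hm, Subgroup.mem_bot] at h2
  rw [pow_mul]
  exact h2

theorem aux_exists_inv {Γ : Type*} [Group Γ] : ∀ (k : ℕ) (z : Γ), z ≠ 1 → z ^ (2 ^ k) = 1 →
    ∃ j : ℕ, z ^ j ≠ 1 ∧ z ^ j * z ^ j = 1 := by
  intro k
  induction k with
  | zero => intro z hz h; simp at h; exact absurd h hz
  | succ k ih =>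
    intro z hz h
    by_cases hk : z ^ (2 ^ k) = 1
    · exact ih z hz hk
    · exact ⟨2 ^ k, hk, by rw [← pow_two, ← pow_mul, ← pow_succ]; exact h⟩

theorem AuxCtx.exists_Z (h : AuxCtx X G) {u v : V} (huv : X.Adj u v) {g : Equiv.Perm V}
    (hg : g ∈ auxP G u v) (hg1 : g ≠ 1) : ∃ z ∈ auxZ G u v, z ≠ 1 := by
  haveI := h.finite_P u v
  haveI : Fact (Nat.Prime 2) := ⟨Nat.prime_two⟩
  have hp := h.pgroup_P huv
  haveI : Nontrivial (auxP G u v) := ⟨⟨g, hg⟩, 1, fun e => hg1 (congrArg Subtype.val e)⟩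
  haveI := hp.center_nontrivial
  obtain ⟨z, hz⟩ := exists_ne (1 : Subgroup.center (auxP G u v))
  obtain ⟨k, hk⟩ := hp z.1
  obtain ⟨j, hj1, hj2⟩ := aux_exists_inv k z.1 (fun e => hz (Subtype.ext e)) hk
  refine ⟨(z.1 ^ j).1, ⟨(z.1 ^ j).2, congrArg Subtype.val hj2, fun k hk => ?_⟩,
    fun e => hj1 (Subtype.ext e)⟩
  have h1 := Subgroup.mem_center_iff.1 (Subgroup.pow_mem _ z.2 j) ⟨k, hk⟩
  exact (congrArg Subtype.val h1).symm

/-- if all the central involutions at arcs fix balls of radius `n`, and one moves a vertex at distance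
`n + 1`, with `n ≥ 1`, then we have a contradiction -/
theorem AuxCtx.case_pos (h : AuxCtx X G) {n : ℕ} (hn : 1 ≤ n)
    (hmin : ∀ p q, X.Adj p q → ∀ s ∈ auxZ G p q, ∀ z, X.dist p z ≤ n → s z = z)
    {u v t : V} (huv : X.Adj u v) {a : Equiv.Perm V} (ha : a ∈ auxZ G u v)
    (hd : X.dist u t = n + 1) (hat : a t ≠ t) : False := by
  obtain ⟨haP, haa, hac⟩ := ha
  have haG := haP.1
  obtain ⟨y, hyt, hdy⟩ := h.exists_pred hd
  obtain ⟨n', rfl⟩ : ∃ n', n = n' + 1 := ⟨n - 1, by omega⟩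
  obtain ⟨x, hxy, hdx⟩ := h.exists_pred hdy
  obtain ⟨x1, hx1u, hdx1⟩ := h.exists_pred (u := y) (t := u) (n := n')
    (by rw [SimpleGraph.dist_comm]; exact hdy)
  have hay : a y = y := hmin u v huv a ⟨haP, haa, hac⟩ y hdy.le
  have hax : a x = x := hmin u v huv a ⟨haP, haa, hac⟩ x (by omega)
  -- the group W
  let T : Set (Equiv.Perm V) := {s | ∃ w, X.Adj y w ∧ s ∈ auxZ G y w}
  have hTfix : ∀ s ∈ T, s ∈ auxFix X G y (n' + 1) := by
    rintro s ⟨w, hw, hs⟩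
    exact ⟨hs.1.1, hmin y w hw s hs⟩
  have hTcomm : ∀ s ∈ T, ∀ s' ∈ T, s * s' = s' * s := by
    rintro s ⟨w, hw, hs⟩ s' hs'
    apply hs.2.2
    have := hTfix s' hs'
    exact h.fix_one_le hw ⟨this.1, fun z hz => this.2 z (by omega)⟩
  let W := Subgroup.closure T
  have hTW : ∀ s ∈ T, ∀ w ∈ W, s * w = w * s := by
    intro s hs w hw
    have : W ≤ Subgroup.centralizer T := by
      rw [Subgroup.closure_le]
      intro s' hs'
      rw [SetLike.mem_coe, Subgroup.mem_centralizer_iff]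
      intro k hk
      exact hTcomm k hk s' hs'
    exact Subgroup.mem_centralizer_iff.1 (this hw) s hs
  have hWcomm : ∀ w ∈ W, ∀ w' ∈ W, w * w' = w' * w := by
    intro w hw w' hw'
    have : W ≤ Subgroup.centralizer W := by
      rw [Subgroup.closure_le]
      intro s' hs'
      rw [SetLike.mem_coe, Subgroup.mem_centralizer_iff]
      intro k hk
      exact (hTW s' hs' k hk).symm
    exact Subgroup.mem_centralizer_iff.1 (this hw') w hw
  have hWsq : ∀ w ∈ W, w * w = 1 := by
    intro w hw
    induction hw using Subgroup.closure_induction with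
    | mem s hs => obtain ⟨w, hw, hs⟩ := hs; exact hs.2.1
    | one => simp
    | mul p q hp hq ihp ihq =>
      have := hWcomm p hp q hq
      calc p * q * (p * q) = p * (q * p) * q := by group
        _ = (p * p) * (q * q) := by rw [← this]; group
        _ = 1 := by rw [ihp, ihq, one_mul]
    | inv p hp ihp => rw [← mul_inv_rev, ihp, inv_one]
  have hWfix : W ≤ auxFix X G y (n' + 1) := (Subgroup.closure_le _).2 hTfix
  have hWconj : ∀ g ∈ G, g y = y → ∀ w ∈ W, g * w * g⁻¹ ∈ W := by
    intro g hg hgy w hw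
    have : W ≤ W.comap (MulAut.conj g).toMonoidHom := by
      apply (Subgroup.closure_le _).2
      rintro s ⟨w, hw, hs⟩
      apply Subgroup.subset_closure
      refine ⟨g w, h.adj_fix hg hgy hw, ?_⟩
      have := conj_auxZ hg hs
      rw [hgy] at this
      exact this
    exact this hw
  have hWu : ∀ w ∈ W, w u = u := fun w hw => (hWfix hw).2 u (by
    rw [SimpleGraph.dist_comm]; exact hdy.le)
  have hWx1 : ∀ w ∈ W, w x1 = x1 := fun w hw => (hWfix hw).2 x1 (by omega)
  have haW : ∀ w ∈ W, w ∈ auxFix X G u 1 → a * w = w * a := fun w hw hw' =>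
    hac w (h.fix_one_le huv hw')
  have hmoved : ∀ w ∈ W, a * w ≠ w * a → ∃ z, X.Adj u z ∧ w z ≠ z := by
    intro w hw hne
    by_contra hcon
    push Not at hcon
    exact hne (haW w hw (h.mem_fix_one (hWfix hw).1 (hWu w hw) hcon))
  -- a acts as a transvection
  obtain ⟨r, hr, har⟩ : ∃ r ∈ W, ∀ w ∈ W, a * w * a⁻¹ = w ∨ a * w * a⁻¹ = r * w := by
    by_cases hall : ∀ w ∈ W, a * w = w * a
    · exact ⟨1, W.one_mem, fun w hw => Or.inl (by rw [hall w hw, mul_inv_cancel_right])⟩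
    · push Not at hall
      obtain ⟨w0, hw0, hne0⟩ := hall
      obtain ⟨z0, hz0, hz0'⟩ := hmoved w0 hw0 hne0
      refine ⟨a * w0 * a⁻¹ * w0⁻¹, W.mul_mem (hWconj a haG hay w0 hw0) (W.inv_mem hw0), ?_⟩
      intro w hw
      by_cases hne : a * w = w * a
      · left; rw [hne, mul_inv_cancel_right]
      · right
        obtain ⟨z, hz, hz'⟩ := hmoved w hw hne
        have hfix : w0⁻¹ * w ∈ auxFix X G u 1 := by
          have e : w0⁻¹ = w0 := by rw [inv_eq_iff_mul_eq_one]; exact hWsq w0 hw0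
          rw [e]
          apply h.mem_fix_one (G.mul_mem (hWfix hw0).1 (hWfix hw).1)
          · rw [Equiv.Perm.mul_apply, hWu w hw, hWu w0 hw0]
          · intro z1 hz1
            exact h.inv_mul (hWfix hw0).1 (hWfix hw).1 (hWu w0 hw0) (hWu w hw) hx1u.symm
              (hWx1 w0 hw0) (hWx1 w hw) hz0 hz0' hz hz' (hWsq w0 hw0) (hWsq w hw) hz1
        have e1 := haW _ (W.mul_mem (W.inv_mem hw0) hw) hfix
        calc a * w * a⁻¹ = a * w0 * a⁻¹ * (a * (w0⁻¹ * w)) * a⁻¹ := by group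
          _ = _ := by rw [e1]; group
  -- conjugate of a
  obtain ⟨g, hg, hgy, hgx⟩ := h.arc y x y t hxy.symm hyt
  have hgi : g⁻¹ y = y := by rw [Equiv.Perm.inv_eq_iff_eq]; exact hgy.symm
  set b := g * a * g⁻¹ with hb
  have hbG : b ∈ G := G.mul_mem (G.mul_mem hg haG) (G.inv_mem hg)
  have hbr : ∀ w ∈ W, b * w * b⁻¹ = w ∨ b * w * b⁻¹ = (g * r * g⁻¹) * w := by
    intro w hw
    have hw' := hWconj g⁻¹ (G.inv_mem hg) hgi w hw
    have e : b * w * b⁻¹ = g * (a * (g⁻¹ * w * g⁻¹⁻¹) * a⁻¹) * g⁻¹ := by rw [hb]; group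
    rw [e]
    rcases har _ hw' with e | e <;> rw [e]
    · left; group
    · right; group
  have hcent := aux_transv W hWcomm hWsq a b r (g * r * g⁻¹) hr (hWconj g hg hgy r hr) har hbr
  have hby : b y = y := by
    rw [hb, Equiv.Perm.mul_apply, Equiv.Perm.mul_apply, hgi, hay, hgy]
  have hbt : b t = t := by
    rw [← hgx]; simp [hb, hax]
  have hbb : b * b = 1 := by
    calc b * b = g * (a * a) * g⁻¹ := by rw [hb]; group
      _ = 1 := by rw [haa]; group
  have hbgt : b (g t) ≠ g t := by simp [hb, hat]
  have hxt : x ≠ t := fun e => hat (e ▸ hax)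
  have hmove := h.inv_mul_pow haG hbG hay hby hxy.symm hax hyt hat hyt hbt
    (h.adj_fix hg hgy hyt) hbgt hxt haa hbb
  have hcy : ((a * b) ^ 12) y = y := by
    have : (a * b) ^ 12 ∈ auxP G y y :=
      Subgroup.pow_mem (auxP G y y) (Subgroup.mul_mem (auxP G y y) ⟨haG, hay, hay⟩ ⟨hbG, hby, hby⟩) 12
    exact this.2.1
  have := h.propagate (auxZ G) auxZ_symm (fun u v _ s hs => hs.1.2.1)
    (fun g hg u v s hs => conj_auxZ hg hs) (G.pow_mem (G.mul_mem haG hbG) 12) hcy hxy.symm hmove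
    (fun w hw s hs => hcent s (Subgroup.subset_closure ⟨w, hw, hs⟩)) huv a ⟨haP, haa, hac⟩
  exact hat (by rw [this]; rfl)

theorem AuxCtx.main (h : AuxCtx X G) {u v : V} (huv : X.Adj u v) {g : Equiv.Perm V}
    (hg : g ∈ auxE X G u v) : g = 1 := by
  classical
  by_contra hg1
  obtain ⟨z, hz, hz1⟩ := h.exists_Z huv (h.fix_one_le huv hg.1) hg1
  have hex : ∃ k, ∃ u v s t, X.Adj u v ∧ s ∈ auxZ G u v ∧ X.dist u t = k ∧ s t ≠ t := by
    by_contra hcon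
    push Not at hcon
    apply hz1
    ext t
    exact hcon _ u v z t huv hz rfl
  obtain ⟨u', v', a, t, hadj, ha, hd, hat⟩ := Nat.find_spec hex
  have hmin : ∀ m, m < Nat.find hex → ∀ p q, X.Adj p q → ∀ s ∈ auxZ G p q, ∀ z,
      X.dist p z = m → s z = z := by
    intro m hm p q hpq s hs z hz
    by_contra hne
    exact Nat.find_min hex hm ⟨p, q, s, z, hpq, hs, hz, hne⟩
  rcases hk : Nat.find hex with _ | n
  · rw [hk, h.conn.dist_eq_zero_iff] at hd
    exact hat (hd ▸ ha.1.2.1)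
  · rw [hk] at hd hmin
    rcases Nat.eq_zero_or_pos n with rfl | hn
    · have hut : X.Adj u' t := (SimpleGraph.dist_eq_one_iff_adj).1 hd
      exact hg1 (h.propagate (auxE X G) (fun u v s hs => ⟨hs.2, hs.1⟩)
        (fun u v _ s hs => hs.1.2 u (by simp))
        (fun g hg u v s hs => ⟨h.conj_fix hg u 1 ⟨s, hs.1, rfl⟩, h.conj_fix hg v 1 ⟨s, hs.2, rfl⟩⟩)
        ha.1.1 ha.1.2.1 hut hat
        (fun w hw s hs => ha.2.2 s (h.fix_one_le hadj hs.1)) huv g hg)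
    · exact h.case_pos hn (fun p q hpq s hs z hz => hmin _ (by omega) p q hpq s hs z rfl)
        hadj ha hd hat
end

/-- Let `X` be a connected 5-regular simple graph and `G` a group of automorphisms of `X`
acting transitively on the arcs of `X` with solvable vertex-stabilizers. Then for every
edge `uv` of `X`, the only element of `G` fixing `u`, `v` and all their neighbors is the
identity. -/
theorem solvable_stabilizer_fixing_edge_and_neighbors_eq_one
    {V : Type*} (X : SimpleGraph V) (hconn : X.Connected)
    (hreg : ∀ v : V, (X.neighborSet v).ncard = 5)
    (G : Subgroup (Equiv.Perm V))
    (hGaut : ∀ g ∈ G, ∀ u v : V, X.Adj (g u) (g v) ↔ X.Adj u v)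
    (hGarc : ∀ u v u' v' : V, X.Adj u v → X.Adj u' v' → ∃ g ∈ G, g u = u' ∧ g v = v')
    (hsolv : ∀ v : V, IsSolvable (MulAction.stabilizer G v)) :
    ∀ u v : V, X.Adj u v → ∀ g ∈ G, g u = u → g v = v →
      (∀ w, X.Adj u w → g w = w) → (∀ w, X.Adj v w → g w = w) → g = 1 := by
  intro u v huv g hg hgu hgv h1 h2
  have h : AuxCtx X G := ⟨hconn, hreg, hGaut, hGarc, hsolv⟩
  exact h.main huv ⟨h.mem_fix_one hg hgu h1, h.mem_fix_one hg hgv h2⟩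
end

section
/- Let Γ be a connected cubic simple graph (finite or infinite) of girth 4 that contains a consistent cycle of length 4 and in which every edge is contained in a cycle of length 4. Then Γ is isomorphic to the complete bipartite graph K_{3,3} or to the 3-dimensional cube graph Q_3. -/
open SimpleGraph

/-- `G` contains a consistent cycle of length `n`: a cycle `c 0, c 1, …, c (n-1), c 0`
together with an automorphism rotating it by one step. -/
def HasConsistentCycle {V : Type*} (G : SimpleGraph V) (n : ℕ) : Prop :=
  ∃ c : ZMod n → V, Function.Injective c ∧ (∀ i, G.Adj (c i) (c (i + 1))) ∧
    ∃ γ : G ≃g G, ∀ i, γ (c i) = c (i + 1)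
/-- The 3-dimensional cube graph: vertices are the vectors of `{0,1}³`, two adjacent iff
they differ in exactly one coordinate. -/
def cubeGraph : SimpleGraph (Fin 3 → Bool) :=
  SimpleGraph.fromRel (fun x y => (Finset.univ.filter fun i => x i ≠ y i).card = 1)

theorem aux_third {V : Type*} (Γ : SimpleGraph V) (hcubic : ∀ v : V, (Γ.neighborSet v).ncard = 3)
    (u p q : V) (hp : Γ.Adj u p) (hq : Γ.Adj u q) (hpq : p ≠ q) :
    ∃ r, r ≠ p ∧ r ≠ q ∧ ∀ x, Γ.Adj u x ↔ (x = p ∨ x = q ∨ x = r) := by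
  obtain ⟨x, y, z, hxy, hxz, hyz, h⟩ := Set.ncard_eq_three.1 (hcubic u)
  have h' : ∀ t, Γ.Adj u t ↔ (t = x ∨ t = y ∨ t = z) := by
    intro t
    rw [← SimpleGraph.mem_neighborSet, h]
    simp
  have h1 := (h' p).1 hp
  have h2 := (h' q).1 hq
  have key : ∃ r, r ≠ p ∧ r ≠ q ∧ ∀ t, (t = x ∨ t = y ∨ t = z) ↔ (t = p ∨ t = q ∨ t = r) := by
    rcases h1 with rfl | rfl | rfl <;> rcases h2 with rfl | rfl | rfl
    · exact absurd rfl hpq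
    · exact ⟨z, by grind⟩
    · exact ⟨y, by grind⟩
    · exact ⟨z, by grind⟩
    · exact absurd rfl hpq
    · exact ⟨x, by grind⟩
    · exact ⟨y, by grind⟩
    · exact ⟨x, by grind⟩
    · exact absurd rfl hpq
  obtain ⟨r, hr1, hr2, hr⟩ := key
  exact ⟨r, hr1, hr2, fun t => (h' t).trans (hr t)⟩

theorem aux_iso {V W : Type*} (Γ : SimpleGraph V) (H : SimpleGraph W) (hconn : Γ.Connected)
    (hcubic : ∀ v : V, (Γ.neighborSet v).ncard = 3)
    (hH : ∀ w : W, (H.neighborSet w).ncard = 3) (w0 : W)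
    (f : W → V) (hf : Function.Injective f) (hadj : ∀ x y, H.Adj x y → Γ.Adj (f x) (f y)) :
    Nonempty (Γ ≃g H) := by
  have hnb : ∀ w, f '' H.neighborSet w = Γ.neighborSet (f w) := by
    intro w
    apply Set.eq_of_subset_of_ncard_le
    · rintro _ ⟨y, hy, rfl⟩
      exact hadj _ _ hy
    · rw [Set.ncard_image_of_injective _ hf, hH, hcubic]
    · apply Set.finite_of_ncard_ne_zero
      rw [hcubic]; norm_num
  have hsurj : Function.Surjective f := by
    intro v
    obtain ⟨p⟩ := hconn.preconnected v (f w0)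
    have : ∀ (a b : V), Γ.Walk a b → (∃ w, f w = b) → ∃ w, f w = a := by
      intro a b p
      induction p with
      | nil => exact id
      | cons h p ih =>
        intro hb
        obtain ⟨w, rfl⟩ := ih hb
        have h2 := h.symm
        rw [← SimpleGraph.mem_neighborSet, ← hnb] at h2
        obtain ⟨y, -, hy⟩ := h2
        exact ⟨y, hy⟩
    exact this _ _ p ⟨w0, rfl⟩
  refine ⟨(RelIso.symm ⟨Equiv.ofBijective f ⟨hf, hsurj⟩, ?_⟩)⟩
  intro a b
  constructor
  · intro h
    change Γ.Adj (f a) (f b) at h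
    rw [← SimpleGraph.mem_neighborSet, ← hnb] at h
    obtain ⟨y, hy, he⟩ := h
    rw [← hf he]; exact hy
  · exact hadj a b

theorem aux_no_triangle {V : Type*} (Γ : SimpleGraph V) (h : Γ.egirth = 4) (a b c : V)
    (hab : Γ.Adj a b) (hbc : Γ.Adj b c) (hca : Γ.Adj c a) : False := by
  have h2 := (SimpleGraph.le_egirth (G := Γ) (n := 4)).1 h.ge a
    (Walk.cons hab (Walk.cons hbc (Walk.cons hca Walk.nil))) (by
      have := hab.ne; have := hbc.ne; have := hca.ne
      simp [Walk.isCycle_def, Walk.isTrail_def]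
      grind)
  simp at h2
  exact absurd h2 (by decide)

instance : DecidableRel (completeBipartiteGraph (Fin 3) (Fin 3)).Adj := fun a b =>
  inferInstanceAs (Decidable (a.isLeft = true ∧ b.isRight = true ∨ a.isRight = true ∧ b.isLeft = true))

theorem aux_inj3 {V : Type*} (x y z : V) (h1 : x ≠ y) (h2 : x ≠ z) (h3 : y ≠ z) :
    Function.Injective ![x, y, z] := by
  intro i j h
  fin_cases i <;> fin_cases j <;> simp_all [eq_comm]

theorem aux_K33_card (w : Fin 3 ⊕ Fin 3) :
    ((completeBipartiteGraph (Fin 3) (Fin 3)).neighborSet w).ncard = 3 := by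
  rw [Set.ncard_eq_toFinset_card']
  revert w
  decide

instance : DecidableRel cubeGraph.Adj := fun a b =>
  inferInstanceAs (Decidable (a ≠ b ∧ ((Finset.univ.filter fun i => a i ≠ b i).card = 1 ∨
    (Finset.univ.filter fun i => b i ≠ a i).card = 1)))

theorem aux_cube_card (w : Fin 3 → Bool) : (cubeGraph.neighborSet w).ncard = 3 := by
  rw [Set.ncard_eq_toFinset_card']
  revert w
  decide

/-- position on the 4-cycle of a pair of bits -/
def auxIdx : Bool → Bool → ZMod 4
  | false, false => 0
  | true, false => 1
  | true, true => 2
  | false, true => 3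

theorem auxIdx_inj : ∀ a b a' b', auxIdx a b = auxIdx a' b' → a = a' ∧ b = b' := by decide

theorem aux_cube_adj : ∀ x y, cubeGraph.Adj x y →
    (x 2 = y 2 ∧ (auxIdx (y 0) (y 1) = auxIdx (x 0) (x 1) + 1 ∨
      auxIdx (x 0) (x 1) = auxIdx (y 0) (y 1) + 1)) ∨
    (x 2 ≠ y 2 ∧ auxIdx (x 0) (x 1) = auxIdx (y 0) (y 1)) := by decide

theorem aux_cube {V : Type*} (Γ : SimpleGraph V) (hconn : Γ.Connected)
    (hcubic : ∀ v : V, (Γ.neighborSet v).ncard = 3) (c b : ZMod 4 → V)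
    (hc : Function.Injective c) (hb : Function.Injective b) (hcb : ∀ i j, c i ≠ b j)
    (hcc : ∀ i, Γ.Adj (c i) (c (i + 1))) (hbb : ∀ i, Γ.Adj (b i) (b (i + 1)))
    (hcb' : ∀ i, Γ.Adj (c i) (b i)) : Nonempty (Γ ≃g cubeGraph) := by
  refine aux_iso Γ cubeGraph hconn hcubic aux_cube_card (fun _ => false)
    (fun x => if x 2 = true then b (auxIdx (x 0) (x 1)) else c (auxIdx (x 0) (x 1))) ?_ ?_
  · intro x y h
    have key : x 2 = y 2 ∧ auxIdx (x 0) (x 1) = auxIdx (y 0) (y 1) := by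
      dsimp only at h
      by_cases h1 : x 2 = true <;> by_cases h2 : y 2 = true
      · rw [if_pos h1, if_pos h2] at h
        exact ⟨h1.trans h2.symm, hb h⟩
      · rw [if_pos h1, if_neg h2] at h
        exact absurd h.symm (hcb _ _)
      · rw [if_neg h1, if_pos h2] at h
        exact absurd h (hcb _ _)
      · rw [if_neg h1, if_neg h2] at h
        exact ⟨by simp_all, hc h⟩
    have h3 := auxIdx_inj _ _ _ _ key.2
    funext i
    fin_cases i
    · exact h3.1
    · exact h3.2
    · exact key.1
  · intro x y h
    rcases aux_cube_adj x y h with ⟨h1, h2⟩ | ⟨h1, h2⟩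
    · rw [h1]
      rcases h2 with h2 | h2 <;> rw [h2] <;> split_ifs
      · exact hbb _
      · exact hcc _
      · exact (hbb _).symm
      · exact (hcc _).symm
    · rw [h2]
      split_ifs with h3 h4 h4
      · exact absurd (h3.trans h4.symm) h1
      · exact (hcb' _).symm
      · exact hcb' _
      · simp_all

theorem aux_K33 {V : Type*} (Γ : SimpleGraph V) (hconn : Γ.Connected)
    (hcubic : ∀ v : V, (Γ.neighborSet v).ncard = 3) (p q : Fin 3 → V)
    (hp : Function.Injective p) (hq : Function.Injective q)
    (h : ∀ i j, Γ.Adj (p i) (q j)) :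
    Nonempty (Γ ≃g completeBipartiteGraph (Fin 3) (Fin 3)) := by
  refine aux_iso Γ _ hconn hcubic aux_K33_card (Sum.inl 0) (Sum.elim p q) ?_ ?_
  · exact hp.sumElim hq (fun i j => (h i j).ne)
  · rintro (i | i) (j | j) hij
    · simp at hij
    · exact h i j
    · exact (h j i).symm
    · simp at hij

/-- A connected cubic graph (finite or infinite) of girth 4 with a consistent 4-cycle
in which every edge lies on a 4-cycle is `K_{3,3}` or the cube. -/
theorem girth_four_consistent_cycle
    {V : Type*} (Γ : SimpleGraph V) (hconn : Γ.Connected)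
    (hcubic : ∀ v : V, (Γ.neighborSet v).ncard = 3)
    (hgirth : Γ.egirth = 4)
    (hcons : HasConsistentCycle Γ 4)
    (hedge : ∀ u w : V, Γ.Adj u w → ∃ c : ZMod 4 → V, Function.Injective c ∧
      (∀ i, Γ.Adj (c i) (c (i + 1))) ∧ c 0 = u ∧ c 1 = w) :
    Nonempty (Γ ≃g completeBipartiteGraph (Fin 3) (Fin 3)) ∨ Nonempty (Γ ≃g cubeGraph) := by
  obtain ⟨c, hc, hcc, γ, hγ⟩ := hcons
  have tri := aux_no_triangle Γ hgirth
  have hne : ∀ i : ZMod 4, i + 1 ≠ i - 1 := by decide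
  have hcc' : ∀ i, Γ.Adj (c i) (c (i - 1)) := by
    intro i
    have := (hcc (i - 1)).symm
    rwa [sub_add_cancel] at this
  choose b hb1 hb2 hb using fun i => aux_third Γ hcubic (c i) (c (i + 1)) (c (i - 1)) (hcc i)
    (hcc' i) (fun h => hne i (hc h))
  have hcb : ∀ i, Γ.Adj (c i) (b i) := fun i => (hb i _).2 (Or.inr (Or.inr rfl))
  have hγb : ∀ i, γ (b i) = b (i + 1) := by
    intro i
    have h1 : Γ.Adj (c (i + 1)) (γ (b i)) := by
      rw [← hγ]; exact γ.map_rel_iff.2 (hcb i)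
    rcases (hb _ _).1 h1 with h | h | h
    · rw [← hγ] at h
      exact absurd (γ.injective h) (hb1 i)
    · have e : i + 1 - 1 = (i - 1) + 1 := by ring
      rw [e, ← hγ] at h
      exact absurd (γ.injective h) (hb2 i)
    · exact h
  -- four-cycles through an edge, unpacked
  have h4 : ∀ u w, Γ.Adj u w → ∃ x y, x ≠ u ∧ y ≠ w ∧ Γ.Adj w x ∧ Γ.Adj x y ∧ Γ.Adj y u := by
    intro u w huw
    obtain ⟨d, hd, hdd, rfl, rfl⟩ := hedge u w huw
    refine ⟨d 2, d 3, fun h => ?_, fun h => ?_, hdd 1, hdd 2, hdd 3⟩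
    · exact absurd (hd h) (by decide)
    · exact absurd (hd h) (by decide)
  have hshift : ∀ P : ZMod 4 → Prop, (∃ i, P i) → (∀ i, P i → P (i + 1)) → ∀ i, P i := by
    intro P ⟨i, hi⟩ hs j
    have h1 := hs _ hi
    have h2 := hs _ h1
    have h3 := hs _ h2
    have : j = i ∨ j = i + 1 ∨ j = i + 1 + 1 ∨ j = i + 1 + 1 + 1 := by
      clear h1 h2 h3 hi hs
      clear P
      revert i j; decide
    rcases this with rfl | rfl | rfl | rfl <;> assumption
  have hbbne : ∀ i, b i ≠ b (i + 1) := by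
    intro i h
    refine tri (c i) (c (i + 1)) (b i) (hcc i) ?_ (hcb i).symm
    rw [h]; exact hcb _
  have hcase : (∀ i, b i = b (i + 2)) ∨ (∀ i, Γ.Adj (b i) (b (i + 1))) := by
    have s1 : ∀ i, b i = b (i + 2) → b (i + 1) = b (i + 1 + 2) := by
      intro i h
      have e : i + 1 + 2 = i + 2 + 1 := by ring
      rw [e, ← hγb, ← hγb, h]
    have s2 : ∀ i, Γ.Adj (b i) (b (i + 1)) → Γ.Adj (b (i + 1)) (b (i + 1 + 1)) := by
      intro i h
      rw [← hγb, ← hγb (i + 1)]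
      exact γ.map_rel_iff.2 (by simpa [hγb] using h)
    obtain ⟨x, y, hx, hy, h1, h2, h3⟩ := h4 (c 0) (b 0) (hcb 0)
    have e1 : c (1 - 1 : ZMod 4) = c 0 := by congr 1
    have e2 : c (3 + 1 : ZMod 4) = c 0 := by congr 1
    have e3 : c (1 + 1 : ZMod 4) = c 2 := by congr 1
    have e4 : c (3 - 1 : ZMod 4) = c 2 := by congr 1
    have e5 : c (0 + 1 : ZMod 4) = c 1 := by congr 1
    have e6 : c (0 - 1 : ZMod 4) = c 3 := by congr 1
    have e7 : c (2 + 1 : ZMod 4) = c 3 := by congr 1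
    have e8 : c (2 - 1 : ZMod 4) = c 1 := by congr 1
    have n1 := hb1 0
    have n2 := hb2 0
    have hb2' := hb 2 (b 0)
    rw [e7, e8] at hb2'
    rw [e5] at n1
    rw [e6] at n2
    have fin2 : Γ.Adj (b 0) (c 2) → b 0 = b (0 + 2) := by
      intro h
      rw [zero_add]
      rcases hb2'.1 h.symm with h | h | h
      · exact absurd h n2
      · exact absurd h n1
      · exact h
    rcases (hb 0 y).1 h3.symm with h | h | h
    · rw [e5] at h
      subst h
      rcases (hb 1 x).1 h2.symm with h | h | h
      · rw [e3] at h; subst h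
        exact Or.inl (hshift _ ⟨0, fin2 h1⟩ s1)
      · rw [e1] at h; exact absurd h hx
      · subst h
        exact Or.inr (hshift _ ⟨0, h1⟩ s2)
    · rw [e6] at h
      subst h
      rcases (hb 3 x).1 h2.symm with h | h | h
      · rw [e2] at h; exact absurd h hx
      · rw [e4] at h; subst h
        exact Or.inl (hshift _ ⟨0, fin2 h1⟩ s1)
      · subst h
        exact Or.inr (hshift _ ⟨3, h1.symm⟩ s2)
    · exact absurd h hy
  have hcbne : ∀ i j, c i ≠ b j := by
    intro i j h
    have hij : i = j ∨ i = j + 1 ∨ i = j - 1 ∨ i = j + 1 + 1 := by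
      clear h
      revert i j; decide
    rcases hij with rfl | rfl | rfl | rfl
    · exact (hcb i).ne h
    · exact hb1 _ h.symm
    · exact hb2 _ h.symm
    · exact tri (c j) (c (j + 1)) (c (j + 1 + 1)) (hcc _) (hcc _) (by rw [h]; exact (hcb _).symm)
  by_cases hA : ∀ i, b i = b (i + 2)
  · left
    have hb02 : b 0 = b 2 := hA 0
    have hb13 : b 1 = b 3 := hA 1
    have a01 : Γ.Adj (c 0) (c 1) := hcc 0
    have a12 : Γ.Adj (c 1) (c 2) := hcc 1
    have a23 : Γ.Adj (c 2) (c 3) := hcc 2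
    have a30 : Γ.Adj (c 3) (c 0) := hcc 3
    have a0 := hcb 0
    have a1 := hcb 1
    have a2 := hcb 2
    have a3 := hcb 3
    rw [← hb02] at a2
    rw [← hb13] at a3
    have n02 : c 0 ≠ c 2 := fun h => absurd (hc h) (by decide)
    have n13 : c 1 ≠ c 3 := fun h => absurd (hc h) (by decide)
    have hbb : Γ.Adj (b 0) (b 1) := by
      obtain ⟨z, hz1, hz2, hz⟩ := aux_third Γ hcubic (b 0) (c 0) (c 2) a0.symm a2.symm n02
      obtain ⟨x, y, hx, hy, h1, h2, h3⟩ := h4 (b 0) z ((hz z).2 (Or.inr (Or.inr rfl)))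
      have m1 : ∀ t, Γ.Adj (c 1) t → t = c 2 ∨ t = c 0 ∨ t = b 1 := fun t ht => (hb 1 t).1 ht
      have m3 : ∀ t, Γ.Adj (c 3) t → t = c 0 ∨ t = c 2 ∨ t = b 1 := fun t ht => by
        rw [hb13]; exact (hb 3 t).1 ht
      have m0 : ∀ t, Γ.Adj (c 0) t → t = c 1 ∨ t = c 3 ∨ t = b 0 := fun t ht => (hb 0 t).1 ht
      have m2 : ∀ t, Γ.Adj (c 2) t → t = c 3 ∨ t = c 1 ∨ t = b 0 := fun t ht => by
        rw [hb02]; exact (hb 2 t).1 ht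
      have hx13 : x = c 1 ∨ x = c 3 := by
        rcases (hz y).1 h3.symm with rfl | rfl | rfl
        · have := m0 x h2.symm; tauto
        · have := m2 x h2.symm; tauto
        · exact absurd rfl hy
      have hzb : z = b 1 := by
        rcases hx13 with rfl | rfl
        · have := m1 z h1.symm; tauto
        · have := m3 z h1.symm; tauto
      rw [← hzb]
      exact (hz z).2 (Or.inr (Or.inr rfl))
    refine aux_K33 Γ hconn hcubic ![c 0, c 2, b 1] ![c 1, c 3, b 0] ?_ ?_ ?_
    · exact aux_inj3 _ _ _ n02 (hcbne 0 1) (hcbne 2 1)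
    · exact aux_inj3 _ _ _ n13 (hcbne 1 0) (hcbne 3 0)
    · intro i j
      fin_cases i <;> fin_cases j
      · exact a01
      · exact a30.symm
      · exact a0
      · exact a12.symm
      · exact a23
      · exact a2
      · exact a1.symm
      · exact a3.symm
      · exact hbb.symm
  · right
    have hB := hcase.resolve_left hA
    have hnA : ∀ i, b i ≠ b (i + 2) := by
      by_contra hcon
      push Not at hcon
      apply hA
      refine hshift _ hcon ?_
      intro i h
      have e : i + 1 + 2 = i + 2 + 1 := by ring
      rw [e, ← hγb, ← hγb, h]
    refine aux_cube Γ hconn hcubic c b hc ?_ hcbne hcc hB hcb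
    intro i j h
    have hij : i = j ∨ j = i + 1 ∨ j = i + 2 ∨ i = j + 1 := by
      clear h
      revert i j; decide
    rcases hij with h' | h' | h' | h'
    · exact h'
    · rw [h'] at h; exact absurd h (hbbne i)
    · rw [h'] at h; exact absurd h (hnA i)
    · rw [h'] at h; exact absurd h.symm (hbbne j)
end

section
/- Let Γ be a connected cubic simple graph (finite or infinite) of girth 5 that contains a consistent cycle of length 5 and in which every edge is contained in a cycle of length 5. Then Γ is isomorphic to the Petersen graph or to the dodecahedron graph. -/
open SimpleGraph

/-- The Petersen graph: vertices are the 2-element subsets of a 5-element set,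
two of them adjacent iff they are disjoint. -/
def petersenGraph : SimpleGraph {s : Finset (Fin 5) // s.card = 2} :=
  SimpleGraph.fromRel (fun a b => Disjoint a.1 b.1)
/-- The generalized Petersen graph GP(n,k): outer vertices `(false, i)` with edges
`a_i a_{i+1}`, spokes `a_i b_i`, and inner vertices `(true, i)` with edges `b_i b_{i+k}`. -/
def genPetersenGraph (n k : ℕ) : SimpleGraph (Bool × ZMod n) :=
  SimpleGraph.fromRel (fun p q =>
    (p.1 = false ∧ q.1 = false ∧ q.2 = p.2 + 1) ∨
    (p.1 = false ∧ q.1 = true ∧ q.2 = p.2) ∨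
    (p.1 = true ∧ q.1 = true ∧ q.2 = p.2 + (k : ZMod n)))
/-- The dodecahedron graph, i.e. the generalized Petersen graph GP(10,2). -/
def dodecahedronGraph : SimpleGraph (Bool × ZMod 10) := genPetersenGraph 10 2

namespace GirthFive

lemma three {V : Type*} {Γ : SimpleGraph V} (hcubic : ∀ v : V, (Γ.neighborSet v).ncard = 3)
    {v a b c : V} (ha : Γ.Adj v a) (hb : Γ.Adj v b) (hc : Γ.Adj v c)
    (hab : a ≠ b) (hac : a ≠ c) (hbc : b ≠ c) (x : V) : Γ.Adj v x ↔ x = a ∨ x = b ∨ x = c := by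
  have hfin : (Γ.neighborSet v).Finite := Set.finite_of_ncard_ne_zero (by rw [hcubic]; decide)
  have h : ({a, b, c} : Set V) = Γ.neighborSet v := by
    apply Set.eq_of_subset_of_ncard_le _ _ hfin
    · rintro y (rfl | rfl | rfl) <;> assumption
    · rw [hcubic, Set.ncard_eq_three.2 ⟨a, b, c, hab, hac, hbc, rfl⟩]
  have := Set.ext_iff.1 h x
  simpa using this.symm

lemma third {V : Type*} {Γ : SimpleGraph V} (hcubic : ∀ v : V, (Γ.neighborSet v).ncard = 3)
    {v a b : V} (ha : Γ.Adj v a) (hb : Γ.Adj v b) (hab : a ≠ b) :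
    ∃ z, z ≠ a ∧ z ≠ b ∧ ∀ x, Γ.Adj v x ↔ x = a ∨ x = b ∨ x = z := by
  obtain ⟨p, q, r, hpq, hpr, hqr, h⟩ := Set.ncard_eq_three.1 (hcubic v)
  have hN : ∀ x, Γ.Adj v x ↔ x = p ∨ x = q ∨ x = r := fun x => by
    simpa using Set.ext_iff.1 h x
  have ha' := (hN a).1 ha
  have hb' := (hN b).1 hb
  have : ∃ z, z ≠ a ∧ z ≠ b ∧ Γ.Adj v z := by
    by_cases h1 : p ≠ a ∧ p ≠ b
    · exact ⟨p, h1.1, h1.2, (hN p).2 (by simp)⟩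
    by_cases h2 : q ≠ a ∧ q ≠ b
    · exact ⟨q, h2.1, h2.2, (hN q).2 (by simp)⟩
    · refine ⟨r, ?_, ?_, (hN r).2 (by simp)⟩ <;> grind
  obtain ⟨z, hza, hzb, hz⟩ := this
  exact ⟨z, hza, hzb, three hcubic ha hb hz hab hza.symm hzb.symm⟩

lemma four {V : Type*} {Γ : SimpleGraph V} (hcubic : ∀ v : V, (Γ.neighborSet v).ncard = 3)
    {v a b c d : V} (ha : Γ.Adj v a) (hb : Γ.Adj v b) (hc : Γ.Adj v c) (hd : Γ.Adj v d)
    (hab : a ≠ b) (hac : a ≠ c) (had : a ≠ d) (hbc : b ≠ c) (hbd : b ≠ d) (hcd : c ≠ d) :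
    False := by
  have := (three hcubic ha hb hc hab hac hbc d).1 hd
  grind

/-- A closed, injective copy of a cubic graph inside a connected cubic graph is everything. -/
lemma iso_of {V W : Type*} [Nonempty W] {Γ : SimpleGraph V} (hconn : Γ.Connected)
    (hcubic : ∀ v : V, (Γ.neighborSet v).ncard = 3) (H : SimpleGraph W)
    (hH : ∀ w, ∃ p q r, p ≠ q ∧ p ≠ r ∧ q ≠ r ∧ H.Adj w p ∧ H.Adj w q ∧ H.Adj w r)
    (φ : W → V) (inj : Function.Injective φ) (hom : ∀ a b, H.Adj a b → Γ.Adj (φ a) (φ b)) :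
    Nonempty (H ≃g Γ) := by
  have key : ∀ w x, Γ.Adj (φ w) x → ∃ y, H.Adj w y ∧ φ y = x := by
    intro w x hx
    obtain ⟨p, q, r, hpq, hpr, hqr, hp, hq, hr⟩ := hH w
    rcases (three hcubic (hom _ _ hp) (hom _ _ hq) (hom _ _ hr) (inj.ne hpq) (inj.ne hpr)
      (inj.ne hqr) x).1 hx with h | h | h
    exacts [⟨p, hp, h.symm⟩, ⟨q, hq, h.symm⟩, ⟨r, hr, h.symm⟩]
  have surj : Function.Surjective φ := by
    obtain ⟨w0⟩ := ‹Nonempty W›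
    have walk : ∀ a b : V, Γ.Walk a b → (∃ w, φ w = a) → ∃ w, φ w = b := by
      intro a b p
      induction p with
      | nil => exact id
      | cons h p ih =>
        rintro ⟨w, rfl⟩
        obtain ⟨y, -, hy⟩ := key _ _ h
        exact ih ⟨y, hy⟩
    intro v
    obtain ⟨p⟩ := hconn.preconnected (φ w0) v
    exact walk _ _ p ⟨w0, rfl⟩
  refine ⟨⟨Equiv.ofBijective φ ⟨inj, surj⟩, ?_⟩⟩
  intro a b
  constructor
  · intro h
    obtain ⟨y, hy, e⟩ := key a (φ b) h
    exact inj e ▸ hy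
  · exact hom a b

lemma no_tri {V : Type*} {Γ : SimpleGraph V} (hg : Γ.egirth = 5) {a b c : V}
    (h1 : Γ.Adj a b) (h2 : Γ.Adj b c) (h3 : Γ.Adj c a) : False := by
  have h := le_egirth.1 hg.ge a (.cons h1 (.cons h2 (.cons h3 .nil)))
    (by
      have := h1.ne; have := h2.ne; have := h3.ne
      simp [Walk.isCycle_def, Walk.isTrail_def]
      grind)
  simp only [Walk.length_cons, Walk.length_nil] at h
  exact absurd h (by decide)

lemma no_quad {V : Type*} {Γ : SimpleGraph V} (hg : Γ.egirth = 5) {a b c d : V}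
    (h1 : Γ.Adj a b) (h2 : Γ.Adj b c) (h3 : Γ.Adj c d) (h4 : Γ.Adj d a) (hac : a ≠ c) :
    b = d := by
  by_contra hbd
  have h := le_egirth.1 hg.ge a (.cons h1 (.cons h2 (.cons h3 (.cons h4 .nil))))
    (by
      have := h1.ne; have := h2.ne; have := h3.ne; have := h4.ne
      simp [Walk.isCycle_def, Walk.isTrail_def]
      grind)
  simp only [Walk.length_cons, Walk.length_nil] at h
  exact absurd h (by decide)

lemma cyc {P : ZMod 5 → Prop} (h : ∀ i, P i → P (i + 1)) (i : ZMod 5) (hi : P i) (j : ZMod 5) :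
    P j := by
  have : ∀ n : ℕ, P (i + n) := by
    intro n
    induction n with
    | zero => simpa using hi
    | succ n ih => have := h _ ih; rwa [add_assoc, ← Nat.cast_succ] at this
  have := this (j - i).val
  rwa [ZMod.natCast_zmod_val, add_sub_cancel] at this

/-- If two members of a rotating family agree, some vertex has four distinct neighbours. -/
lemma inj_of {V : Type*} {Γ : SimpleGraph V} (hcubic : ∀ v : V, (Γ.neighborSet v).ncard = 3)
    (γ : Γ ≃g Γ) (x y : ZMod 5 → V) (hx : Function.Injective x) (hy : ∀ i, γ (y i) = y (i + 1))
    (hxy : ∀ i, Γ.Adj (y i) (x i)) : Function.Injective y := by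
  intro i j hij
  by_contra hne
  have h : ∀ m, y m = y (m + (j - i)) := by
    intro m
    refine cyc (P := fun m => y m = y (m + (j - i))) ?_ i ?_ m
    · intro m hm
      rw [← hy, hm, hy]; congr 1; ring
    · simpa using hij
  have hk : j - i ≠ 0 := sub_ne_zero.2 (Ne.symm hne)
  generalize j - i = k at h hk
  have e1 := h 0
  have e2 := h (0 + k)
  have e3 := h (0 + k + k)
  have a0 := hxy 0
  have a1 := hxy (0 + k)
  have a2 := hxy (0 + k + k)
  have a3 := hxy (0 + k + k + k)
  rw [← e3, ← e2, ← e1] at a3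
  rw [← e2, ← e1] at a2
  rw [← e1] at a1
  refine four hcubic a0 a1 a2 a3 (hx.ne ?_) (hx.ne ?_) (hx.ne ?_) (hx.ne ?_) (hx.ne ?_) (hx.ne ?_)
    <;> (clear * - hk; revert k; decide)

def pet : SimpleGraph (Fin 2 × ZMod 5) := SimpleGraph.fromRel (fun p q =>
    (p.1 = 0 ∧ q.1 = 0 ∧ q.2 = p.2 + 1) ∨
    (p.1 = 0 ∧ q.1 = 1 ∧ q.2 = p.2) ∨
    (p.1 = 1 ∧ q.1 = 1 ∧ q.2 = p.2 + 2))

def dod : SimpleGraph (Fin 4 × ZMod 5) := SimpleGraph.fromRel (fun p q =>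
    (p.1 = 0 ∧ q.1 = 0 ∧ q.2 = p.2 + 1) ∨
    (p.1 = 0 ∧ q.1 = 1 ∧ q.2 = p.2) ∨
    (p.1 = 1 ∧ q.1 = 2 ∧ q.2 = p.2) ∨
    (p.1 = 2 ∧ q.1 = 1 ∧ q.2 = p.2 + 1) ∨
    (p.1 = 2 ∧ q.1 = 3 ∧ q.2 = p.2) ∨
    (p.1 = 3 ∧ q.1 = 3 ∧ q.2 = p.2 + 1))

instance : DecidableRel pet.Adj := fun a b => by
  unfold pet; simp only [SimpleGraph.fromRel_adj]; infer_instance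
instance : DecidableRel dod.Adj := fun a b => by
  unfold dod; simp only [SimpleGraph.fromRel_adj]; infer_instance
instance : DecidableRel petersenGraph.Adj := fun a b => by
  unfold petersenGraph; simp only [SimpleGraph.fromRel_adj]; infer_instance
instance : DecidableRel dodecahedronGraph.Adj := fun a b => by
  unfold dodecahedronGraph genPetersenGraph; simp only [SimpleGraph.fromRel_adj]; infer_instance

def petMap (p : Fin 2 × ZMod 5) : {s : Finset (Fin 5) // s.card = 2} :=
  if p.1 = 0 then ⟨{(2 * p.2 : ZMod 5), (2 * p.2 + 1 : ZMod 5)}, by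
    generalize p.2 = i; revert i; decide⟩
  else ⟨{(2 * p.2 + 2 : ZMod 5), (2 * p.2 + 4 : ZMod 5)}, by
    generalize p.2 = i; revert i; decide⟩

def dodMap (p : Fin 4 × ZMod 5) : Bool × ZMod 10 :=
  if p.1 = 0 then (true, (2 * p.2.val : ℕ))
  else if p.1 = 1 then (false, (2 * p.2.val : ℕ))
  else if p.1 = 2 then (false, (2 * p.2.val + 1 : ℕ))
  else (true, (2 * p.2.val + 1 : ℕ))

set_option maxRecDepth 100000 in
lemma pet_iso : Nonempty (pet ≃g petersenGraph) :=
  ⟨⟨Equiv.ofBijective petMap (by decide +kernel), by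
    intro a b
    change petersenGraph.Adj (petMap a) (petMap b) ↔ _
    revert a b; decide +kernel⟩⟩

set_option maxRecDepth 100000 in
lemma dod_iso : Nonempty (dod ≃g dodecahedronGraph) :=
  ⟨⟨Equiv.ofBijective dodMap (by decide +kernel), by
    intro a b
    change dodecahedronGraph.Adj (dodMap a) (dodMap b) ↔ _
    revert a b; decide +kernel⟩⟩

lemma pet_cubic (w) : ∃ p q r, p ≠ q ∧ p ≠ r ∧ q ≠ r ∧ pet.Adj w p ∧ pet.Adj w q ∧ pet.Adj w r := by
  obtain ⟨l, i⟩ := w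
  fin_cases l
  · refine ⟨(0, i + 1), (0, i - 1), (1, i), ?_⟩; revert i; decide +kernel
  · refine ⟨(0, i), (1, i + 2), (1, i - 2), ?_⟩; revert i; decide +kernel

lemma dod_cubic (w) : ∃ p q r, p ≠ q ∧ p ≠ r ∧ q ≠ r ∧ dod.Adj w p ∧ dod.Adj w q ∧ dod.Adj w r := by
  obtain ⟨l, i⟩ := w
  fin_cases l
  · refine ⟨(0, i + 1), (0, i - 1), (1, i), ?_⟩; revert i; decide +kernel
  · refine ⟨(0, i), (2, i), (2, i - 1), ?_⟩; revert i; decide +kernel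
  · refine ⟨(1, i), (1, i + 1), (3, i), ?_⟩; revert i; decide +kernel
  · refine ⟨(3, i + 1), (3, i - 1), (2, i), ?_⟩; revert i; decide +kernel

lemma idx : ∀ i j : ZMod 5, i = j ∨ j = i + 1 ∨ j = i + 2 ∨ i = j + 1 ∨ i = j + 2 := by decide

end GirthFive

open GirthFive

/-- A connected cubic graph (finite or infinite) of girth 5 with a consistent 5-cycle
in which every edge lies on a 5-cycle is the Petersen graph or the dodecahedron. -/
theorem girth_five_consistent_cycle
    {V : Type*} (Γ : SimpleGraph V) (hconn : Γ.Connected)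
    (hcubic : ∀ v : V, (Γ.neighborSet v).ncard = 3)
    (hgirth : Γ.egirth = 5)
    (hcons : HasConsistentCycle Γ 5)
    (hedge : ∀ u w : V, Γ.Adj u w → ∃ c : ZMod 5 → V, Function.Injective c ∧
      (∀ i, Γ.Adj (c i) (c (i + 1))) ∧ c 0 = u ∧ c 1 = w) :
    Nonempty (Γ ≃g petersenGraph) ∨ Nonempty (Γ ≃g dodecahedronGraph) := by
  obtain ⟨c, cinj, cadj, γ, γc⟩ := hcons
  have tri : ∀ {a b c : V}, Γ.Adj a b → Γ.Adj b c → Γ.Adj c a → False := no_tri hgirth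
  have quad : ∀ {a b c d : V}, Γ.Adj a b → Γ.Adj b c → Γ.Adj c d → Γ.Adj d a → a ≠ c → b = d :=
    no_quad hgirth
  have sy : ∀ {a b : V}, Γ.Adj a b → Γ.Adj b a := fun h => h.symm
  have γadj : ∀ {a b : V}, Γ.Adj a b → Γ.Adj (γ a) (γ b) := fun h => γ.map_adj_iff.2 h
  have γinj : ∀ {a b : V}, γ a = γ b → a = b := fun h => γ.injective h
  -- a five-cycle through a given edge, read off as vertices
  have hcyc : ∀ u w, Γ.Adj u w → ∃ x y z, Γ.Adj w x ∧ Γ.Adj x y ∧ Γ.Adj y z ∧ Γ.Adj z u ∧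
      x ≠ u ∧ y ≠ u ∧ y ≠ w ∧ z ≠ w ∧ x ≠ z := by
    intro u w h
    obtain ⟨k, kinj, kadj, rfl, rfl⟩ := hedge u w h
    exact ⟨k 2, k 3, k 4, kadj 1, kadj 2, kadj 3, kadj 4, kinj.ne (by decide),
      kinj.ne (by decide), kinj.ne (by decide), kinj.ne (by decide), kinj.ne (by decide)⟩
  have cadj' : ∀ i, Γ.Adj (c i) (c (i - 1)) := fun i => by
    have := cadj (i - 1); rw [sub_add_cancel] at this; exact this.symm
  have hd : ∀ i, ∃ z, z ≠ c (i + 1) ∧ z ≠ c (i - 1) ∧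
      ∀ x, Γ.Adj (c i) x ↔ x = c (i + 1) ∨ x = c (i - 1) ∨ x = z := fun i =>
    third hcubic (cadj i) (cadj' i) (cinj.ne (by revert i; decide))
  choose d hd1 hd2 Nc using hd
  have cd : ∀ i, Γ.Adj (c i) (d i) := fun i => (Nc i _).2 (by simp)
  have γd : ∀ i, γ (d i) = d (i + 1) := by
    intro i
    have h := γadj (cd i)
    rw [γc] at h
    rcases (Nc _ _).1 h with h | h | h
    · rw [← γc] at h; exact absurd (γinj h) (hd1 i)
    · have e : i + 1 - 1 = i - 1 + 1 := by ring
      rw [e, ← γc] at h; exact absurd (γinj h) (hd2 i)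
    · exact h
  have dc : ∀ i j, d i ≠ c j := by
    intro i j h
    have h1 := cd i
    rw [h] at h1
    rcases idx i j with rfl | rfl | rfl | rfl | rfl
    · exact h1.ne rfl
    · exact hd1 _ h
    · have := cadj (i + 1)
      rw [add_assoc, one_add_one_eq_two] at this
      exact tri (cadj i) this h1.symm
    · exact hd2 _ (by rw [h]; congr 1; ring)
    · have := cadj (j + 1)
      rw [add_assoc, one_add_one_eq_two] at this
      exact tri (cadj j) this h1
  have dinj : Function.Injective d := inj_of hcubic γ c d cinj γd (fun i => (cd i).symm)
  have ddn : ∀ i, ¬ Γ.Adj (d i) (d (i + 1)) := fun i h =>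
    dc i (i + 1) (quad (cadj i) (cd (i + 1)) h.symm (cd i).symm (dc (i+1) i).symm).symm
  by_cases hA : ∃ i, Γ.Adj (d i) (d (i + 2))
  · left
    obtain ⟨i0, hi0⟩ := hA
    have dd : ∀ i, Γ.Adj (d i) (d (i + 2)) := by
      refine cyc ?_ i0 hi0
      intro i h
      have := γadj h
      rw [γd, γd] at this
      convert this using 2; ring
    let φ : Fin 2 × ZMod 5 → V := fun p => if p.1 = 0 then c p.2 else d p.2
    obtain ⟨e⟩ := iso_of hconn hcubic pet pet_cubic φ
      (by
        rintro ⟨l, i⟩ ⟨m, j⟩ h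
        fin_cases l <;> fin_cases m <;> simp [φ] at h ⊢
        · exact cinj h
        · exact dc _ _ h.symm
        · exact dc _ _ h
        · exact dinj h)
      (by
        have : ∀ a b : Fin 2 × ZMod 5, ((a.1 = 0 ∧ b.1 = 0 ∧ b.2 = a.2 + 1) ∨
            (a.1 = 0 ∧ b.1 = 1 ∧ b.2 = a.2) ∨
            (a.1 = 1 ∧ b.1 = 1 ∧ b.2 = a.2 + 2)) → Γ.Adj (φ a) (φ b) := by
          rintro ⟨l, i⟩ ⟨m, j⟩ h
          rcases h with ⟨h1, h2, h3⟩ | ⟨h1, h2, h3⟩ | ⟨h1, h2, h3⟩ <;>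
            (dsimp only at h1 h2 h3; subst h1 h2 h3; simp [φ])
          exacts [cadj _, cd _, dd _]
        intro a b h
        rcases h with ⟨-, h | h⟩
        · exact this _ _ h
        · exact (this _ _ h).symm)
    obtain ⟨e'⟩ := pet_iso
    exact ⟨e.symm.trans e'⟩
  right
  push Not at hA
  have ddn' : ∀ i j, ¬ Γ.Adj (d i) (d j) := by
    intro i j h
    rcases idx i j with rfl | rfl | rfl | rfl | rfl
    · exact h.ne rfl
    · exact ddn _ h
    · exact hA _ h
    · exact ddn _ h.symm
    · exact hA _ h.symm
  have he : ∀ i, ∃ z, Γ.Adj (d i) z ∧ Γ.Adj (d (i + 1)) z := by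
    have : ∃ i, ∃ z, Γ.Adj (d i) z ∧ Γ.Adj (d (i + 1)) z := by
      obtain ⟨x, y, z, h1, h2, h3, h4, n1, n2, n3, n4, n5⟩ := hcyc _ _ (cd 0)
      have key : ∀ k, Γ.Adj y (c k) → y = d k ∨ y = c (k + 1) ∨ y = c (k - 1) := by
        intro k h; have := (Nc _ _).1 h.symm; tauto
      have bad : ∀ m, y = c m → False := by
        rintro m rfl
        rcases (Nc _ _).1 h2.symm with h | h | h
        · rw [h] at h1; 
          rcases (Nc _ _).1 h1.symm with h' | h' | h'
          · exact dc _ _ h'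
          · exact dc _ _ h'
          · have := dinj h'
            apply n1; rw [h, ← this]
        · rw [h] at h1; 
          rcases (Nc _ _).1 h1.symm with h' | h' | h'
          · exact dc _ _ h'
          · exact dc _ _ h'
          · have := dinj h'
            apply n1; rw [h, ← this]
        · rw [h] at h1; exact ddn' _ _ h1
      rcases (Nc _ _).1 h4.symm with h | h | h
      · subst h
        rcases key _ h3 with h | h | h
        · subst h; exact ⟨0, x, h1, h2.symm⟩
        · exact (bad _ h).elim
        · exact (bad _ h).elim
      · subst h
        rcases key _ h3 with h | h | h
        · subst h; exact ⟨0 - 1, x, h2.symm, by rw [sub_add_cancel]; exact h1⟩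
        · exact (bad _ h).elim
        · exact (bad _ h).elim
      · exact (n4 h).elim
    obtain ⟨i0, hi0⟩ := this
    refine cyc ?_ i0 hi0
    rintro i ⟨z, h1, h2⟩
    refine ⟨γ z, ?_, ?_⟩
    · rw [← γd]; exact γadj h1
    · rw [← γd]; exact γadj h2
  choose e de de' using he
  have γe : ∀ i, γ (e i) = e (i + 1) := by
    intro i
    have h1 := γadj (de i)
    have h2 := γadj (de' i)
    rw [γd] at h1 h2
    exact quad h1 h2.symm (de' (i + 1)) (de (i + 1)).symm
      (dinj.ne (by clear * -; revert i; decide))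
  have einj : Function.Injective e := inj_of hcubic γ d e dinj γe (fun i => (de i).symm)
  have ed : ∀ i j, e i ≠ d j := fun i j h => ddn' i j (h ▸ de i)
  have ec : ∀ i j, e i ≠ c j := by
    intro i j h
    have h1 := de i
    have h2 := de' i
    rw [h] at h1 h2
    have key : ∀ k, Γ.Adj (d k) (c j) → k = j := by
      intro k hk
      rcases (Nc _ _).1 hk.symm with h | h | h
      · exact (dc _ _ h).elim
      · exact (dc _ _ h).elim
      · exact dinj h
    have := (key _ h1).trans (key _ h2).symm
    clear * - this
    revert i; decide
  have de2 : ∀ i, Γ.Adj (d i) (e (i - 1)) := fun i => by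
    have := de' (i - 1); rwa [sub_add_cancel] at this
  have Nd : ∀ i x, Γ.Adj (d i) x ↔ x = c i ∨ x = e i ∨ x = e (i - 1) := fun i =>
    three hcubic (cd i).symm (de i) (de2 i) (ec _ _).symm (ec _ _).symm
      (einj.ne (by revert i; decide))
  have hf : ∀ i, ∃ z, z ≠ d i ∧ z ≠ d (i + 1) ∧
      ∀ x, Γ.Adj (e i) x ↔ x = d i ∨ x = d (i + 1) ∨ x = z := fun i =>
    third hcubic (de i).symm (de' i).symm (dinj.ne (by revert i; decide))
  choose f hf1 hf2 Ne using hf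
  have ef : ∀ i, Γ.Adj (e i) (f i) := fun i => (Ne i _).2 (by simp)
  have γf : ∀ i, γ (f i) = f (i + 1) := by
    intro i
    have h := γadj (ef i)
    rw [γe] at h
    rcases (Ne _ _).1 h with h | h | h
    · rw [← γd] at h; exact absurd (γinj h) (hf1 i)
    · rw [← γd] at h; exact absurd (γinj h) (hf2 i)
    · exact h
  have finj : Function.Injective f := inj_of hcubic γ e f einj γf (fun i => (ef i).symm)
  have fc : ∀ i j, f i ≠ c j := by
    intro i j h
    have h1 := ef i
    rw [h] at h1
    rcases (Nc _ _).1 h1.symm with h | h | h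
    exacts [ec _ _ h, ec _ _ h, ed _ _ h]
  have fd : ∀ i j, f i ≠ d j := by
    intro i j h
    have h1 := ef i
    rw [h] at h1
    rcases (Nd _ _).1 h1.symm with h' | h' | h'
    · exact ec _ _ h'
    · rw [einj h'] at h; rw [← einj h'] at h; exact hf1 _ (by rw [h, einj h'])
    · exact hf2 i (by rw [h, einj h', sub_add_cancel])
  have fe : ∀ i j, f i ≠ e j := by
    intro i j h
    have h2 : f j = e (j + (j - i)) := by
      refine cyc (P := fun m => f m = e (m + (j - i))) ?_ i ?_ j
      · intro m hm
        rw [← γf, hm, γe]; congr 1; ring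
      · rw [h]; congr 1; ring
    have h1 := ef i
    rw [h] at h1
    rcases (Ne _ _).1 h1.symm with h' | h' | h'
    · exact ed _ _ h'
    · exact ed _ _ h'
    · rw [h2] at h'
      have := einj h'
      have : i = j := by clear * - this; revert i j; decide
      rw [this] at h1
      exact h1.ne rfl
  have ff : ∀ i, Γ.Adj (f i) (f (i + 1)) := by
    have : ∃ i, Γ.Adj (f i) (f (i + 1)) := by
      obtain ⟨x, y, z, h1, h2, h3, h4, n1, n2, n3, n4, n5⟩ := hcyc _ _ (ef 0)
      have xc : ∀ m, x ≠ c m := by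
        rintro m rfl
        rcases (Nc _ _).1 h1.symm with h | h | h
        exacts [fc _ _ h, fc _ _ h, fd _ _ h]
      have xd : ∀ m, x ≠ d m := by
        rintro m rfl
        rcases (Nd _ _).1 h1.symm with h | h | h
        exacts [fc _ _ h, fe _ _ h, fe _ _ h]
      have yc : ∀ m, y ≠ c m := by
        rintro m rfl
        rcases (Nc _ _).1 h2.symm with h | h | h
        exacts [xc _ h, xc _ h, xd _ h]
      have key : ∀ m, y = e m → x = f m := by
        rintro m rfl
        rcases (Ne _ _).1 h2.symm with h | h | h
        exacts [(xd _ h).elim, (xd _ h).elim, h]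
      rcases (Ne _ _).1 h4.symm with h | h | h
      · subst h
        rcases (Nd _ _).1 h3.symm with h | h | h
        · exact (yc _ h).elim
        · exact (n2 h).elim
        · have := key _ h
          subst this
          exact ⟨0 - 1, by rw [sub_add_cancel]; exact h1.symm⟩
      · subst h
        rcases (Nd _ _).1 h3.symm with h | h | h
        · exact (yc _ h).elim
        · have := key _ h
          subst this
          exact ⟨0, h1⟩
        · rw [add_sub_cancel_right] at h; exact (n2 h).elim
      · exact (n4 h).elim
    obtain ⟨i0, hi0⟩ := this
    refine cyc ?_ i0 hi0
    intro i h
    have := γadj h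
    rwa [γf, γf] at this
  let φ : Fin 4 × ZMod 5 → V := fun p => if p.1 = 0 then c p.2 else if p.1 = 1 then d p.2
    else if p.1 = 2 then e p.2 else f p.2
  obtain ⟨g⟩ := iso_of hconn hcubic dod dod_cubic φ
    (by
      rintro ⟨l, i⟩ ⟨m, j⟩ h
      fin_cases l <;> fin_cases m <;> simp [φ] at h ⊢
      exacts [cinj h, dc _ _ h.symm, ec _ _ h.symm, fc _ _ h.symm,
        dc _ _ h, dinj h, ed _ _ h.symm, fd _ _ h.symm,
        ec _ _ h, ed _ _ h, einj h, fe _ _ h.symm,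
        fc _ _ h, fd _ _ h, fe _ _ h, finj h])
    (by
      have : ∀ p q : Fin 4 × ZMod 5, ((p.1 = 0 ∧ q.1 = 0 ∧ q.2 = p.2 + 1) ∨
          (p.1 = 0 ∧ q.1 = 1 ∧ q.2 = p.2) ∨
          (p.1 = 1 ∧ q.1 = 2 ∧ q.2 = p.2) ∨
          (p.1 = 2 ∧ q.1 = 1 ∧ q.2 = p.2 + 1) ∨
          (p.1 = 2 ∧ q.1 = 3 ∧ q.2 = p.2) ∨
          (p.1 = 3 ∧ q.1 = 3 ∧ q.2 = p.2 + 1)) → Γ.Adj (φ p) (φ q) := by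
        rintro ⟨l, i⟩ ⟨m, j⟩ h
        rcases h with ⟨h1, h2, h3⟩ | ⟨h1, h2, h3⟩ | ⟨h1, h2, h3⟩ | ⟨h1, h2, h3⟩ | ⟨h1, h2, h3⟩ |
          ⟨h1, h2, h3⟩ <;>
          (dsimp only at h1 h2 h3; subst h1 h2 h3; simp [φ])
        exacts [cadj _, cd _, de _, (de' _).symm, ef _, ff _]
      intro a b h
      rcases h with ⟨-, h | h⟩
      · exact this _ _ h
      · exact (this _ _ h).symm)
  obtain ⟨g'⟩ := dod_iso
  exact ⟨g.symm.trans g'⟩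
end

section
/- Let s ≥ 3 and let Γ be a cubic simple graph of girth s+2 whose automorphism group acts transitively on the set of s-arcs of Γ. Then Γ contains a consistent cycle of length s+2. -/
open SimpleGraph

/-- `x 0, x 1, …, x s` is an `s`-arc of `G`: consecutive vertices are adjacent and
`x i ≠ x (i+2)` whenever both are defined. -/
def IsNArc {V : Type*} (G : SimpleGraph V) (s : ℕ) (x : ℕ → V) : Prop :=
  (∀ i < s, G.Adj (x i) (x (i + 1))) ∧ ∀ i, i + 2 ≤ s → x i ≠ x (i + 2)

/-- The automorphism group of `G` acts transitively on the `s`-arcs of `G`. -/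
def IsNArcTransitive {V : Type*} (G : SimpleGraph V) (s : ℕ) : Prop :=
  ∀ x y : ℕ → V, IsNArc G s x → IsNArc G s y → ∃ φ : G ≃g G, ∀ i ≤ s, φ (x i) = y i
lemma common_nbr_unique_aux {V : Type*} (G : SimpleGraph V) (h : 5 ≤ G.egirth)
    {a b u v : V} (hab : a ≠ b) (hau : G.Adj a u) (hub : G.Adj u b)
    (hav : G.Adj a v) (hvb : G.Adj v b) : u = v := by
  by_contra huv
  have hc : (Walk.cons hau (Walk.cons hub (Walk.cons hvb.symm
      (Walk.cons hav.symm Walk.nil)))).IsCycle := by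
    rw [Walk.cons_isCycle_iff]
    have h1 := hau.ne
    have h2 := hub.ne
    have h3 := hav.ne
    have h4 := hvb.ne
    constructor
    · simp [Walk.cons_isPath_iff]
      grind
    · simp
      grind
  have := le_egirth.mp h _ _ hc
  simp at this
  exact absurd this (by decide)

/-- For `s ≥ 3`, every cubic `s`-arc-transitive graph of girth `s + 2` contains a
consistent cycle of length `s + 2`. -/
theorem sArcTransitive_girth_s_plus_two_hasConsistentCycle
    {V : Type*} (Γ : SimpleGraph V) (s : ℕ) (hs : 3 ≤ s)
    (hcubic : ∀ v : V, (Γ.neighborSet v).ncard = 3)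
    (hgirth : Γ.egirth = (s + 2 : ℕ))
    (htrans : IsNArcTransitive Γ s) :
    HasConsistentCycle Γ (s + 2) := by
  have hna : ¬ Γ.IsAcyclic := by
    rw [← egirth_eq_top, hgirth]
    exact ENat.natCast_ne_top _
  obtain ⟨a, p, hp, hlen⟩ := exists_egirth_eq_length.mpr hna
  have hl : p.length = s + 2 := by
    rw [hgirth] at hlen
    exact_mod_cast hlen.symm
  have h5 : 5 ≤ Γ.egirth := by
    rw [hgirth]
    exact_mod_cast (by omega : 5 ≤ s + 2)
  have inj0 : ∀ i j, i ≤ s + 1 → j ≤ s + 1 → p.getVert i = p.getVert j → i = j := by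
    intro i j hi hj hij
    exact hp.getVert_injOn' (by simp; omega) (by simp; omega) hij
  have inj1 : ∀ i j, 1 ≤ i → 1 ≤ j → i ≤ s + 2 → j ≤ s + 2 →
      p.getVert i = p.getVert j → i = j := by
    intro i j hi hj hi2 hj2 hij
    exact hp.getVert_injOn (by simp; omega) (by simp; omega) hij
  have adj : ∀ i < s + 2, Γ.Adj (p.getVert i) (p.getVert (i + 1)) :=
    fun i hi => p.adj_getVert_succ (by omega)
  have hend : p.getVert (s + 2) = p.getVert 0 := by
    rw [← hl, p.getVert_length, p.getVert_zero]
  obtain ⟨φ, hφ⟩ := htrans (fun i => p.getVert i) (fun i => p.getVert (i + 1))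
    ⟨fun i hi => adj i (by omega), fun i hi h => by
      have := inj0 _ _ (by omega) (by omega) h
      omega⟩
    ⟨fun i hi => adj (i + 1) (by omega), fun i hi h => by
      have := inj1 _ _ (by omega) (by omega) (by omega) (by omega) h
      omega⟩
  have hlast : φ (p.getVert (s + 1)) = p.getVert (s + 2) := by
    apply common_nbr_unique_aux Γ h5 (a := p.getVert (s + 1)) (b := p.getVert 1)
    · intro h
      have := inj0 _ _ (by omega) (by omega) h
      omega
    · have h := φ.map_rel_iff.mpr (adj s (by omega))
      have h2 := hφ s le_rfl
      exact h2 ▸ h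
    · have := hφ 0 (by omega)
      rw [zero_add] at this
      rw [← this, ← hend]
      exact φ.map_rel_iff.mpr (adj (s + 1) (by omega))
    · exact adj (s + 1) (by omega)
    · rw [hend]
      exact adj 0 (by omega)
  have hval : ∀ i : ZMod (s + 2), i.val < s + 2 := fun i => ZMod.val_lt i
  have hsucc : ∀ i : ZMod (s + 2), p.getVert (i + 1).val = p.getVert (i.val + 1) := by
    intro i
    have h1 : (1 : ZMod (s + 2)).val = 1 := ZMod.val_one'' (by omega)
    rw [ZMod.val_add, h1]
    rcases Nat.lt_or_ge (i.val + 1) (s + 2) with h | h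
    · rw [Nat.mod_eq_of_lt h]
    · have : i.val + 1 = s + 2 := by have := hval i; omega
      rw [this, Nat.mod_self, hend]
  refine ⟨fun i => p.getVert i.val, ?_, ?_, φ, ?_⟩
  · intro i j hij
    have := hval i
    have := hval j
    exact ZMod.val_injective _ (inj0 _ _ (by omega) (by omega) hij)
  · intro i
    simp only [hsucc]
    exact adj _ (hval i)
  · intro i
    simp only [hsucc]
    rcases Nat.lt_or_ge i.val (s + 1) with h | h
    · exact hφ _ (by omega)
    · have : i.val = s + 1 := by have := hval i; omega
      rw [this, hlast]
end

section
/- Every cubic simple graph of girth 6 whose automorphism group acts transitively on the set of its 3-arcs contains a consistent cycle of length 6. -/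
open SimpleGraph

/-- a function on `ℕ` with prescribed first four values -/
def arcFour {V : Type*} (a b c d : V) : ℕ → V
  | 0 => a
  | 1 => b
  | 2 => c
  | _ => d

lemma arcFour_isNArc {V : Type*} {G : SimpleGraph V} {a b c d : V}
    (h1 : G.Adj a b) (h2 : G.Adj b c) (h3 : G.Adj c d) (h4 : a ≠ c) (h5 : b ≠ d) :
    IsNArc G 3 (arcFour a b c d) := by
  constructor
  · intro i hi
    interval_cases i <;> simpa [arcFour]
  · intro i hi
    have : i < 2 := by omega
    interval_cases i <;> simpa [arcFour]

lemma move_arc {V : Type*} {G : SimpleGraph V} (ht : IsNArcTransitive G 3)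
    {a b c d a' b' c' d' : V}
    (h1 : G.Adj a b) (h2 : G.Adj b c) (h3 : G.Adj c d) (h4 : a ≠ c) (h5 : b ≠ d)
    (h1' : G.Adj a' b') (h2' : G.Adj b' c') (h3' : G.Adj c' d') (h4' : a' ≠ c') (h5' : b' ≠ d') :
    ∃ φ : G ≃g G, φ a = a' ∧ φ b = b' ∧ φ c = c' ∧ φ d = d' := by
  obtain ⟨φ, h⟩ := ht _ _ (arcFour_isNArc h1 h2 h3 h4 h5) (arcFour_isNArc h1' h2' h3' h4' h5')
  exact ⟨φ, h 0 (by omega), h 1 (by omega), h 2 (by omega), h 3 (by omega)⟩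

/-- the three neighbours of a vertex exhaust its neighbourhood -/
lemma nbr_cases {V : Type*} {G : SimpleGraph V} (hc : ∀ v : V, (G.neighborSet v).ncard = 3)
    {v x y z t : V} (hx : G.Adj v x) (hy : G.Adj v y) (hz : G.Adj v z) (hxy : x ≠ y)
    (hxz : x ≠ z) (hyz : y ≠ z) (ht : G.Adj v t) : t = x ∨ t = y ∨ t = z := by
  have hfin : (G.neighborSet v).Finite := Set.finite_of_ncard_ne_zero (by rw [hc]; norm_num)
  have hsub : ({x, y, z} : Set V) ⊆ G.neighborSet v := by
    rintro w (rfl | rfl | rfl) <;> assumption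
  have h3 : ({x, y, z} : Set V).ncard = 3 := Set.ncard_eq_three.2 ⟨x, y, z, hxy, hxz, hyz, rfl⟩
  have := Set.eq_of_subset_of_ncard_le hsub (by rw [hc, h3]) hfin
  have ht' : t ∈ ({x, y, z} : Set V) := by rw [this]; exact ht
  simpa using ht'

lemma nbr_two {V : Type*} {G : SimpleGraph V} (hc : ∀ v : V, (G.neighborSet v).ncard = 3)
    {v x : V} (hx : G.Adj v x) :
    ∃ y z, G.Adj v y ∧ G.Adj v z ∧ x ≠ y ∧ x ≠ z ∧ y ≠ z := by
  obtain ⟨p, q, r, hpq, hpr, hqr, h⟩ := Set.ncard_eq_three.1 (hc v)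
  have hp : G.Adj v p := by change p ∈ G.neighborSet v; rw [h]; simp
  have hq : G.Adj v q := by change q ∈ G.neighborSet v; rw [h]; simp
  have hr : G.Adj v r := by change r ∈ G.neighborSet v; rw [h]; simp
  rcases nbr_cases hc hp hq hr hpq hpr hqr hx with rfl | rfl | rfl
  · exact ⟨q, r, hq, hr, hpq, hpr, hqr⟩
  · exact ⟨p, r, hp, hr, hpq.symm, hqr, hpr⟩
  · exact ⟨p, q, hp, hq, hpr.symm, hqr.symm, hpq⟩

lemma nbr_third {V : Type*} {G : SimpleGraph V} (hc : ∀ v : V, (G.neighborSet v).ncard = 3)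
    {v x y : V} (hx : G.Adj v x) (hy : G.Adj v y) (hxy : x ≠ y) :
    ∃ z, G.Adj v z ∧ x ≠ z ∧ y ≠ z := by
  obtain ⟨p, q, hp, hq, h1, h2, h3⟩ := nbr_two hc hx
  rcases nbr_cases hc hx hp hq h1 h2 h3 hy with rfl | rfl | rfl
  · exact absurd rfl hxy
  · exact ⟨q, hq, h2, h3⟩
  · exact ⟨p, hp, h1, h3.symm⟩

/-- no 4-cycles -/
lemma no_four {V : Type*} {G : SimpleGraph V} (hg : G.egirth = 6) {p q u w : V}
    (h1 : G.Adj p u) (h2 : G.Adj p w) (h3 : G.Adj q u) (h4 : G.Adj q w) (huw : u ≠ w) : p = q := by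
  by_contra hpq
  let W : G.Walk p p := .cons h1 (.cons h3.symm (.cons h4 (.cons h2.symm .nil)))
  have hW : W.IsCycle := by
    rw [SimpleGraph.Walk.isCycle_def]
    have a1 := h1.ne
    have a2 := h2.ne
    have a3 := h3.ne
    have a4 := h4.ne
    simp only [W, SimpleGraph.Walk.isTrail_def]
    simp
    grind
  have := hW.egirth_le_length
  rw [hg] at this
  simp [W] at this
  exact absurd this (by decide)

lemma six_cycle {V : Type*} {G : SimpleGraph V} (hg : G.egirth = 6) :
    ∃ c : ZMod 6 → V, Function.Injective c ∧ (∀ i, G.Adj (c i) (c (i + 1))) := by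
  have hna : ¬ G.IsAcyclic := by
    rw [← SimpleGraph.egirth_eq_top, hg]; decide
  obtain ⟨a, w, hw, hl⟩ := SimpleGraph.exists_egirth_eq_length.2 hna
  have hl6 : w.length = 6 := by
    rw [hg] at hl; exact_mod_cast hl.symm
  refine ⟨fun i => w.getVert (ZMod.val i), ?_, ?_⟩
  · intro i j hij
    have := hw.getVert_injOn'
    have hi := ZMod.val_lt i
    have hj := ZMod.val_lt j
    exact ZMod.val_injective 6 (this (by simp [hl6]; omega) (by simp [hl6]; omega) hij)
  · intro i
    have hi := ZMod.val_lt i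
    have := w.adj_getVert_succ (i := ZMod.val i) (by omega)
    rcases Nat.lt_or_ge (ZMod.val i) 5 with h | h
    · have : ZMod.val (i + 1) = ZMod.val i + 1 :=
        (by decide : ∀ j : ZMod 6, ZMod.val j < 5 → ZMod.val (j + 1) = ZMod.val j + 1) i h
      simp only [this]; assumption
    · have h5 : ZMod.val i = 5 := by omega
      have h0 : ZMod.val (i + 1) = 0 := 
        (by decide : ∀ j : ZMod 6, ZMod.val j = 5 → ZMod.val (j + 1) = 0) i h5
      simp only [h5, h0] at this ⊢
      have e : w.getVert (5 + 1) = w.getVert 0 := by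
        rw [SimpleGraph.Walk.getVert_zero]
        have := w.getVert_length
        rwa [hl6] at this
      rwa [e] at this

/-- if all 4-arcs close up to hexagons, some automorphism fixes a given 3-arc and moves
an extension of it -/
lemma exists_some_flip {V : Type*} {G : SimpleGraph V}
    (hc : ∀ v : V, (G.neighborSet v).ncard = 3) (hg : G.egirth = 6) (ht : IsNArcTransitive G 3)
    (hcl : ∀ y0 y1 y2 y3 y4, G.Adj y0 y1 → G.Adj y1 y2 → G.Adj y2 y3 → G.Adj y3 y4 →
      y0 ≠ y2 → y1 ≠ y3 → y2 ≠ y4 → ∃ d, G.Adj d y0 ∧ G.Adj d y4) {v a : V} (hva : G.Adj v a) :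
    ∃ (g : G ≃g G) (y0 y1 y2 y3 y4 : V), G.Adj y0 y1 ∧ G.Adj y1 y2 ∧ G.Adj y2 y3 ∧ G.Adj y3 y4 ∧
      y0 ≠ y2 ∧ y1 ≠ y3 ∧ y2 ≠ y4 ∧ g y0 = y0 ∧ g y1 = y1 ∧ g y2 = y2 ∧ g y3 = y3 ∧ g y4 ≠ y4 := by
  obtain ⟨b, c, hvb, hvc, hab, hac, hbc⟩ := nbr_two hc hva
  obtain ⟨a1, a2, ha1, ha2, hv1, hv2, h12⟩ := nbr_two hc hva.symm
  obtain ⟨c1, c2, hc1, hc2, hvc1, hvc2, hc12⟩ := nbr_two hc hvc.symm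
  obtain ⟨g, g1, ga, gv, gb⟩ := move_arc ht ha1.symm hva.symm hvb hv1.symm hab
    ha2.symm hva.symm hvb hv2.symm hab
  have gc : g c = c := by
    have h : G.Adj v (g c) := by rw [← gv]; exact g.map_adj_iff.2 hvc
    rcases nbr_cases hc hva hvb hvc hab hac hbc h with h | h | h
    · exact absurd (g.injective (h.trans ga.symm)) hac.symm
    · exact absurd (g.injective (h.trans gb.symm)) hbc.symm
    · exact h
  have ga1 : g a1 ≠ a1 := by rw [g1]; exact h12.symm
  have key : ∀ b1, G.Adj b b1 → v ≠ b1 → ∀ c1, G.Adj c c1 → v ≠ c1 → g b1 ≠ b1 → g c1 ≠ c1 →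
      ∀ d, G.Adj d a1 → G.Adj d b1 → G.Adj d c1 → False := by
    intro b1 hb1 hvb1 c1 hc1 hvc1 gb1 gc1 d hd1 hd2 hd3
    set b2 := g b1 with hb2
    set c2 := g c1 with hc2
    have hbb2 : G.Adj b b2 := by rw [← gb]; exact g.map_adj_iff.2 hb1
    have hcc2 : G.Adj c c2 := by rw [← gc]; exact g.map_adj_iff.2 hc1
    have hvb2 : v ≠ b2 := fun h => hvb1 (g.injective (gv.trans h))
    have e1 : G.Adj (g d) a2 := by rw [← g1]; exact g.map_adj_iff.2 hd1
    have e2 : G.Adj (g d) b2 := g.map_adj_iff.2 hd2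
    have e3 : G.Adj (g d) c2 := g.map_adj_iff.2 hd3
    obtain ⟨d', k1, k2⟩ := hcl a2 a v c c1 ha2.symm hva.symm hvc hc1 hv2.symm hac hvc1
    obtain ⟨f1, m1, m2⟩ := hcl a2 a v b b1 ha2.symm hva.symm hvb hb1 hv2.symm hab hvb1
    have n1 : a ≠ f1 := by
      rintro rfl
      exact hab (no_four hg hva.symm m2 hvb.symm hb1 hvb1)
    have n2 : a ≠ g d := by
      intro h
      rw [← h] at e2
      exact hab (no_four hg hva.symm e2 hvb.symm hbb2 hvb2)
    have n3 : f1 ≠ g d := by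
      intro h
      rw [h] at m2
      have := no_four hg e2 m2 hbb2 hb1 gb1
      rw [this] at e1
      exact hab (no_four hg hva.symm ha2 hvb.symm e1 hv2)
    rcases nbr_cases hc ha2.symm m1.symm e1.symm n1 n2 n3 k1.symm with h | h | h
    · rw [h] at k2
      exact hac (no_four hg hva.symm k2 hvc.symm hc1 hvc1)
    · rw [h] at k1 k2
      have hbc1 : b1 ≠ c1 := by
        intro h
        rw [← h] at hc1
        exact hbc (no_four hg hvb.symm hb1 hvc.symm hc1 hvb1)
      have := no_four hg m2 k2 hd2 hd3 hbc1
      rw [this] at m1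
      have h' := no_four hg hd1 m1 ha1 ha2 h12
      rw [this] at n1
      exact n1 h'.symm
    · rw [h] at k2
      have h' := no_four hg e3 k2 hcc2 hc1 gc1
      rw [h'] at e1
      exact hac (no_four hg hva.symm ha2 hvc.symm e1 hv2)
  obtain ⟨b1, b2, hb1, hb2, hvb1, hvb2, hb12⟩ := nbr_two hc hvb.symm
  by_cases q1 : g b1 = b1
  · exact ⟨g, b1, b, v, a, a1, hb1.symm, hvb.symm, hva, ha1, hvb1.symm, hab.symm, hv1,
      q1, gb, gv, ga, ga1⟩
  by_cases q2 : g b2 = b2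
  · exact ⟨g, b2, b, v, a, a1, hb2.symm, hvb.symm, hva, ha1, hvb2.symm, hab.symm, hv1,
      q2, gb, gv, ga, ga1⟩
  by_cases q3 : g c1 = c1
  · exact ⟨g, c1, c, v, a, a1, hc1.symm, hvc.symm, hva, ha1, hvc1.symm, hac.symm, hv1,
      q3, gc, gv, ga, ga1⟩
  exfalso
  obtain ⟨d1, k1, k2⟩ := hcl a1 a v b b1 ha1.symm hva.symm hvb hb1 hv1.symm hab hvb1
  obtain ⟨d2, k3, k4⟩ := hcl a1 a v b b2 ha1.symm hva.symm hvb hb2 hv1.symm hab hvb2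
  obtain ⟨d3, k5, k6⟩ := hcl a1 a v c c1 ha1.symm hva.symm hvc hc1 hv1.symm hac hvc1
  have n1 : a ≠ d1 := by
    rintro rfl
    exact hab (no_four hg hva.symm k2 hvb.symm hb1 hvb1)
  have n2 : a ≠ d2 := by
    rintro rfl
    exact hab (no_four hg hva.symm k4 hvb.symm hb2 hvb2)
  have n3 : d1 ≠ d2 := by
    rintro rfl
    have := no_four hg k2 k4 hb1 hb2 hb12
    rw [this] at k1
    exact hab (no_four hg hva.symm ha1 hvb.symm k1 hv1)
  rcases nbr_cases hc ha1.symm k1.symm k3.symm n1 n2 n3 k5.symm with h | h | h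
  · rw [h] at k6
    exact hac (no_four hg hva.symm k6 hvc.symm hc1 hvc1)
  · rw [h] at k6
    exact key b1 hb1 hvb1 c1 hc1 hvc1 q1 q3 d1 k1 k2 k6
  · rw [h] at k6
    exact key b2 hb2 hvb2 c1 hc1 hvc1 q2 q3 d2 k3 k4 k6

/-- Every cubic 3-arc-transitive graph of girth 6 has a consistent 6-cycle. -/
theorem threeArcTransitive_girth_six_hasConsistentCycle
    {V : Type*} (Γ : SimpleGraph V)
    (hcubic : ∀ v : V, (Γ.neighborSet v).ncard = 3)
    (hgirth : Γ.egirth = 6)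
    (htrans : IsNArcTransitive Γ 3) :
    HasConsistentCycle Γ 6 := by
  obtain ⟨c, hinj, hadj⟩ := six_cycle hgirth
  have A0 : Γ.Adj (c 0) (c 1) := hadj 0
  have A1 : Γ.Adj (c 1) (c 2) := hadj 1
  have A2 : Γ.Adj (c 2) (c 3) := hadj 2
  have A3 : Γ.Adj (c 3) (c 4) := hadj 3
  have A4 : Γ.Adj (c 4) (c 5) := hadj 4
  have A5 : Γ.Adj (c 5) (c 0) := hadj 5
  have N : ∀ i j : ZMod 6, i ≠ j → c i ≠ c j := fun i j h h' => h (hinj h')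
  have fin : ∀ ψ : Γ ≃g Γ, ψ (c 0) = c 1 → ψ (c 1) = c 2 → ψ (c 2) = c 3 → ψ (c 3) = c 4 →
      ψ (c 4) = c 5 → HasConsistentCycle Γ 6 := by
    intro ψ p0 p1 p2 p3 p4
    refine ⟨c, hinj, hadj, ψ, ?_⟩
    have p5 : ψ (c 5) = c 0 := by
      have h1 : Γ.Adj (ψ (c 5)) (c 5) := by
        have := ψ.map_adj_iff.2 A4.symm
        rwa [p4] at this
      have h2 : Γ.Adj (ψ (c 5)) (c 1) := by rw [← p0]; exact ψ.map_adj_iff.2 A5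
      exact no_four hgirth h1 h2 A5.symm A0 (N _ _ (by decide))
    intro i
    fin_cases i
    exacts [p0, p1, p2, p3, p4, p5]
  obtain ⟨φ, p0, p1, p2, p3⟩ := move_arc htrans A0 A1 A2 (N 0 2 (by decide)) (N 1 3 (by decide))
    A1 A2 A3 (N 1 3 (by decide)) (N 2 4 (by decide))
  have h4 : Γ.Adj (c 4) (φ (c 4)) := by
    have := φ.map_adj_iff.2 A3
    rwa [p3] at this
  have h43 : c 3 ≠ φ (c 4) := by
    rw [← p2]; exact fun h => N 2 4 (by decide) (φ.injective h)
  by_cases hcl : ∀ y0 y1 y2 y3 y4, Γ.Adj y0 y1 → Γ.Adj y1 y2 → Γ.Adj y2 y3 → Γ.Adj y3 y4 →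
      y0 ≠ y2 → y1 ≠ y3 → y2 ≠ y4 → ∃ d, Γ.Adj d y0 ∧ Γ.Adj d y4
  · by_cases h5 : φ (c 4) = c 5
    · exact fin φ p0 p1 p2 p3 h5
    obtain ⟨g, y0, y1, y2, y3, y4, a0, a1, a2, a3, m0, m1, m2, g0, g1, g2, g3, g4⟩ :=
      exists_some_flip hcubic hgirth htrans hcl A0
    obtain ⟨θ, t0, t1, t2, t3⟩ := move_arc htrans A1 A2 A3 (N 1 3 (by decide)) (N 2 4 (by decide))
      a0 a1 a2 m0 m1
    -- conjugate of `g`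
    let τ : Γ ≃g Γ := (θ.trans g).trans θ.symm
    have hτ : ∀ x, τ x = θ.symm (g (θ x)) := fun x => rfl
    have τ1 : τ (c 1) = c 1 := by rw [hτ, t0, g0, ← t0, θ.symm_apply_apply]
    have τ2 : τ (c 2) = c 2 := by rw [hτ, t1, g1, ← t1, θ.symm_apply_apply]
    have τ3 : τ (c 3) = c 3 := by rw [hτ, t2, g2, ← t2, θ.symm_apply_apply]
    have τ4 : τ (c 4) = c 4 := by rw [hτ, t3, g3, ← t3, θ.symm_apply_apply]
    have τz : τ (θ.symm y4) ≠ θ.symm y4 := by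
      rw [hτ, θ.apply_symm_apply]
      exact fun h => g4 (θ.symm.injective h)
    have c4z : Γ.Adj (c 4) (θ.symm y4) := by
      rw [← θ.map_adj_iff, θ.apply_symm_apply, t3]; exact a3
    have c3z : c 3 ≠ θ.symm y4 := by
      intro h; apply m2; rw [← t2, h, θ.apply_symm_apply]
    have cases4 : ∀ t, Γ.Adj (c 4) t → t = c 3 ∨ t = φ (c 4) ∨ t = c 5 := fun t =>
      nbr_cases hcubic A3.symm h4 A4 h43 (N 3 5 (by decide)) h5
    have hτa : ∀ t, Γ.Adj (c 4) t → Γ.Adj (c 4) (τ t) := by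
      intro t h
      have := τ.map_adj_iff.2 h
      rwa [τ4] at this
    have hfin : τ (φ (c 4)) = c 5 := by
      rcases cases4 _ (hτa _ h4) with h | h | h
      · exact absurd (τ.injective (h.trans τ3.symm)) h43.symm
      · exfalso
        have h55 : τ (c 5) = c 5 := by
          rcases cases4 _ (hτa _ A4) with h' | h' | h'
          · exact absurd (τ.injective (h'.trans τ3.symm)) (N 5 3 (by decide))
          · exact absurd (τ.injective (h'.trans h.symm)) (fun e => h5 e.symm)
          · exact h'
        rcases cases4 _ c4z with e | e | e
        · exact c3z e.symm
        · rw [e] at τz; exact τz h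
        · rw [e] at τz; exact τz h55
      · exact h
    refine fin (φ.trans τ) ?_ ?_ ?_ ?_ ?_
    · change τ (φ (c 0)) = _; rw [p0, τ1]
    · change τ (φ (c 1)) = _; rw [p1, τ2]
    · change τ (φ (c 2)) = _; rw [p2, τ3]
    · change τ (φ (c 3)) = _; rw [p3, τ4]
    · exact hfin
  · push Not at hcl
    obtain ⟨y0, y1, y2, y3, y4, a0, a1, a2, a3, m0, m1, m2, hno⟩ := hcl
    obtain ⟨θ, t0, t1, t2, t3⟩ := move_arc htrans a0 a1 a2 m0 m1
      A1 A2 A3 (N 1 3 (by decide)) (N 2 4 (by decide))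
    have hz : Γ.Adj (c 4) (θ y4) := by rw [← t3]; exact θ.map_adj_iff.2 a3
    have hz3 : c 3 ≠ θ y4 := by rw [← t2]; exact fun h => m2 (θ.injective h)
    have hzno : ∀ d, Γ.Adj d (c 1) → ¬ Γ.Adj d (θ y4) := by
      intro d h1 h2
      refine hno (θ.symm d) ?_ ?_
      · rw [← θ.map_adj_iff, θ.apply_symm_apply, t0]; exact h1
      · rw [← θ.map_adj_iff, θ.apply_symm_apply]; exact h2
    have hz5 : θ y4 ≠ c 5 := by
      intro h; apply hzno (c 0) A0; rw [h]; exact A5.symm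
    rcases nbr_cases hcubic A3.symm hz A4 hz3 (N 3 5 (by decide)) hz5 h4 with h | h | h
    · exact absurd h.symm h43
    · exfalso
      apply hzno (φ (c 5))
      · rw [← p0]; exact φ.map_adj_iff.2 A5
      · rw [← h]; exact φ.map_adj_iff.2 A4.symm
    · exact fin φ p0 p1 p2 p3 h
end

section
/- Let s ≥ 3. Every connected cubic simple graph of girth 6 whose automorphism group acts transitively on the set of its s-arcs is finite; equivalently, there is no infinite connected cubic s-arc-transitive graph of girth 6. -/
open SimpleGraph

namespace GirthSix

variable {V : Type*}

/-- A `3`-arc given by its four vertices. -/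
def A3 (G : SimpleGraph V) (x0 x1 x2 x3 : V) : Prop :=
  G.Adj x0 x1 ∧ G.Adj x1 x2 ∧ G.Adj x2 x3 ∧ x0 ≠ x2 ∧ x1 ≠ x3

/-- `y, z` complete the `3`-arc to a hexagon. -/
def Comp (G : SimpleGraph V) (x0 x1 x2 x3 y z : V) : Prop :=
  G.Adj x3 y ∧ G.Adj y z ∧ G.Adj z x0 ∧ y ≠ x2 ∧ z ≠ x1

def NoFour (G : SimpleGraph V) : Prop :=
  ∀ a b c d, G.Adj a b → G.Adj b c → G.Adj c d → G.Adj d a → a ≠ c → b ≠ d → False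

def Third (G : SimpleGraph V) : Prop :=
  ∀ p x y z u, G.Adj p x → G.Adj p y → G.Adj p z → x ≠ y → x ≠ z → y ≠ z → G.Adj p u →
    u = x ∨ u = y ∨ u = z

def ExThird (G : SimpleGraph V) : Prop :=
  ∀ p x y, G.Adj p x → ∃ z, G.Adj p z ∧ z ≠ x ∧ z ≠ y

lemma third (G : SimpleGraph V) (h : ∀ v : V, (G.neighborSet v).ncard = 3) : Third G := by
  intro p x y z u hx hy hz hxy hxz hyz hu
  have hfin : (G.neighborSet p).Finite := Set.finite_of_ncard_ne_zero (by rw [h]; norm_num)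
  have hsub : ({x, y, z} : Set V) ⊆ G.neighborSet p := by
    rintro t (rfl | rfl | rfl) <;> assumption
  have hc : ({x, y, z} : Set V).ncard = 3 := by
    rw [Set.ncard_eq_three]; exact ⟨x, y, z, hxy, hxz, hyz, rfl⟩
  have heq := Set.eq_of_subset_of_ncard_le hsub (by rw [h, hc]) hfin
  have : u ∈ ({x, y, z} : Set V) := by rw [heq]; exact hu
  simpa using this

lemma exThird (G : SimpleGraph V) (h : ∀ v : V, (G.neighborSet v).ncard = 3) : ExThird G := by
  intro p x y hx
  obtain ⟨a, b, c, hab, hac, hbc, he⟩ := Set.ncard_eq_three.1 (h p)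
  have ha : G.Adj p a := by
    have : a ∈ G.neighborSet p := by rw [he]; simp
    exact this
  have hb : G.Adj p b := by
    have : b ∈ G.neighborSet p := by rw [he]; simp
    exact this
  have hc : G.Adj p c := by
    have : c ∈ G.neighborSet p := by rw [he]; simp
    exact this
  by_contra hcon
  push Not at hcon
  have h1 := hcon a ha
  have h2 := hcon b hb
  have h3 := hcon c hc
  by_cases ha' : a = x <;> by_cases hb' : b = x <;> by_cases hc' : c = x <;> simp_all

lemma climb (G : SimpleGraph V) (hT : Third G)
    (E : ∀ x0 x1 x2 x3, A3 G x0 x1 x2 x3 → ∃ y z, Comp G x0 x1 x2 x3 y z)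
    (d : V → ℕ) (hd : ∀ x y, G.Adj x y → d y ≤ d x + 1) {v a a0 a1 p w : V} (hv : d v = 0)
    (hva : G.Adj v a) (haa0 : G.Adj a a0) (haa1 : G.Adj a a1) (h1 : a1 ≠ v) (h2 : a1 ≠ a0)
    (hp : G.Adj a0 p) (hw : G.Adj p w) (dw : d w = 4) :
    ∃ x, G.Adj a1 x ∧ G.Adj x w ∧ x ≠ p := by
  have da := hd _ _ hva
  have da0 := hd _ _ haa0
  have dp := hd _ _ hp
  have dw' := hd _ _ hw
  obtain ⟨y, z, hy, hyz, hzw, hya, hzp⟩ := E w p a0 a ⟨hw.symm, hp.symm, haa0.symm,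
    by rintro rfl; omega, by rintro rfl; omega⟩
  have dz := hd _ _ hyz
  have dzw := hd _ _ hzw
  rcases hT a v a0 a1 y hva.symm haa0 haa1 (by rintro rfl; omega) h1.symm h2.symm hy with
    rfl | rfl | rfl
  · omega
  · exact absurd rfl hya
  · exact ⟨z, hyz, hzw, hzp⟩

lemma caseOne (G : SimpleGraph V) (hT : Third G) (hE : ExThird G) (h4 : NoFour G)
    (E : ∀ x0 x1 x2 x3, A3 G x0 x1 x2 x3 → ∃ y z, Comp G x0 x1 x2 x3 y z)
    (U : ∀ x0 x1 x2 x3, A3 G x0 x1 x2 x3 → ∀ y z y' z', Comp G x0 x1 x2 x3 y z →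
      Comp G x0 x1 x2 x3 y' z' → y = y' ∧ z = z')
    (d : V → ℕ) (hd : ∀ x y, G.Adj x y → d y ≤ d x + 1)
    {v a a0 p w t u : V} (hv : d v = 0)
    (hva : G.Adj v a) (haa0 : G.Adj a a0) (hp : G.Adj a0 p) (hw : G.Adj p w)
    (ht : G.Adj w t) (hu : G.Adj t u) (du : d u = 6) : False := by
  have e1 := hd _ _ hva
  have e2 := hd _ _ haa0
  have e3 := hd _ _ hp
  have e4 := hd _ _ hw
  have e5 := hd _ _ ht
  have e6 := hd _ _ hu
  obtain ⟨b0, b, hpb0, hb0b, hbv, hb0a0, hba⟩ := E v a a0 p ⟨hva, haa0, hp,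
    by rintro rfl; omega, by rintro rfl; omega⟩
  have f1 := hd _ _ hbv.symm
  have f2 := hd _ _ hb0b.symm
  have f3 := hd _ _ hpb0.symm
  obtain ⟨a1, haa1, ha1v, ha1a0⟩ := hE a v a0 hva.symm
  obtain ⟨b1, hbb1, hb1v, hb1b0⟩ := hE b v b0 hbv
  have g1 := hd _ _ haa1
  have g2 := hd _ _ hbb1
  obtain ⟨x, hax, hxw, hxp⟩ := climb G hT E d hd hv hva haa0 haa1 ha1v ha1a0 hp hw (by omega)
  obtain ⟨x', hbx, hxw', hxp'⟩ := climb G hT E d hd hv hbv.symm hb0b.symm hbb1 hb1v hb1b0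
    hpb0.symm hw (by omega)
  have g3 := hd _ _ hax
  have g4 := hd _ _ hbx
  have g5 := hd _ _ hxw
  have hxx : x = x' := by
    by_contra hne
    rcases hT w p x x' t hw.symm hxw.symm hxw'.symm hxp.symm hxp'.symm hne ht with
      rfl | rfl | rfl <;> omega
  subst hxx
  obtain ⟨y, hy, hya, hyp⟩ := hE a0 a p haa0.symm
  obtain ⟨y2, hy2, hy2b, hy2p⟩ := hE b0 b p hb0b
  have k1 := hd _ _ hy
  have k2 := hd _ _ hy2
  have hz : ∃ z, G.Adj y z ∧ G.Adj z t ∧ z ≠ w := by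
    obtain ⟨y', z, h1, h2, h3, h5, h6⟩ := E t w p a0 ⟨ht.symm, hw.symm, hp.symm,
      by rintro rfl; omega, by rintro rfl; omega⟩
    have := hd _ _ h2
    have := hd _ _ h3
    rcases hT a0 a p y y' haa0.symm hp hy (by rintro rfl; omega) hya.symm hyp.symm h1 with
      rfl | rfl | rfl
    · omega
    · exact absurd rfl h5
    · exact ⟨z, h2, h3, h6⟩
  have hz2 : ∃ z, G.Adj y2 z ∧ G.Adj z t ∧ z ≠ w := by
    obtain ⟨y', z, h1, h2, h3, h5, h6⟩ := E t w p b0 ⟨ht.symm, hw.symm, hpb0,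
      by rintro rfl; omega, by rintro rfl; omega⟩
    have := hd _ _ h2
    have := hd _ _ h3
    rcases hT b0 b p y2 y' hb0b hpb0.symm hy2 (by rintro rfl; omega) hy2b.symm hy2p.symm h1 with
      rfl | rfl | rfl
    · omega
    · exact absurd rfl h5
    · exact ⟨z, h2, h3, h6⟩
  obtain ⟨z, hyz, hzt, hzw⟩ := hz
  obtain ⟨z2, hyz2, hzt2, hzw2⟩ := hz2
  have k3 := hd _ _ hyz
  have k4 := hd _ _ hyz2
  have k5 := hd _ _ hzt
  have hzz : z = z2 := by
    by_contra hne
    rcases hT t w z z2 u ht.symm hzt.symm hzt2.symm hzw.symm hzw2.symm hne hu with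
      rfl | rfl | rfl <;> omega
  subst hzz
  have hyy : y ≠ y2 := by
    rintro rfl
    exact h4 a0 p b0 y hp hpb0 hy2 hy.symm hb0a0.symm hyp.symm
  obtain ⟨g, hag, hgz, hgy⟩ := climb G hT E d hd hv hva haa0 haa1 ha1v ha1a0 hy hyz (by omega)
  have k6 := hd _ _ hag
  rcases hT z y y2 t g hyz.symm hyz2.symm hzt hyy (by rintro rfl; omega) (by rintro rfl; omega)
    hgz.symm with rfl | rfl | rfl
  · exact hgy rfl
  · have := (U a1 a v b ⟨haa1.symm, hva.symm, hbv.symm, ha1v, hba.symm⟩ b1 x b0 g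
      ⟨hbb1, hbx, hax.symm, hb1v, by rintro rfl; omega⟩
      ⟨hb0b.symm, hy2, hag.symm, by rintro rfl; omega, by rintro rfl; omega⟩).1
    exact hb1b0 this
  · omega

lemma caseTwo (G : SimpleGraph V) (hT : Third G) (h4 : NoFour G)
    (E : ∀ x0 x1 x2 x3, A3 G x0 x1 x2 x3 → ∃ y z y' z', Comp G x0 x1 x2 x3 y z ∧
      Comp G x0 x1 x2 x3 y' z' ∧ ¬ (y = y' ∧ z = z'))
    (d : V → ℕ) (hd : ∀ x y, G.Adj x y → d y ≤ d x + 1)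
    {v a a0 p u : V} (hv : d v = 0)
    (hva : G.Adj v a) (haa0 : G.Adj a a0) (hp : G.Adj a0 p) (hu : G.Adj p u)
    (du : d u = 4) : False := by
  have e1 := hd _ _ hva
  have e2 := hd _ _ haa0
  have e3 := hd _ _ hp
  have e4 := hd _ _ hu
  obtain ⟨y, z, y', z', ⟨h1, h2, h3, h5, h6⟩, ⟨k1, k2, k3, k5, k6⟩, hne⟩ :=
    E v a a0 p ⟨hva, haa0, hp, by rintro rfl; omega, by rintro rfl; omega⟩
  have f1 := hd _ _ h3.symm
  have f2 := hd _ _ h2.symm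
  have f3 := hd _ _ k3.symm
  have f4 := hd _ _ k2.symm
  have f5 := hd _ _ h1.symm
  have hyy : y ≠ y' := by
    rintro rfl
    exact h4 y z v z' h2 h3 k3.symm k2.symm (by rintro rfl; omega) (fun h => hne ⟨rfl, h⟩)
  rcases hT p a0 y y' u hp.symm h1 k1 h5.symm k5.symm hyy hu with rfl | rfl | rfl <;> omega

lemma noFour (G : SimpleGraph V) (h : G.egirth = 6) : NoFour G := by
  intro a b c d hab hbc hcd hda hac hbd
  have hcyc : (Walk.cons hab (Walk.cons hbc (Walk.cons hcd (Walk.cons hda Walk.nil)))).IsCycle := by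
    have := hab.ne
    have := hbc.ne
    have := hcd.ne
    have := hda.ne
    rw [Walk.cons_isCycle_iff]
    constructor
    · simp [Walk.cons_isPath_iff]; grind
    · simp; grind
  have := egirth_le_length hcyc
  rw [h] at this
  simp at this
  norm_cast at this

lemma exHex (G : SimpleGraph V) (h : G.egirth = 6) :
    ∃ x0 x1 x2 x3 y z, A3 G x0 x1 x2 x3 ∧ Comp G x0 x1 x2 x3 y z := by
  have hna : ¬ G.IsAcyclic := by
    rw [← egirth_eq_top, h]; simp
  obtain ⟨a, w, hw, hl⟩ := exists_egirth_eq_length.2 hna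
  have hlen : w.length = 6 := by
    rw [h] at hl; exact_mod_cast hl.symm
  have adj : ∀ i < 6, G.Adj (w.getVert i) (w.getVert (i+1)) := fun i hi =>
    w.adj_getVert_succ (by omega)
  have h6 : w.getVert 6 = w.getVert 0 := by
    rw [← hlen, Walk.getVert_length, Walk.getVert_zero]
  have inj := hw.getVert_injOn'
  have ne : ∀ i j, i ≤ 5 → j ≤ 5 → i ≠ j → w.getVert i ≠ w.getVert j := fun i j hi hj hij he =>
    hij (inj (by simp; omega) (by simp; omega) he)
  exact ⟨w.getVert 0, w.getVert 1, w.getVert 2, w.getVert 3, w.getVert 4, w.getVert 5,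
    ⟨adj 0 (by omega), adj 1 (by omega), adj 2 (by omega), ne _ _ (by omega) (by omega) (by omega),
      ne _ _ (by omega) (by omega) (by omega)⟩,
    ⟨adj 3 (by omega), adj 4 (by omega), h6 ▸ adj 5 (by omega),
      ne _ _ (by omega) (by omega) (by omega), ne _ _ (by omega) (by omega) (by omega)⟩⟩

lemma extend (G : SimpleGraph V) (hE : ExThird G) {x0 x1 x2 x3 : V} (h : A3 G x0 x1 x2 x3)
    (s : ℕ) (hs : 3 ≤ s) :
    ∃ x : ℕ → V, IsNArc G s x ∧ x 0 = x0 ∧ x 1 = x1 ∧ x 2 = x2 ∧ x 3 = x3 := by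
  induction s, hs using Nat.le_induction with
  | base =>
    obtain ⟨h1, h2, h3, h5, h6⟩ := h
    refine ⟨fun i => if i = 0 then x0 else if i = 1 then x1 else if i = 2 then x2 else x3,
      ⟨?_, ?_⟩, ?_⟩
    · intro i hi
      interval_cases i <;> simpa
    · intro i hi
      have : i < 2 := by omega
      interval_cases i <;> simpa
    · simp
  | succ n hn ih =>
    obtain ⟨x, ⟨hx1, hx2⟩, h0, h1, h2, h3⟩ := ih
    have hadj := hx1 (n-1) (by omega)
    rw [show n - 1 + 1 = n by omega] at hadj
    obtain ⟨z, hz, hzn, -⟩ := hE (x n) (x (n-1)) (x (n-1)) hadj.symm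
    refine ⟨fun i => if i ≤ n then x i else z, ⟨?_, ?_⟩, ?_⟩
    · intro i hi
      rcases Nat.lt_or_ge i n with hlt | hge
      · have h1 : i ≤ n := by omega
        have h2 : i + 1 ≤ n := by omega
        simpa [h1, h2] using hx1 i hlt
      · have : i = n := by omega
        subst this
        simpa using hz
    · intro i hi
      rcases Nat.lt_or_ge (i+1) n with hlt | hge
      · have h1 : i ≤ n := by omega
        have h2 : i + 2 ≤ n := by omega
        simpa [h1, h2] using hx2 i h2
      · have : i = n - 1 := by omega
        subst this
        have h2 : ¬ (n - 1 + 2 ≤ n) := by omega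
        simpa [h2] using hzn.symm
    · have e0 : 0 ≤ n := by omega
      have e1 : 1 ≤ n := by omega
      have e2 : 2 ≤ n := by omega
      simp [e1, e2, hn, h0, h1, h2, h3]

lemma trans3 (G : SimpleGraph V) (hE : ExThird G) (s : ℕ) (hs : 3 ≤ s) (ht : IsNArcTransitive G s)
    {x0 x1 x2 x3 y0 y1 y2 y3 : V} (hx : A3 G x0 x1 x2 x3) (hy : A3 G y0 y1 y2 y3) :
    ∃ φ : G ≃g G, φ x0 = y0 ∧ φ x1 = y1 ∧ φ x2 = y2 ∧ φ x3 = y3 := by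
  obtain ⟨x, hxa, rfl, rfl, rfl, rfl⟩ := extend G hE hx s hs
  obtain ⟨y, hya, rfl, rfl, rfl, rfl⟩ := extend G hE hy s hs
  obtain ⟨φ, hφ⟩ := ht x y hxa hya
  exact ⟨φ, hφ 0 (by omega), hφ 1 (by omega), hφ 2 (by omega), hφ 3 (by omega)⟩

lemma Comp.map {G : SimpleGraph V} (φ : G ≃g G) {x0 x1 x2 x3 y z : V}
    (h : Comp G x0 x1 x2 x3 y z) : Comp G (φ x0) (φ x1) (φ x2) (φ x3) (φ y) (φ z) := by
  obtain ⟨h1, h2, h3, h5, h6⟩ := h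
  exact ⟨φ.map_adj_iff.2 h1, φ.map_adj_iff.2 h2, φ.map_adj_iff.2 h3,
    fun h => h5 (φ.injective h), fun h => h6 (φ.injective h)⟩

lemma down (G : SimpleGraph V) (hc : G.Connected) (v u : V) (n : ℕ) (h : G.dist v u = n + 1) :
    ∃ t, G.Adj t u ∧ G.dist v t = n := by
  obtain ⟨w, hw⟩ := (hc v u).exists_walk_length_eq_dist
  have hadj := w.adj_getVert_succ (i := n) (by omega)
  have hl : w.getVert (n+1) = u := by
    rw [← h, ← hw, Walk.getVert_length]
  rw [hl] at hadj
  refine ⟨_, hadj, ?_⟩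
  have h1 : G.dist v (w.getVert n) ≤ n := by
    refine (dist_le (w.take n)).trans ?_
    simp
  have h2 := hc.dist_triangle (u := v) (v := w.getVert n) (w := u)
  have h3 : G.dist (w.getVert n) u = 1 := dist_eq_one_iff_adj.2 hadj
  omega

lemma finite_of_bound (G : SimpleGraph V) (hc : G.Connected)
    (h : ∀ v : V, (G.neighborSet v).ncard = 3) (v : V) (hb : ∀ u, G.dist v u ≠ 6) : Finite V := by
  have hball : ∀ n, {x | G.dist v x ≤ n}.Finite := by
    intro n
    induction n with
    | zero =>
      refine (Set.finite_singleton v).subset ?_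
      intro x hx
      have : G.dist v x = 0 := by simpa using hx
      exact (hc.dist_eq_zero_iff.1 this).symm
    | succ n ih =>
      refine (ih.union (ih.biUnion (t := fun x => G.neighborSet x) fun x _ =>
        Set.finite_of_ncard_ne_zero (by rw [h]; norm_num))).subset ?_
      intro x hx
      rcases Nat.lt_or_ge (G.dist v x) (n+1) with hlt | hge
      · left; exact Nat.lt_succ_iff.1 hlt
      · right
        obtain ⟨t, ht, hd⟩ := down G hc v x n (le_antisymm hx hge)
        simp only [Set.mem_iUnion]
        exact ⟨t, hd.le, ht⟩
  have hall : ∀ n u, G.dist v u ≠ n + 6 := by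
    intro n
    induction n with
    | zero => simpa using hb
    | succ n ih =>
      intro u hu
      obtain ⟨t, -, ht⟩ := down G hc v u (n+6) (by omega)
      exact ih t ht
  refine Set.finite_univ_iff.1 ((hball 6).subset fun x _ => ?_)
  by_contra hx
  have : ¬ G.dist v x ≤ 6 := hx
  exact hall (G.dist v x - 6) x (by omega)

end GirthSix

open GirthSix in
/-- For `s ≥ 3`, every connected cubic `s`-arc-transitive graph of girth 6 is finite;
equivalently, there is no infinite connected cubic `s`-arc-transitive graph of girth 6. -/
theorem finite_of_sArcTransitive_girth_six
    {V : Type*} (Γ : SimpleGraph V) (s : ℕ) (hs : 3 ≤ s)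
    (hconn : Γ.Connected)
    (hcubic : ∀ v : V, (Γ.neighborSet v).ncard = 3)
    (hgirth : Γ.egirth = 6)
    (htrans : IsNArcTransitive Γ s) :
    Finite V := by
  have hT := third Γ hcubic
  have hE := exThird Γ hcubic
  have h4 := noFour Γ hgirth
  obtain ⟨c0, c1, c2, c3, c4, c5, hc, hcc⟩ := exHex Γ hgirth
  have E : ∀ x0 x1 x2 x3, A3 Γ x0 x1 x2 x3 → ∃ y z, Comp Γ x0 x1 x2 x3 y z := by
    intro x0 x1 x2 x3 hx
    obtain ⟨φ, rfl, rfl, rfl, rfl⟩ := trans3 Γ hE s hs htrans hc hx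
    exact ⟨_, _, hcc.map φ⟩
  have hd : ∀ x y, Γ.Adj x y → Γ.dist c0 y ≤ Γ.dist c0 x + 1 := by
    intro x y hxy
    have h2 := hconn.dist_triangle (u := c0) (v := x) (w := y)
    rwa [dist_eq_one_iff_adj.2 hxy] at h2
  refine finite_of_bound Γ hconn hcubic c0 fun u hu => ?_
  obtain ⟨t, htu, ht⟩ := down Γ hconn c0 u 5 hu
  obtain ⟨w, hwt, hw⟩ := down Γ hconn c0 t 4 ht
  obtain ⟨p, hpw, hp⟩ := down Γ hconn c0 w 3 hw
  obtain ⟨a0, ha0p, ha0⟩ := down Γ hconn c0 p 2 hp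
  obtain ⟨a, haa0, ha⟩ := down Γ hconn c0 a0 1 ha0
  have hva : Γ.Adj c0 a := dist_eq_one_iff_adj.1 ha
  by_cases U : ∀ x0 x1 x2 x3, A3 Γ x0 x1 x2 x3 → ∀ y z y' z', Comp Γ x0 x1 x2 x3 y z →
      Comp Γ x0 x1 x2 x3 y' z' → y = y' ∧ z = z'
  · exact caseOne Γ hT hE h4 E U (Γ.dist c0) hd (by simp) hva haa0 ha0p hpw hwt htu hu
  · simp only [not_forall] at U
    obtain ⟨q0, q1, q2, q3, hq, y, z, y', z', h1, h2, hne⟩ := U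
    refine caseTwo Γ hT h4 ?_ (Γ.dist c0) hd (by simp) hva haa0 ha0p hpw hw
    intro x0 x1 x2 x3 hx
    obtain ⟨φ, rfl, rfl, rfl, rfl⟩ := trans3 Γ hE s hs htrans hq hx
    exact ⟨_, _, _, _, h1.map φ, h2.map φ,
      fun h => hne ⟨φ.injective h.1, φ.injective h.2⟩⟩
end

section
/- No connected cubic simple graph of girth 6 is 5-arc-regular; that is, every connected cubic arc-transitive graph of girth 6 is s-arc-regular for some s ≤ 4. -/
open SimpleGraph

/-- `G` is `s`-arc-regular: its automorphism group acts transitively on `s`-arcs and the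
only automorphism fixing an `s`-arc pointwise is the identity. -/
def IsNArcRegular {V : Type*} (G : SimpleGraph V) (s : ℕ) : Prop :=
  IsNArcTransitive G s ∧
    ∀ (φ : G ≃g G) (x : ℕ → V), IsNArc G s x → (∀ i ≤ s, φ (x i) = x i) → ∀ v, φ v = v

/-- A vertex of a cubic graph has a neighbor avoiding two given vertices. -/
lemma exists_third {V : Type*} (G : SimpleGraph V) (hc : ∀ v : V, (G.neighborSet v).ncard = 3)
    (v a b : V) : ∃ w, G.Adj v w ∧ w ≠ a ∧ w ≠ b := by
  have h : ({a, b} : Set V).ncard < (G.neighborSet v).ncard := by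
    rw [hc v]
    have := Set.ncard_insert_le a ({b} : Set V)
    rw [Set.ncard_singleton] at this
    omega
  obtain ⟨w, hw, hn⟩ := Set.exists_mem_notMem_of_ncard_lt_ncard h
  simp only [Set.mem_insert_iff, Set.mem_singleton_iff, not_or] at hn
  exact ⟨w, hw, hn.1, hn.2⟩

/-- A vertex of a cubic graph has no more than two neighbors besides a given one. -/
lemma only_two {V : Type*} (G : SimpleGraph V) (hc : ∀ v : V, (G.neighborSet v).ncard = 3)
    (v p a b c : V) (hp : G.Adj v p) (ha : G.Adj v a) (hb : G.Adj v b) (hcc : G.Adj v c)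
    (hap : a ≠ p) (hbp : b ≠ p) (hcp : c ≠ p) (hab : a ≠ b) : c = a ∨ c = b := by
  by_contra! hcon
  have hfin : (G.neighborSet v).Finite := Set.finite_of_ncard_pos (by rw [hc v]; omega)
  have hsub : ({p, a, b, c} : Set V) ⊆ G.neighborSet v := by
    intro x hx
    simp only [Set.mem_insert_iff, Set.mem_singleton_iff] at hx
    rcases hx with rfl | rfl | rfl | rfl <;> assumption
  have h1 := Set.ncard_le_ncard hsub hfin
  have h2 : ({p, a, b, c} : Set V).ncard = 4 := by
    rw [Set.ncard_insert_of_notMem, Set.ncard_insert_of_notMem, Set.ncard_pair hcon.2.symm]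
    · simp only [Set.mem_insert_iff, Set.mem_singleton_iff, not_or]
      exact ⟨hab, hcon.1.symm⟩
    · simp only [Set.mem_insert_iff, Set.mem_singleton_iff, not_or]
      exact ⟨hap.symm, hbp.symm, hcp.symm⟩
  rw [hc v] at h1
  omega

lemma not_fiveArcTransitive {V : Type*} (G : SimpleGraph V)
    (hc : ∀ v : V, (G.neighborSet v).ncard = 3) (hg : G.egirth = 6) :
    ¬ IsNArcTransitive G 5 := by
  intro ht
  have hna : ¬ G.IsAcyclic := by
    intro h
    rw [egirth_eq_top.2 h] at hg
    exact absurd hg (by decide)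
  obtain ⟨a, w, hw, hl⟩ := exists_egirth_eq_length.2 hna
  rw [hg] at hl
  have hl6 : w.length = 6 := by exact_mod_cast hl.symm
  have hinj := hw.getVert_injOn'
  rw [hl6] at hinj
  have hne : ∀ i j, i ≤ 5 → j ≤ 5 → i ≠ j → w.getVert i ≠ w.getVert j := by
    intro i j hi hj hij h
    exact hij (hinj (by simpa using hi) (by simpa using hj) h)
  have hadj : ∀ i < 6, G.Adj (w.getVert i) (w.getVert (i + 1)) := fun i hi =>
    w.adj_getVert_succ (by omega)
  have h50 : G.Adj (w.getVert 5) (w.getVert 0) := by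
    have := hadj 5 (by omega)
    have h6 : w.getVert 6 = a := by rw [← hl6]; exact w.getVert_length
    simpa [h6] using this
  obtain ⟨z, hz, hz3, hz5⟩ := exists_third G hc (w.getVert 4) (w.getVert 3) (w.getVert 5)
  obtain ⟨φ, hφ⟩ := ht w.getVert (fun i => if i = 5 then z else w.getVert i)
    ⟨fun i hi => hadj i (by omega), fun i hi => hne _ _ (by omega) (by omega) (by omega)⟩ (by
      constructor
      · intro i hi
        by_cases h4 : i = 4
        · subst h4; simpa using hz
        · have : i ≠ 5 := by omega
          have : i + 1 ≠ 5 := by omega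
          simp only [*, if_false]
          exact hadj i (by omega)
      · intro i hi
        by_cases h3 : i = 3
        · subst h3; simpa using hz3.symm
        · have : i ≠ 5 := by omega
          have : i + 2 ≠ 5 := by omega
          simp only [*, if_false]
          exact hne _ _ (by omega) (by omega) (by omega))
  have h0 : φ (w.getVert 0) = w.getVert 0 := by have := hφ 0 (by omega); simpa using this
  have h5 : φ (w.getVert 5) = z := by have := hφ 5 (by omega); simpa using this
  have hz0 : G.Adj z (w.getVert 0) := by
    rw [← h5, ← h0]; exact φ.map_rel_iff.2 h50
  have h45 := hadj 4 (by omega)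
  have h04 := hne 0 4 (by omega) (by omega) (by omega)
  generalize w.getVert 0 = x0 at *
  generalize w.getVert 4 = x4 at *
  generalize w.getVert (4 + 1) = x5 at *
  have hcyc : (Walk.cons h50.symm (Walk.cons h45.symm (Walk.cons hz (Walk.cons hz0 Walk.nil)))
      ).IsCycle := by
    rw [Walk.cons_isCycle_iff]
    have := h50.ne
    have := h45.ne
    have := hz.ne
    have := hz0.ne
    constructor
    · simp [Walk.isPath_def]
      grind
    · simp
      grind
  have := le_egirth.1 hg.ge _ _ hcyc
  simp only [Walk.length_cons, Walk.length_nil] at this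
  exact absurd this (by decide)

lemma regular_of_not_succ {V : Type*} (G : SimpleGraph V) (hconn : G.Connected)
    (hc : ∀ v : V, (G.neighborSet v).ncard = 3) (s : ℕ)
    (ht : IsNArcTransitive G (s + 1)) (hn : ¬ IsNArcTransitive G (s + 2)) :
    IsNArcRegular G (s + 1) := by
  -- automorphisms fixing an arc fix its successors
  have key : ∀ (φ : G ≃g G) (x : ℕ → V), IsNArc G (s + 2) x → (∀ i ≤ s + 1, φ (x i) = x i) →
      φ (x (s + 2)) = x (s + 2) := by
    intro φ x hx hfix
    by_contra hmove
    apply hn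
    intro y z hy hz
    have hy' : IsNArc G (s + 1) y := ⟨fun i hi => hy.1 i (by omega), fun i hi => hy.2 i (by omega)⟩
    have hz' : IsNArc G (s + 1) z := ⟨fun i hi => hz.1 i (by omega), fun i hi => hz.2 i (by omega)⟩
    have hx' : IsNArc G (s + 1) x := ⟨fun i hi => hx.1 i (by omega), fun i hi => hx.2 i (by omega)⟩
    obtain ⟨α, hα⟩ := ht y x hy' hx'
    obtain ⟨β, hβ⟩ := ht x z hx' hz'
    have adjm : ∀ (ψ : G ≃g G) {u v : V}, G.Adj u v → G.Adj (ψ u) (ψ v) :=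
      fun ψ _ _ h => ψ.map_rel_iff.2 h
    have a1 : G.Adj (x (s + 1)) (x (s + 2)) := hx.1 (s + 1) (by omega)
    have a2 : G.Adj (x (s + 1)) (φ (x (s + 2))) := by
      have := adjm φ a1
      rwa [hfix (s + 1) le_rfl] at this
    have a3 : G.Adj (x (s + 1)) (α (y (s + 2))) := by
      have := adjm α (hy.1 (s + 1) (by omega))
      rwa [hα (s + 1) le_rfl] at this
    have a4 : G.Adj (x (s + 1)) (β.symm (z (s + 2))) := by
      have := adjm β.symm (hz.1 (s + 1) (by omega))
      rwa [← hβ (s + 1) le_rfl, RelIso.symm_apply_apply] at this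
    have n1 : x (s + 2) ≠ x s := (hx.2 s le_rfl).symm
    have n2 : φ (x (s + 2)) ≠ x s := by
      intro h
      rw [← hfix s (by omega)] at h
      exact n1 (φ.injective h)
    have n3 : α (y (s + 2)) ≠ x s := by
      intro h
      rw [← hα s (by omega)] at h
      exact hy.2 s le_rfl (α.injective h).symm
    have n4 : β.symm (z (s + 2)) ≠ x s := by
      intro h
      have h' := congrArg β h
      rw [RelIso.apply_symm_apply, hβ s (by omega)] at h'
      exact hz.2 s le_rfl h'.symm
    have a0 : G.Adj (x (s + 1)) (x s) := (hx.1 s (by omega)).symm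
    have c3 := only_two G hc _ _ _ _ _ a0 a1 a2 a3 n1 n2 n3 (Ne.symm hmove)
    have c4 := only_two G hc _ _ _ _ _ a0 a1 a2 a4 n1 n2 n4 (Ne.symm hmove)
    -- some automorphism fixing `x` maps the first successor to the second
    have hγ : ∃ γ : G ≃g G, (∀ i ≤ s + 1, γ (x i) = x i) ∧
        γ (α (y (s + 2))) = β.symm (z (s + 2)) := by
      rcases c3 with c3 | c3 <;> rcases c4 with c4 | c4 <;> rw [c3, c4]
      · exact ⟨RelIso.refl _, fun i _ => rfl, rfl⟩
      · exact ⟨φ, hfix, rfl⟩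
      · exact ⟨φ.symm, fun i hi => by
          rw [RelIso.symm_apply_eq]; exact (hfix i hi).symm, RelIso.symm_apply_apply φ _⟩
      · exact ⟨RelIso.refl _, fun i _ => rfl, rfl⟩
    obtain ⟨γ, hγ1, hγ2⟩ := hγ
    refine ⟨(α.trans γ).trans β, fun i hi => ?_⟩
    change β (γ (α (y i))) = z i
    rcases Nat.lt_or_ge i (s + 2) with hlt | hge
    · rw [hα i (by omega), hγ1 i (by omega), hβ i (by omega)]
    · obtain rfl : i = s + 2 := by omega
      rw [hγ2, RelIso.apply_symm_apply]
  refine ⟨ht, fun φ x hx hfix => ?_⟩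
  -- every vertex is the end of a fixed arc
  let P : V → Prop := fun v => ∃ y, IsNArc G (s + 1) y ∧ (∀ i ≤ s + 1, φ (y i) = y i) ∧
    y (s + 1) = v
  have hstep : ∀ u v, G.Adj u v → P u → P v := by
    rintro u v huv ⟨y, hy, hf, rfl⟩
    by_cases hv : v = y s
    · -- shift backwards
      subst hv
      obtain ⟨p, hp, hp1, -⟩ := exists_third G hc (y 0) (y 1) (y 1)
      have hrev : IsNArc G (s + 2) (fun i => if i = s + 2 then p else y (s + 1 - i)) := by
        constructor
        · intro i hi
          by_cases h : i = s + 1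
          · subst h; simpa using hp
          · have e1 : i ≠ s + 2 := by omega
            have e2 : i + 1 ≠ s + 2 := by omega
            simp only [e1, e2, if_false]
            have := hy.1 (s + 1 - (i + 1)) (by omega)
            rw [show s + 1 - (i + 1) + 1 = s + 1 - i by omega] at this
            exact this.symm
        · intro i hi
          by_cases h : i = s
          · subst h; simpa using hp1.symm
          · have e1 : i ≠ s + 2 := by omega
            have e2 : i + 2 ≠ s + 2 := by omega
            simp only [e1, e2, if_false]
            have := hy.2 (s + 1 - (i + 2)) (by omega)
            rw [show s + 1 - (i + 2) + 2 = s + 1 - i by omega] at this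
            exact this.symm
      have hpf := key φ _ hrev (fun i hi => by
        have e1 : i ≠ s + 2 := by omega
        simp only [e1, if_false]
        exact hf _ (by omega))
      simp only [if_true] at hpf
      refine ⟨fun i => if i = 0 then p else y (i - 1), ⟨?_, ?_⟩, ?_, by simp⟩
      · intro i hi
        rcases i with _ | i
        · simpa using hp.symm
        · simpa using hy.1 i (by omega)
      · intro i hi
        rcases i with _ | i
        · simpa using hp1
        · simpa using hy.2 i (by omega)
      · intro i hi
        rcases i with _ | i
        · simpa using hpf
        · simpa using hf i (by omega)
    · -- shift forwards
      have hext : IsNArc G (s + 2) (fun i => if i = s + 2 then v else y i) := by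
        constructor
        · intro i hi
          by_cases h : i = s + 1
          · subst h; simpa using huv
          · have e1 : i ≠ s + 2 := by omega
            have e2 : i + 1 ≠ s + 2 := by omega
            simp only [e1, e2, if_false]
            exact hy.1 i (by omega)
        · intro i hi
          by_cases h : i = s
          · subst h; simpa using Ne.symm hv
          · have e1 : i ≠ s + 2 := by omega
            have e2 : i + 2 ≠ s + 2 := by omega
            simp only [e1, e2, if_false]
            exact hy.2 i (by omega)
      have hff : ∀ i ≤ s + 1, φ ((fun i => if i = s + 2 then v else y i) i) =
          (fun i => if i = s + 2 then v else y i) i := by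
        intro i hi
        have e1 : i ≠ s + 2 := by omega
        simp only [e1, if_false]
        exact hf _ hi
      have hvf := key φ _ hext hff
      refine ⟨fun i => (fun i => if i = s + 2 then v else y i) (i + 1), ⟨?_, ?_⟩, ?_, by simp⟩
      · intro i hi
        exact hext.1 (i + 1) (by omega)
      · intro i hi
        exact hext.2 (i + 1) (by omega)
      · intro i hi
        rcases Nat.lt_or_ge i (s + 1) with hlt | hge
        · exact hff (i + 1) (by omega)
        · obtain rfl : i = s + 1 := by omega
          exact hvf
  intro v
  obtain ⟨w⟩ := hconn.preconnected (x (s + 1)) v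
  have hwalk : ∀ (a b : V), G.Walk a b → P a → P b := by
    intro a b w
    induction w with
    | nil => exact id
    | cons h _ ih => exact fun ha => ih (hstep _ _ h ha)
  obtain ⟨y, -, hf, rfl⟩ := hwalk _ _ w ⟨x, hx, hfix, rfl⟩
  exact hf _ le_rfl

/-- No connected cubic graph of girth 6 is 5-arc-regular; that is, every connected cubic
arc-transitive graph of girth 6 is `s`-arc-regular for some `s ≤ 4`. -/
theorem not_fiveArcRegular_girth_six
    {V : Type*} (Γ : SimpleGraph V)
    (hconn : Γ.Connected)
    (hcubic : ∀ v : V, (Γ.neighborSet v).ncard = 3)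
    (hgirth : Γ.egirth = 6) :
    ¬ IsNArcRegular Γ 5 ∧ (IsNArcTransitive Γ 1 → ∃ s ≤ 4, IsNArcRegular Γ s) := by
  have h5 := not_fiveArcTransitive Γ hcubic hgirth
  refine ⟨fun h => h5 h.1, fun h1 => ?_⟩
  by_cases h2 : IsNArcTransitive Γ 2
  · by_cases h3 : IsNArcTransitive Γ 3
    · by_cases h4 : IsNArcTransitive Γ 4
      · exact ⟨4, by omega, regular_of_not_succ Γ hconn hcubic 3 h4 h5⟩
      · exact ⟨3, by omega, regular_of_not_succ Γ hconn hcubic 2 h3 h4⟩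
    · exact ⟨2, by omega, regular_of_not_succ Γ hconn hcubic 1 h2 h3⟩
  · exact ⟨1, by omega, regular_of_not_succ Γ hconn hcubic 0 h1 h2⟩
end

section
/- Let Γ be a connected cubic simple graph of girth 6 that is 4-arc-regular. Then Γ is isomorphic to the Heawood graph, and the distinguishing cost of Γ equals 5. -/
open SimpleGraph

/-- A set of vertices is distinguishing if the identity is the only automorphism of `G`
mapping it onto itself setwise. -/
def IsDistinguishing {V : Type*} (G : SimpleGraph V) (S : Set V) : Prop :=
  ∀ φ : G ≃g G, (⇑φ) '' S = S → ∀ v, φ v = v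
/-- The Heawood graph: the point–line incidence graph of the Fano plane PG(2,2), whose
points (resp. lines) are the nonzero vectors of `(ZMod 2)³`, the point `p` lying on the
line `l` iff `p · l = 0`. -/
def heawoodGraph : SimpleGraph (Bool × {v : Fin 3 → ZMod 2 // v ≠ 0}) :=
  SimpleGraph.fromRel (fun p l =>
    p.1 = false ∧ l.1 = true ∧ ∑ i, p.2.1 i * l.2.1 i = 0)


namespace HW

/-- Bit masks of the neighbourhoods of the labelled Heawood graph. -/
def mask : List ℕ := [14, 49, 193, 769, 3074, 12290, 5124, 10244, 9224, 6152, 336, 656, 608, 416]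

/-- Adjacency of the labelled Heawood graph. -/
def adjB (x y : Fin 14) : Bool := (mask.getD x 0).testBit y

/-- The labelled Heawood graph. -/
def H : SimpleGraph (Fin 14) where
  Adj x y := adjB x y = true
  symm := ⟨by decide +kernel⟩
  loopless := ⟨by decide +kernel⟩

instance : DecidableRel H.Adj := fun x y => inferInstanceAs (Decidable (adjB x y = true))

/-- The involutions of the automorphism group, coded in base 16. -/
def pool : List ℕ :=
  [57890976858124816,
   61865775500505376,
   53157351923388976,
   14278775911275541,
   61980121251232276,
   59586475481940646,
   48622157691302176,
   59025393836466886,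
   52596828621058576,
   57907388750242576,
   62112956050318096,
   48358275468833296,
   61568551450382896,
   61963426495245076,
   10056779606314261,
   16917463972500151,
   7945706783945431,
   12580132978179496,
   8077632073054936,
   59138368221756601,
   58874485932440521,
   42914886848762881,
   38676204847518721,
   33365418477569281,
   29159850674177281,
   42085848497942626,
   37319336740548706,
   24850801366884466,
   20645298237694066,
   24598419290589571,
   19832036129573251,
   28507118198524051,
   32745736277592211,
   42591591918044746,
   34147269887486026,
   42063826052613226,
   24647416126064266,
   29279153599649611,
   37723338728110411,
   24776653168350331,
   28437881177720731,
   18163088702150236,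
   18146523298490716,
   31670589838759276,
   36106989620385436,
   1242049430718301,
   1291592130132061,
   1769814761375101,
   2644055607105421]

/-- Apply a coded permutation. -/
def app (c x : ℕ) : ℕ := (c >>> (4 * x)) % 16

/-- Some coded involution maps the list into itself. -/
def good (l : List ℕ) : Bool := pool.any fun c => l.all fun x => l.any fun y => Nat.beq (app c x) y

/-- All extensions of the list by at most k elements below i are good. -/
def chk : ℕ → ℕ → List ℕ → Bool
  | 0, _, l => good l
  | i + 1, 0, l => chk i 0 l
  | i + 1, k + 1, l => chk i (k + 1) l && chk i k (i :: l)

theorem chk_spec (i : ℕ) : ∀ (k : ℕ) (l : List ℕ), chk i k l = true → ∀ S : Finset ℕ,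
    (∀ x ∈ S, x < i) → S.card ≤ k → ∃ l', good l' = true ∧ ∀ x, x ∈ l' ↔ x ∈ l ∨ x ∈ S := by
  induction i with
  | zero =>
    intro k l h S hS _
    refine ⟨l, by simpa [chk] using h, fun x => ?_⟩
    have : x ∉ S := fun hx => by simpa using hS x hx
    tauto
  | succ i ih =>
    intro k l h S hS hk
    cases k with
    | zero =>
      have : S = ∅ := by simpa using hk
      subst this
      exact ih 0 l (by simpa [chk] using h) ∅ (by simp) (by simp)
    | succ k =>
      simp only [chk, Bool.and_eq_true] at h
      by_cases hi : i ∈ S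
      · obtain ⟨l', h1, h2⟩ := ih k (i :: l) h.2 (S.erase i)
          (fun x hx => by
            have := hS x (Finset.mem_of_mem_erase hx)
            have := Finset.ne_of_mem_erase hx
            omega)
          (by rw [Finset.card_erase_of_mem hi]; omega)
        refine ⟨l', h1, fun x => ?_⟩
        rw [h2]
        simp only [List.mem_cons, Finset.mem_erase]
        by_cases hx : x = i
        · subst hx; tauto
        · tauto
      · exact ih (k + 1) l h.1 S (fun x hx => by
          have := hS x hx
          have : x ≠ i := fun h => hi (h ▸ hx)
          omega) hk

theorem chk_all : chk 14 4 [] = true := by decide +kernel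

theorem app_lt : ∀ c ∈ pool, ∀ x : Fin 14, app c x < 14 := by decide +kernel

theorem app_inv : ∀ c ∈ pool, ∀ x : Fin 14, app c (app c x) = x := by decide +kernel

theorem app_adj : ∀ c ∈ pool, ∀ x y : Fin 14,
    (mask.getD (app c x) 0).testBit (app c y) = adjB x y := by decide +kernel

theorem app_ne : ∀ c ∈ pool, ∃ x : Fin 14, app c x ≠ x := by decide +kernel

/-- The automorphism given by a code in the pool. -/
def toIso (c : ℕ) (hc : c ∈ pool) : H ≃g H where
  toFun x := ⟨app c x, app_lt c hc x⟩
  invFun x := ⟨app c x, app_lt c hc x⟩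
  left_inv x := Fin.ext (app_inv c hc x)
  right_inv x := Fin.ext (app_inv c hc x)
  map_rel_iff' := by
    intro x y
    change (mask.getD (app c x) 0).testBit (app c y) = true ↔ adjB x y = true
    rw [app_adj c hc]

theorem lower (S : Finset (Fin 14)) (hS : S.card ≤ 4) :
    ∃ φ : H ≃g H, (∀ x ∈ S, φ x ∈ S) ∧ ∃ v, φ v ≠ v := by
  obtain ⟨l, h1, h2⟩ := chk_spec 14 4 [] chk_all (S.map Fin.valEmbedding)
    (by intro x hx; simp at hx; obtain ⟨a, _, rfl⟩ := hx; exact a.2) (by simpa using hS)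
  simp only [good, List.any_eq_true, List.all_eq_true] at h1
  obtain ⟨c, hc, h⟩ := h1
  refine ⟨toIso c hc, ?_, ?_⟩
  · intro x hx
    obtain ⟨y, hy, hxy⟩ := h x.1 (by rw [h2]; right; exact Finset.mem_map_of_mem Fin.valEmbedding hx)
    have hxy := Nat.eq_of_beq_eq_true hxy
    rw [h2] at hy
    simp only [List.not_mem_nil, false_or, Finset.mem_map, Fin.valEmbedding_apply] at hy
    obtain ⟨a, ha, hay⟩ := hy
    have : toIso c hc x = a := Fin.ext (hxy.trans hay.symm)
    rwa [this]
  · obtain ⟨x, hx⟩ := app_ne c hc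
    exact ⟨x, fun h => hx (congrArg Fin.val h)⟩

/-- The special distinguishing set. -/
def S5 : Finset (Fin 14) := {0, 1, 2, 4, 8}

theorem common_fix (φ : H ≃g H) (a b x : Fin 14) (ha : φ a = a) (hb : φ b = b)
    (h : H.Adj a x ∧ H.Adj b x ∧ ∀ y, H.Adj a y → H.Adj b y → y = x) : φ x = x := by
  apply h.2.2
  · have := φ.map_rel_iff.2 h.1
    rwa [ha] at this
  · have := φ.map_rel_iff.2 h.2.1
    rwa [hb] at this

theorem third_fix (φ : H ≃g H) (a b c x : Fin 14) (ha : φ a = a) (hb : φ b = b) (hc : φ c = c)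
    (h : H.Adj a x ∧ x ≠ b ∧ x ≠ c ∧ ∀ y, H.Adj a y → y ≠ b → y ≠ c → y = x) : φ x = x := by
  apply h.2.2.2
  · have := φ.map_rel_iff.2 h.1
    rwa [ha] at this
  · intro h'
    exact h.2.1 (φ.injective (h'.trans hb.symm))
  · intro h'
    exact h.2.2.1 (φ.injective (h'.trans hc.symm))

theorem S5_comb : ∀ a ∈ S5, ∀ b ∈ S5, ∀ c ∈ S5, ∀ d ∈ S5, ∀ e ∈ S5,
    H.Adj a b → H.Adj a c → H.Adj b d → ¬ H.Adj a e → ¬ H.Adj b e → ¬ H.Adj c e → ¬ H.Adj d e →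
    c ≠ b → d ≠ a → a ≠ e → (∃ z, H.Adj a z ∧ H.Adj e z) →
    a = 0 ∧ b = 1 ∧ c = 2 ∧ d = 4 ∧ e = 8 := by decide +kernel

theorem upper (φ : H ≃g H) (hφ : ∀ x ∈ S5, φ x ∈ S5) : ∀ v, φ v = v := by
  have key := S5_comb (φ 0) (hφ 0 (by decide)) (φ 1) (hφ 1 (by decide)) (φ 2) (hφ 2 (by decide))
    (φ 4) (hφ 4 (by decide)) (φ 8) (hφ 8 (by decide))
  have adj : ∀ x y, H.Adj (φ x) (φ y) ↔ H.Adj x y := fun x y => φ.map_rel_iff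
  have inj : ∀ x y, φ x = φ y ↔ x = y := fun x y => φ.injective.eq_iff
  simp only [adj, ne_eq, inj] at key
  obtain ⟨h0, h1, h2, h4, h8⟩ := key (by decide) (by decide) (by decide) (by decide) (by decide)
    (by decide) (by decide) (by decide) (by decide) (by decide)
    ⟨φ 3, (adj 0 3).2 (by decide), (adj 8 3).2 (by decide)⟩
  have h3 := common_fix φ 0 8 3 h0 h8 (by decide)
  have h5 := third_fix φ 1 0 4 5 h1 h0 h4 (by decide)
  have h9 := third_fix φ 3 0 8 9 h3 h0 h8 (by decide)
  have h10 := common_fix φ 4 8 10 h4 h8 (by decide)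
  have h6 := common_fix φ 2 10 6 h2 h10 (by decide)
  have h7 := third_fix φ 2 0 6 7 h2 h0 h6 (by decide)
  have h11 := common_fix φ 4 7 11 h4 h7 (by decide)
  have h12 := common_fix φ 5 6 12 h5 h6 (by decide)
  have h13 := common_fix φ 5 7 13 h5 h7 (by decide)
  intro v
  fin_cases v <;> assumption

/-- Labels of the vertices of the projective description. -/
def lab : Fin 14 → Bool × {v : Fin 3 → ZMod 2 // v ≠ 0} :=
  ![(false, ⟨![0, 0, 1], by decide⟩), (true, ⟨![0, 1, 0], by decide⟩),
    (true, ⟨![1, 0, 0], by decide⟩), (true, ⟨![1, 1, 0], by decide⟩),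
    (false, ⟨![1, 0, 0], by decide⟩), (false, ⟨![1, 0, 1], by decide⟩),
    (false, ⟨![0, 1, 0], by decide⟩), (false, ⟨![0, 1, 1], by decide⟩),
    (false, ⟨![1, 1, 0], by decide⟩), (false, ⟨![1, 1, 1], by decide⟩),
    (true, ⟨![0, 0, 1], by decide⟩), (true, ⟨![0, 1, 1], by decide⟩),
    (true, ⟨![1, 0, 1], by decide⟩), (true, ⟨![1, 1, 1], by decide⟩)]

theorem lab_inj : ∀ x y, lab x = lab y → x = y := by decide +kernel

theorem lab_surj : ∀ z, ∃ x, lab x = z := by decide +kernel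

theorem lab_adj : ∀ x y, heawoodGraph.Adj (lab x) (lab y) ↔ H.Adj x y := by
  unfold heawoodGraph
  simp only [SimpleGraph.fromRel_adj]
  decide +kernel

/-- The labelled graph is the Heawood graph. -/
noncomputable def isoH : H ≃g heawoodGraph where
  toEquiv := Equiv.ofBijective lab ⟨fun x y => lab_inj x y, lab_surj⟩
  map_rel_iff' := by
    intro x y
    exact lab_adj x y

section graph

variable {V : Type*} {Γ : SimpleGraph V}

theorem noC4 (hgirth : Γ.egirth = 6) {x y p q : V} (hxy : x ≠ y) (h1 : Γ.Adj p x)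
    (h2 : Γ.Adj p y) (h3 : Γ.Adj q x) (h4 : Γ.Adj q y) : p = q := by
  by_contra hpq
  have hc : (Walk.cons h1 (Walk.cons h3.symm (Walk.cons h4 (Walk.cons h2.symm Walk.nil)))).IsCycle := by
    have := h1.ne
    have := h2.ne
    have := h3.ne
    have := h4.ne
    rw [Walk.cons_isCycle_iff]
    simp
    grind
  have := egirth_le_length hc
  rw [hgirth] at this
  simp at this
  exact absurd this (by decide)

theorem noC3 (hgirth : Γ.egirth = 6) {x y z : V} (h1 : Γ.Adj x y)
    (h2 : Γ.Adj y z) (h3 : Γ.Adj z x) : False := by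
  have hc : (Walk.cons h1 (Walk.cons h2 (Walk.cons h3 Walk.nil))).IsCycle := by
    have := h1.ne
    have := h2.ne
    have := h3.ne
    rw [Walk.cons_isCycle_iff]
    simp
    grind
  have := egirth_le_length hc
  rw [hgirth] at this
  simp at this
  exact absurd this (by decide)

theorem arcP (hgirth : Γ.egirth = 6) (ht : IsNArcTransitive Γ 4) {a b c d e : V}
    (hab : Γ.Adj a b) (hbc : Γ.Adj b c) (hcd : Γ.Adj c d) (hde : Γ.Adj d e)
    (hac : a ≠ c) (hbd : b ≠ d) (hce : c ≠ e) : ∃ f, Γ.Adj e f ∧ Γ.Adj a f := by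
  have hna : ¬ Γ.IsAcyclic := by
    rw [← egirth_eq_top, hgirth]
    decide
  obtain ⟨u, w, hw, hl⟩ := exists_egirth_eq_length.2 hna
  rw [hgirth] at hl
  have hl : w.length = 6 := by exact_mod_cast hl.symm
  have harc : IsNArc Γ 4 w.getVert := by
    refine ⟨fun i hi => w.adj_getVert_succ (by omega), fun i hi h => ?_⟩
    have := hw.getVert_injOn' (by simp; omega) (by simp; omega) h
    omega
  have harc2 : IsNArc Γ 4 (fun i => match i with
      | 0 => a | 1 => b | 2 => c | 3 => d | _ => e) := by
    refine ⟨fun i hi => ?_, fun i hi => ?_⟩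
    · interval_cases i <;> assumption
    · have : i ≤ 2 := by omega
      interval_cases i <;> assumption
  obtain ⟨φ, hφ⟩ := ht _ _ harc harc2
  have e0 : φ (w.getVert 0) = a := hφ 0 (by omega)
  have e4 : φ (w.getVert 4) = e := hφ 4 (by omega)
  refine ⟨φ (w.getVert 5), ?_, ?_⟩
  · rw [← e4]
    exact φ.map_rel_iff.2 (w.adj_getVert_succ (by omega))
  · rw [← e0]
    apply φ.map_rel_iff.2
    have := w.adj_getVert_succ (i := 5) (by omega)
    have h6 : w.getVert (5 + 1) = w.getVert 0 := by
      rw [show 5 + 1 = w.length by omega]; simp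
    rw [h6] at this
    exact this.symm

theorem nb0 (hcubic : ∀ v : V, (Γ.neighborSet v).ncard = 3) (v : V) :
    ∃ a b c, Γ.Adj v a ∧ Γ.Adj v b ∧ Γ.Adj v c ∧ a ≠ b ∧ a ≠ c ∧ b ≠ c ∧
      ∀ y, Γ.Adj v y → y = a ∨ y = b ∨ y = c := by
  obtain ⟨a, b, c, h1, h2, h3, h⟩ := Set.ncard_eq_three.1 (hcubic v)
  have h' : ∀ y, Γ.Adj v y ↔ y = a ∨ y = b ∨ y = c := by
    intro y
    rw [← mem_neighborSet, h]
    simp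
  exact ⟨a, b, c, (h' a).2 (by simp), (h' b).2 (by simp), (h' c).2 (by simp), h1, h2, h3,
    fun y => (h' y).1⟩

theorem nb1 (hcubic : ∀ v : V, (Γ.neighborSet v).ncard = 3) {v a : V} (ha : Γ.Adj v a) :
    ∃ b c, Γ.Adj v b ∧ Γ.Adj v c ∧ a ≠ b ∧ a ≠ c ∧ b ≠ c ∧
      ∀ y, Γ.Adj v y → y = a ∨ y = b ∨ y = c := by
  obtain ⟨x, y, z, h1, h2, h3, h4, h5, h6, h⟩ := nb0 hcubic v
  rcases h a ha with rfl | rfl | rfl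
  · exact ⟨y, z, by grind⟩
  · exact ⟨x, z, by grind⟩
  · exact ⟨x, y, by grind⟩

theorem nb2 (hcubic : ∀ v : V, (Γ.neighborSet v).ncard = 3) {v a b : V} (ha : Γ.Adj v a)
    (hb : Γ.Adj v b) (hab : a ≠ b) :
    ∃ c, Γ.Adj v c ∧ a ≠ c ∧ b ≠ c ∧ ∀ y, Γ.Adj v y → y = a ∨ y = b ∨ y = c := by
  obtain ⟨x, y, h1, h2, h3, h4, h5, h⟩ := nb1 hcubic ha
  rcases h b hb with rfl | rfl | rfl
  · exact absurd rfl hab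
  · exact ⟨y, by grind⟩
  · exact ⟨x, by grind⟩

theorem exists_hom (hcubic : ∀ v : V, (Γ.neighborSet v).ncard = 3)
    (hgirth : Γ.egirth = 6) (ht : IsNArcTransitive Γ 4) (v : V) :
    ∃ f : Fin 14 → V, Function.Injective f ∧ ∀ x y, H.Adj x y → Γ.Adj (f x) (f y) := by
  have K := @noC4 V Γ hgirth
  have T := @noC3 V Γ hgirth
  have P := @arcP V Γ hgirth ht
  obtain ⟨a0, a1, a2, va0, va1, va2, a01, a02, a12, hv⟩ := nb0 hcubic v
  obtain ⟨b00, b01, e00, e01, v00, v01, b0, ha0⟩ := nb1 hcubic va0.symm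
  obtain ⟨c0, c1, f00, f10, n0, n1, c01, hb00⟩ := nb1 hcubic e00.symm
  -- generic step: a vertex beyond a given one is joined to a neighbour of another neighbour of v
  have step : ∀ a a' b c, Γ.Adj v a → Γ.Adj v a' → a ≠ a' → Γ.Adj a b → v ≠ b → Γ.Adj b c →
      a ≠ c → ∃ y, Γ.Adj c y ∧ Γ.Adj a' y ∧ v ≠ y := by
    intro a a' b c h1 h2 h3 h4 h5 h6 h7
    obtain ⟨y, hy1, hy2⟩ := P h2.symm h1 h4 h6 h3.symm h5 h7
    refine ⟨y, hy1, hy2, ?_⟩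
    rintro rfl
    exact h5 (K h7 h1 hy1.symm h4.symm h6)
  obtain ⟨b10, f01, e10, v10⟩ := step a0 a1 b00 c0 va0 va1 a01 e00 v00 f00 n0
  obtain ⟨b20, f02, e20, v20⟩ := step a0 a2 b00 c0 va0 va2 a02 e00 v00 f00 n0
  obtain ⟨b11, e11, v11, b1, ha1⟩ := nb2 hcubic va1.symm e10 v10
  obtain ⟨b21, e21, v21, b2, ha2⟩ := nb2 hcubic va2.symm e20 v20
  -- distinctness of vertices
  have bb : ∀ a a' b b', Γ.Adj v a → Γ.Adj v a' → a ≠ a' → Γ.Adj a b → Γ.Adj a' b' → v ≠ b →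
      b ≠ b' := by
    rintro a a' b b' h1 h2 h3 h4 h5 h6 rfl
    exact h6 (K h3 h1 h2 h4.symm h5.symm)
  have cb : ∀ a a' b b', Γ.Adj v a → Γ.Adj v a' → a ≠ a' → Γ.Adj a b → v ≠ b → Γ.Adj a' b' →
      v ≠ b' → ∀ c, Γ.Adj b c → Γ.Adj b' c → c ≠ a := by
    rintro a a' b b' h1 h2 h3 h4 h5 h6 h7 c h8 h9 rfl
    exact bb c a' b' b' h1 h2 h3 h9.symm h6 h7 rfl
  -- c1
  obtain ⟨y, f11, hy, hvy⟩ := step a0 a1 b00 c1 va0 va1 a01 e00 v00 f10 n1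
  have : y = b11 := by
    rcases ha1 y hy with h | h | h
    · exact absurd h.symm hvy
    · subst h
      exact absurd (K (bb a0 a1 b00 y va0 va1 a01 e00 e10 v00) f00.symm f01 f10.symm f11) c01
    · exact h
  subst this
  obtain ⟨z, f12, hz, hvz⟩ := step a0 a2 b00 c1 va0 va2 a02 e00 v00 f10 n1
  have : z = b21 := by
    rcases ha2 z hz with h | h | h
    · exact absurd h.symm hvz
    · subst h
      exact absurd (K (bb a0 a2 b00 z va0 va2 a02 e00 e20 v00) f00.symm f02 f10.symm f12) c01
    · exact h
  subst this
  clear hvy hvz hy hz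
  -- c2
  obtain ⟨c2, g20, g21⟩ := P e10.symm va1.symm va0 e01 v10.symm a01.symm v01
  have c2a0 : c2 ≠ a0 := cb a0 a1 b01 b10 va0 va1 a01 e01 v01 e10 v10 c2 g20 g21
  have c2c0 : c2 ≠ c0 := by
    rintro rfl
    exact c2a0 (K b0 f00.symm g20.symm e00 e01)
  obtain ⟨y', g22, hy, hvy⟩ := step a0 a2 b01 c2 va0 va2 a02 e01 v01 g20 c2a0.symm
  have : y' = z := by
    rcases ha2 y' hy with h | h | h
    · exact absurd h.symm hvy
    · subst h
      exact absurd (K (bb a1 a2 b10 y' va1 va2 a12 e10 e20 v10) g21.symm g22 f01 f02) c2c0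
    · exact h
  subst this
  clear hvy hy
  -- c3
  obtain ⟨c3, g30, g31⟩ := P e11.symm va1.symm va0 e01 v11.symm a01.symm v01
  have c3a0 : c3 ≠ a0 := cb a0 a1 b01 y va0 va1 a01 e01 v01 e11 v11 c3 g30 g31
  have c3c1 : c3 ≠ c1 := by
    rintro rfl
    exact c3a0 (K b0 f10.symm g30.symm e00 e01)
  obtain ⟨z', g32, hy, hvy⟩ := step a0 a2 b01 c3 va0 va2 a02 e01 v01 g30 c3a0.symm
  have : z' = b20 := by
    rcases ha2 z' hy with h | h | h
    · exact absurd h.symm hvy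
    · exact h
    · subst h
      exact absurd (K (bb a1 a2 y z' va1 va2 a12 e11 e21 v11) g31.symm g32 f11 f12) c3c1
  subst this
  clear hvy hy step P
  let f : Fin 14 → V := ![v, a0, a1, a2, b00, b01, b10, y, z', y', c0, c1, c2, c3]
  have hom : ∀ x y, H.Adj x y → Γ.Adj (f x) (f y) := by
    have key : ∀ x y, x < y → H.Adj x y → Γ.Adj (f x) (f y) := by
      have E : ∀ x y : Fin 14, x < y → H.Adj x y → (x, y) ∈
          ([(0, 1), (0, 2), (0, 3), (1, 4), (1, 5), (2, 6), (2, 7), (3, 8), (3, 9), (4, 10), (6, 10),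
          (8, 10), (4, 11), (7, 11), (9, 11), (5, 12), (6, 12), (9, 12), (5, 13), (7, 13), (8, 13)] :
          List (Fin 14 × Fin 14)) := by decide +kernel
      intro x y h1 h2
      have h3 := E x y h1 h2
      simp only [List.mem_cons, Prod.mk.injEq, List.not_mem_nil, or_false] at h3
      rcases h3 with ⟨rfl, rfl⟩ | ⟨rfl, rfl⟩ | ⟨rfl, rfl⟩ | ⟨rfl, rfl⟩ | ⟨rfl, rfl⟩ | ⟨rfl, rfl⟩ | ⟨rfl, rfl⟩ | ⟨rfl, rfl⟩ | ⟨rfl, rfl⟩ | ⟨rfl, rfl⟩ | ⟨rfl, rfl⟩ | ⟨rfl, rfl⟩ | ⟨rfl, rfl⟩ | ⟨rfl, rfl⟩ | ⟨rfl, rfl⟩ | ⟨rfl, rfl⟩ | ⟨rfl, rfl⟩ | ⟨rfl, rfl⟩ | ⟨rfl, rfl⟩ | ⟨rfl, rfl⟩ | ⟨rfl, rfl⟩ <;>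
        first
        | assumption
        | (apply SimpleGraph.Adj.symm; assumption)
    intro x y h
    rcases lt_trichotomy x y with h' | h' | h'
    · exact key x y h' h
    · subst h'
      exact absurd h (H.irrefl)
    · exact (key y x h' h.symm).symm
  refine ⟨f, ?_, hom⟩
  have := bb a0 a1 b00 b10 va0 va1 a01 e00 e10 v00
  have := bb a0 a1 b00 y va0 va1 a01 e00 e11 v00
  have := bb a0 a1 b01 b10 va0 va1 a01 e01 e10 v01
  have := bb a0 a1 b01 y va0 va1 a01 e01 e11 v01
  have := bb a0 a2 b00 z' va0 va2 a02 e00 e20 v00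
  have := bb a0 a2 b00 y' va0 va2 a02 e00 e21 v00
  have := bb a0 a2 b01 z' va0 va2 a02 e01 e20 v01
  have := bb a0 a2 b01 y' va0 va2 a02 e01 e21 v01
  have := bb a1 a2 b10 z' va1 va2 a12 e10 e20 v10
  have := bb a1 a2 b10 y' va1 va2 a12 e10 e21 v10
  have := bb a1 a2 y z' va1 va2 a12 e11 e20 v11
  have := bb a1 a2 y y' va1 va2 a12 e11 e21 v11
  have c0n0 : c0 ≠ a0 := cb a0 a1 b00 b10 va0 va1 a01 e00 v00 e10 v10 c0
    (f00) (f01.symm)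
  have c0n1 : c0 ≠ a1 := cb a1 a2 b10 z' va1 va2 a12 e10 v10 e20 v20 c0
    (f01.symm) (f02.symm)
  have c0n2 : c0 ≠ a2 := cb a2 a0 z' b00 va2 va0 a02.symm e20 v20 e00 v00 c0
    (f02.symm) (f00)
  have c1n0 : c1 ≠ a0 := cb a0 a1 b00 y va0 va1 a01 e00 v00 e11 v11 c1
    (f10) (f11.symm)
  have c1n1 : c1 ≠ a1 := cb a1 a2 y y' va1 va2 a12 e11 v11 e21 v21 c1
    (f11.symm) (f12.symm)
  have c1n2 : c1 ≠ a2 := cb a2 a0 y' b00 va2 va0 a02.symm e21 v21 e00 v00 c1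
    (f12.symm) (f10)
  have c2n0 : c2 ≠ a0 := cb a0 a1 b01 b10 va0 va1 a01 e01 v01 e10 v10 c2
    (g20) (g21)
  have c2n1 : c2 ≠ a1 := cb a1 a2 b10 y' va1 va2 a12 e10 v10 e21 v21 c2
    (g21) (g22.symm)
  have c2n2 : c2 ≠ a2 := cb a2 a0 y' b01 va2 va0 a02.symm e21 v21 e01 v01 c2
    (g22.symm) (g20)
  have c3n0 : c3 ≠ a0 := cb a0 a1 b01 y va0 va1 a01 e01 v01 e11 v11 c3
    (g30) (g31)
  have c3n1 : c3 ≠ a1 := cb a1 a2 y z' va1 va2 a12 e11 v11 e20 v20 c3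
    (g31) (g32.symm)
  have c3n2 : c3 ≠ a2 := cb a2 a0 z' b01 va2 va0 a02.symm e20 v20 e01 v01 c3
    (g32.symm) (g30)
  have cc : ∀ a b b' c c', Γ.Adj a b → Γ.Adj a b' → b ≠ b' → Γ.Adj b c → Γ.Adj b' c' → c ≠ a →
      c ≠ c' := by
    rintro a b b' c c' h1 h2 h3 h4 h5 h6 rfl
    exact h6 (K h3 h4.symm h5.symm h1 h2)
  have := cc a1 b10 y c0 c1 e10 e11 b1 (f01.symm) (f11.symm) c0n1
  have := cc a0 b00 b01 c0 c2 e00 e01 b0 (f00) (g20) c0n0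
  have := cc a0 b00 b01 c0 c3 e00 e01 b0 (f00) (g30) c0n0
  have := cc a0 b00 b01 c1 c2 e00 e01 b0 (f10) (g20) c1n0
  have := cc a0 b00 b01 c1 c3 e00 e01 b0 (f10) (g30) c1n0
  have := cc a1 b10 y c2 c3 e10 e11 b1 (g21) (g31) c2n1
  have n1 : (List.map f [0, 4, 5, 6, 7, 8, 9]).Nodup := by
    change [v, b00, b01, b10, y, z', y'].Nodup
    clear bb cb cc K T
    grind
  have n2 : (List.map f [1, 2, 3, 10, 11, 12, 13]).Nodup := by
    change [a0, a1, a2, c0, c1, c2, c3].Nodup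
    clear bb cb cc K T
    grind
  have D : ∀ x y : Fin 14, H.Adj x y ∨ (∃ p, H.Adj x p ∧ ∃ q, H.Adj p q ∧ H.Adj q y) ∨
      (x ∈ [0, 4, 5, 6, 7, 8, 9] ∧ y ∈ [0, 4, 5, 6, 7, 8, 9]) ∨
      (x ∈ [1, 2, 3, 10, 11, 12, 13] ∧ y ∈ [1, 2, 3, 10, 11, 12, 13]) := by decide +kernel
  intro x y hxy
  rcases D x y with h | ⟨p, h1, q, h2, h3⟩ | ⟨h1, h2⟩ | ⟨h1, h2⟩
  · exact absurd hxy (hom x y h).ne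
  · have h3 := hom _ _ h3
    rw [← hxy] at h3
    exact (T (hom _ _ h1) (hom _ _ h2) h3).elim
  · exact List.inj_on_of_nodup_map n1 h1 h2 hxy
  · exact List.inj_on_of_nodup_map n2 h1 h2 hxy

theorem main_iso (hconn : Γ.Connected) (hcubic : ∀ v : V, (Γ.neighborSet v).ncard = 3)
    (hgirth : Γ.egirth = 6) (ht : IsNArcTransitive Γ 4) : Nonempty (H ≃g Γ) := by
  obtain ⟨v⟩ := hconn.nonempty
  obtain ⟨f, hf, hom⟩ := exists_hom hcubic hgirth ht v
  have hH : ∀ x, (Finset.univ.filter fun y => H.Adj x y).card = 3 := by decide +kernel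
  have nbr : ∀ x, Γ.neighborSet (f x) = f '' (H.neighborSet x) := by
    intro x
    symm
    apply Set.eq_of_subset_of_ncard_le
    · rintro _ ⟨y, hy, rfl⟩
      exact hom x y hy
    · rw [hcubic, Set.ncard_image_of_injective _ hf]
      rw [← hH x, ← Set.ncard_coe_finset]
      apply le_of_eq
      congr 1
      ext y
      simp
    · exact Set.finite_of_ncard_ne_zero (by rw [hcubic]; decide)
  have surj : Function.Surjective f := by
    have : ∀ u w : V, Γ.Walk u w → (∃ x, f x = u) → ∃ x, f x = w := by
      intro u w p
      induction p with
      | nil => exact id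
      | cons h p ih =>
        rintro ⟨x, rfl⟩
        apply ih
        have : _ ∈ Γ.neighborSet (f x) := h
        rw [nbr] at this
        obtain ⟨y, _, hy⟩ := this
        exact ⟨y, hy⟩
    intro w
    obtain ⟨p⟩ := hconn.preconnected (f 0) w
    exact this _ _ p ⟨0, rfl⟩
  refine ⟨⟨Equiv.ofBijective f ⟨hf, surj⟩, ?_⟩⟩
  intro x y
  change Γ.Adj (f x) (f y) ↔ H.Adj x y
  refine ⟨fun h => ?_, hom x y⟩
  have h : f y ∈ Γ.neighborSet (f x) := h
  rw [nbr] at h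
  obtain ⟨y', hy', h⟩ := h
  rw [← hf h]
  exact hy'

end graph

end HW

/-- A connected cubic 4-arc-regular graph of girth 6 is the Heawood graph, and its
distinguishing cost equals 5. -/
theorem fourArcRegular_girth_six
    {V : Type*} (Γ : SimpleGraph V)
    (hconn : Γ.Connected)
    (hcubic : ∀ v : V, (Γ.neighborSet v).ncard = 3)
    (hgirth : Γ.egirth = 6)
    (hreg : IsNArcRegular Γ 4) :
    Nonempty (Γ ≃g heawoodGraph) ∧
      (∃ S : Set V, S.encard = 5 ∧ IsDistinguishing Γ S) ∧
      ∀ S : Set V, IsDistinguishing Γ S → 5 ≤ S.encard := by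
  obtain ⟨g⟩ := HW.main_iso hconn hcubic hgirth hreg.1
  refine ⟨⟨g.symm.trans HW.isoH⟩, ⟨g '' (HW.S5 : Set (Fin 14)), ?_, ?_⟩, ?_⟩
  · rw [g.injective.encard_image, Set.encard_coe_eq_coe_finsetCard]
    rfl
  · intro φ hφ v
    have := HW.upper ((g.trans φ).trans g.symm) (by
      intro x hx
      have h1 : φ (g x) ∈ g '' (HW.S5 : Set (Fin 14)) := by
        rw [← hφ]
        exact Set.mem_image_of_mem _ (Set.mem_image_of_mem _ hx)
      obtain ⟨y, hy, h⟩ := h1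
      have : ((g.trans φ).trans g.symm) x = y := by
        change g.symm (φ (g x)) = y
        rw [← h]
        simp
      rw [this]
      exact hy) (g.symm v)
    change g.symm (φ (g (g.symm v))) = g.symm v at this
    simpa using this
  · intro S hS
    classical
    by_contra hlt
    have hpre : (g ⁻¹' S).encard = S.encard := by
      rw [← g.injective.encard_image, Set.image_preimage_eq _ g.surjective]
    obtain ⟨φ, h1, v, hv⟩ := HW.lower (g ⁻¹' S).toFinset (by
      by_contra h
      apply hlt
      rw [← hpre, Set.encard_eq_coe_toFinset_card]
      exact_mod_cast (by omega : 5 ≤ (g ⁻¹' S).toFinset.card))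
    have hfin : S.Finite := by
      rw [← Set.image_preimage_eq S g.surjective]
      exact (Set.toFinite _).image _
    have := hS ((g.symm.trans φ).trans g) (by
      apply Set.eq_of_subset_of_ncard_le _ _ hfin
      · rintro _ ⟨x, hx, rfl⟩
        have := h1 (g.symm x) (by simpa using hx)
        simpa using this
      · rw [Set.ncard_image_of_injective _ (RelIso.injective _)]) (g v)
    apply hv
    have h2 : g (φ (g.symm (g v))) = g v := this
    simpa using h2
end
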